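/- Let G be a finitely generated co-Hopfian virtually free group with Out(G) finite. Then G is ∃-homogeneous: for every n and any two n-tuples u⃗ and v⃗ of elements of G having the same existential type, there exists an automorphism of G mapping u⃗ to v⃗. -/

import Mathlib

open FirstOrder Language

/-- Function symbols of the first-order language of groups:
a binary multiplication, a unary inverse and a constant for the identity. -/
inductive GroupFunc : ℕ → Type
  | mul : GroupFunc 2
  | inv : GroupFunc 1
  | one : GroupFunc 0

/-- The first-order language of groups. -/
def groupLang : FirstOrder.Language :=
  { Functions := GroupFunc
    Relations := fun _ => Empty }

/-- Every group is a structure for the language of groups in the natural way. -/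
instance groupLangStructure (G : Type*) [Group G] : groupLang.Structure G where
  funMap {n} f v :=
    match f with
    | .mul => v 0 * v 1
    | .inv => (v 0)⁻¹
    | .one => 1
  RelMap {n} r _ := r.elim

/-- Existential formulas: iterated existential quantifications of a
quantifier-free formula. -/
inductive IsExistentialQF {α : Type*} : ∀ {n : ℕ}, groupLang.BoundedFormula α n → Prop
  | of_isQF {n : ℕ} {φ : groupLang.BoundedFormula α n} (h : φ.IsQF) : IsExistentialQF φ
  | ex {n : ℕ} {φ : groupLang.BoundedFormula α (n + 1)} (h : IsExistentialQF φ) :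
      IsExistentialQF φ.ex

/-- Universal formulas: iterated universal quantifications of a
quantifier-free formula. -/
inductive IsUniversalQF {α : Type*} : ∀ {n : ℕ}, groupLang.BoundedFormula α n → Prop
  | of_isQF {n : ℕ} {φ : groupLang.BoundedFormula α n} (h : φ.IsQF) : IsUniversalQF φ
  | all {n : ℕ} {φ : groupLang.BoundedFormula α (n + 1)} (h : IsUniversalQF φ) :
      IsUniversalQF φ.all

/-- ∀∃-formulas: iterated universal quantifications of an existential formula. -/
inductive IsAE {α : Type*} : ∀ {n : ℕ}, groupLang.BoundedFormula α n → Prop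
  | of_existential {n : ℕ} {φ : groupLang.BoundedFormula α n} (h : IsExistentialQF φ) : IsAE φ
  | all {n : ℕ} {φ : groupLang.BoundedFormula α (n + 1)} (h : IsAE φ) : IsAE φ.all

/-- A group is virtually free if it has a free subgroup of finite index. -/
def VirtuallyFree (G : Type*) [Group G] : Prop :=
  ∃ H : Subgroup G, H.FiniteIndex ∧ Nonempty (IsFreeGroup H)

/-- A group is co-Hopfian if every injective endomorphism is surjective. -/
def CoHopfian (G : Type*) [Group G] : Prop :=
  ∀ φ : G →* G, Function.Injective φ → Function.Surjective φ

/-- Two homomorphisms `φ, φ' : G → G'` are equivalent if they coincide up to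
conjugation on every finite subgroup of `G`. -/
def HomEquiv {G G' : Type*} [Group G] [Group G'] (φ φ' : G →* G') : Prop :=
  ∀ H : Subgroup G, (H : Set G).Finite →
    ∃ g' : G', ∀ h ∈ H, φ' h = g' * φ h * g'⁻¹

/-- Two groups are ∀∃-equivalent if they satisfy the same ∀∃-sentences. -/
def AEEquivalent (G : Type*) (G' : Type*) [Group G] [Group G'] : Prop :=
  ∀ φ : groupLang.Sentence, IsAE φ → (G ⊨ φ ↔ G' ⊨ φ)

/-- Two groups are ∃-equivalent if they satisfy the same existential sentences. -/
def ExistentiallyEquivalent (G : Type*) (G' : Type*) [Group G] [Group G'] : Prop :=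
  ∀ φ : groupLang.Sentence, IsExistentialQF φ → (G ⊨ φ ↔ G' ⊨ φ)

/-- An endomorphism is rigid-testing: `G` is rigid if every endomorphism
equivalent to the identity is an automorphism. -/
def Rigid (G : Type*) [Group G] : Prop :=
  ∀ φ : G →* G, HomEquiv φ (MonoidHom.id G) → Function.Bijective φ

/-- `Out G` is finite, expressed as: the inner automorphisms form a finite index
subgroup of `Aut G`. -/
def OutFinite (G : Type*) [Group G] : Prop :=
  (MulAut.conj : G →* MulAut G).range.FiniteIndex

/-- Iterated composition of an endomorphism. -/
def homPow {G : Type*} [Group G] (φ : G →* G) : ℕ → (G →* G)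
  | 0 => MonoidHom.id G
  | n + 1 => φ.comp (homPow φ n)

/-- An endomorphism `φ` of `G` is class-permuting if some positive power of `φ`
is equivalent to the identity of `G`. -/
def ClassPermuting {G : Type*} [Group G] (φ : G →* G) : Prop :=
  ∃ n : ℕ, 1 ≤ n ∧ HomEquiv (homPow φ n) (MonoidHom.id G)

/-- A maximal finite subgroup: a finite subgroup maximal with respect to
inclusion among finite subgroups. -/
def MaximalFiniteSubgroup {G : Type*} [Group G] (A : Subgroup G) : Prop :=
  (A : Set G).Finite ∧ ∀ B : Subgroup G, (B : Set G).Finite → A ≤ B → A = B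

/-- Two subgroups are conjugate. -/
def SubgroupConj {G : Type*} [Group G] (A B : Subgroup G) : Prop :=
  ∃ g : G, B = A.map (MulAut.conj g).toMonoidHom

/-- A group is strongly co-Hopfian if there is a finite subset `F` of
`G \ {1}` such that every endomorphism whose kernel misses `F` is an
automorphism. -/
def StronglyCoHopfian (G : Type*) [Group G] : Prop :=
  ∃ F : Finset G, (1 : G) ∉ F ∧
    ∀ φ : G →* G, (∀ f ∈ F, φ f ≠ 1) → Function.Bijective φ

/-- A group is finitely presented. -/
def GroupFinitelyPresented (G : Type*) [Group G] : Prop :=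
  ∃ (n : ℕ) (rels : Finset (FreeGroup (Fin n))),
    Nonempty (PresentedGroup (rels : Set (FreeGroup (Fin n))) ≃* G)

/-!
Minimal cuts separate the two ends of every element of infinite order of `G`, because cones do so in
the free subgroup of finite index. Among the minimal cuts, those crossing the fewest others are
pairwise nested, hence they are the half-trees of a tree on which `G` acts cocompactly with finite
edge stabilizers; after discarding superfluous orbits of edges, every edge lies on the axis of some
element.

The twist of an edge by an element `z` of the centralizer of its stabilizer is an endomorphism of
`G`. If `z` had infinite order, either a twist would be injective without being surjective, or a
power of the twist by `z` would be inner. In the latter case a power of `z` centralizes the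
stabilizer of an edge which it translates, or of an end vertex of the edge, and co-Hopficity again
excludes both. So the centralizers of the edge stabilizers are finite.

If every finite set of nontrivial elements survived some non-injective endomorphism, an idempotent
ultrafilter for the composition of endomorphisms would make this hold generically. A generic
endomorphism is, up to conjugation, the identity on a vertex stabilizer, and the finiteness of the
centralizers propagates this along the edges: it is the identity on `G`, which is absurd. Hence
there is a finite set `F` such that every endomorphism killing no element of `F` is an automorphism.

Since `G` is finitely presented, an existential formula expresses that some endomorphism maps `u` to
a given tuple and kills no element of `F`. The identity shows that it holds at `u`, so it holds at
`v`, and the endomorphism obtained there is an automorphism.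
-/

/-! ### Trees as pocsets of oriented edges -/

/-- A discrete nested pocset: the poset of oriented edges of a tree, where `-a` is the edge `a`
with its orientation reversed and `a ≤ b` means that the half-tree `a` is contained in the
half-tree `b`. -/
class TreePocset (E : Type*) [PartialOrder E] [InvolutiveNeg E] : Prop where
  neg_anti : ∀ {a b : E}, a ≤ b → -b ≤ -a
  nested : ∀ a b : E, a ≤ b ∨ b ≤ a ∨ a ≤ -b ∨ -a ≤ b
  not_le_neg : ∀ a : E, ¬a ≤ -a
  finite_Icc : ∀ a b : E, (Set.Icc a b).Finite

/-- An action without inversions of a group on the tree of a pocset. -/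
class TreeAction (G E : Type*) [Group G] [PartialOrder E] [InvolutiveNeg E] [MulAction G E] :
    Prop where
  smul_mono : ∀ (g : G) {a b : E}, a ≤ b → g • a ≤ g • b
  smul_neg : ∀ (g : G) (a : E), g • -a = -(g • a)
  smul_ne_neg : ∀ (g : G) (a : E), g • a ≠ -a

namespace TreePocset

open Pointwise

section Order

variable {E : Type*} [PartialOrder E] [InvolutiveNeg E] {a b : E} {x y : Set E}

/-- An orientation of a pocset: an up-closed choice of one of `b`, `-b` for every edge `b`. -/
structure IsOrientation (x : Set E) : Prop where
  isUpperSet : IsUpperSet x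
  neg_mem_iff : ∀ b, -b ∈ x ↔ b ∉ x

lemma IsOrientation.neg_notMem_iff (hx : IsOrientation x) : -b ∉ x ↔ b ∈ x := by
  rw [hx.neg_mem_iff, not_not]

lemma IsOrientation.eq_of_subset (hx : IsOrientation x) (hy : IsOrientation y) (h : x ⊆ y) :
    x = y := by
  refine h.antisymm fun b hb => ?_
  by_contra hbx
  exact (hy.neg_mem_iff b).1 (h ((hx.neg_mem_iff b).2 hbx)) hb

/-- The end vertex of the edge `a` lying in the half-tree `a`, encoded as the orientation
of all edges towards it. -/
def endpoint (a : E) : Set E := {b | a ≤ b ∨ -b < a}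

/-- A vertex of the tree, encoded as the orientation of all edges towards it. -/
def IsVertex (x : Set E) : Prop := ∃ a, x = endpoint a

lemma mem_endpoint : b ∈ endpoint a ↔ a ≤ b ∨ -b < a := Iff.rfl

lemma mem_endpoint_self (a : E) : a ∈ endpoint a := Or.inl le_rfl

lemma isVertex_endpoint (a : E) : IsVertex (endpoint a) := ⟨a, rfl⟩

variable [TreePocset E]

lemma not_neg_le (a : E) : ¬-a ≤ a := fun h => not_le_neg (-a) (by rwa [neg_neg])

lemma neg_le_of_neg_le (h : -a ≤ b) : -b ≤ a := by
  simpa only [neg_neg] using neg_anti h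

lemma le_neg_of_le_neg (h : a ≤ -b) : b ≤ -a := by
  simpa only [neg_neg] using neg_anti h

lemma neg_le_neg_iff : -a ≤ -b ↔ b ≤ a :=
  ⟨fun h => by simpa only [neg_neg] using neg_anti h, neg_anti⟩

lemma neg_lt_neg_iff : -a < -b ↔ b < a := by
  simp only [lt_iff_le_not_ge, neg_le_neg_iff]

lemma neg_lt_comm : -a < b ↔ -b < a := by
  rw [← neg_lt_neg_iff, neg_neg]

lemma lt_neg_comm : a < -b ↔ b < -a := by
  rw [← neg_lt_neg_iff, neg_neg]

lemma not_le_neg_of_le (h : a ≤ b) : ¬a ≤ -b := fun h' =>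
  not_le_neg a (h.trans (le_neg_of_le_neg h'))

lemma not_neg_le_of_le (h : a ≤ b) : ¬-a ≤ b := fun h' =>
  not_neg_le b ((neg_le_of_neg_le h').trans h)

lemma isOrientation_endpoint (a : E) : IsOrientation (endpoint a) where
  isUpperSet _ _ hbd hb := hb.imp (·.trans hbd) (neg_anti hbd).trans_lt
  neg_mem_iff b := by
    simp only [mem_endpoint, neg_neg, not_or]
    constructor
    · rintro (h | h)
      · exact ⟨fun h' => not_le_neg_of_le h' h, fun h' => h.not_gt h'⟩
      · exact ⟨fun h' => h'.not_gt h, fun h' => not_neg_le_of_le h.le h'.le⟩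
    · rintro ⟨hab, hba⟩
      rcases nested a b with h | h | h | h
      · exact absurd h hab
      · exact Or.inr (lt_of_le_of_ne h fun e => hab e.ge)
      · exact Or.inl h
      · exact Or.inl ((neg_le_of_neg_le h).eq_of_not_lt hba).ge

lemma notMem_endpoint_neg (a : E) : a ∉ endpoint (-a) :=
  ((isOrientation_endpoint _).neg_mem_iff a).1 (mem_endpoint_self (-a))

lemma IsVertex.isOrientation (hx : IsVertex x) : IsOrientation x := by
  obtain ⟨a, rfl⟩ := hx
  exact isOrientation_endpoint a

lemma eq_of_mem_endpoint_of_notMem_endpoint_neg (h : a ∈ endpoint b) (h' : a ∉ endpoint (-b)) :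
    a = b := by
  rw [← (isOrientation_endpoint _).neg_mem_iff, mem_endpoint, neg_neg, neg_le_neg_iff] at h'
  rcases h' with h' | h' <;> rcases h with h | h
  · exact le_antisymm h' h
  · exact (not_neg_le_of_le h' h.le).elim
  · exact (not_le_neg_of_le h (lt_neg_comm.1 h').le).elim
  · exact absurd (h.trans (lt_neg_comm.1 h')) (lt_irrefl _)

lemma IsVertex.finite_sdiff (hx : IsVertex x) (hy : IsVertex y) : (y \ x).Finite := by
  obtain ⟨b, rfl⟩ := hx
  obtain ⟨a, rfl⟩ := hy
  refine ((((finite_Icc a (-b)).union (finite_Icc a b)).union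
    ((finite_Icc b a).image Neg.neg)).union (finite_Icc (-a) b)).subset ?_
  rintro d ⟨hda, hdb⟩
  rw [← (isOrientation_endpoint _).neg_mem_iff, mem_endpoint, neg_neg] at hdb
  rcases hda with hda | hda <;> rcases hdb with hdb | hdb
  · exact Or.inl (Or.inl (Or.inl ⟨hda, le_neg_of_le_neg hdb⟩))
  · exact Or.inl (Or.inl (Or.inr ⟨hda, hdb.le⟩))
  · exact Or.inl (Or.inr ⟨-d, ⟨hdb, hda.le⟩, neg_neg d⟩)
  · exact Or.inr ⟨neg_le_of_neg_le hda.le, hdb.le⟩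

lemma IsOrientation.exists_first_edge (hx : IsOrientation x) (hy : IsOrientation y)
    (hfin : (y \ x).Finite) (hne : x ≠ y) :
    ∃ d ∈ y \ x, endpoint (-d) = x ∧ y \ endpoint d ⊂ y \ x := by
  have hnonempty : (y \ x).Nonempty := by
    rw [Set.nonempty_iff_ne_empty, ne_eq, Set.sdiff_eq_empty]
    exact fun h => hne (hy.eq_of_subset hx h).symm
  obtain ⟨d, hd⟩ := hfin.exists_maximal hnonempty
  have hdy : d ∈ y := hd.1.1
  have hdx : -d ∈ x := (hx.neg_mem_iff d).2 hd.1.2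
  have hstart : endpoint (-d) = x := by
    refine (isOrientation_endpoint _).eq_of_subset hx fun b hb => ?_
    rw [mem_endpoint, neg_lt_neg_iff] at hb
    rcases hb with hb | hb
    · exact hx.isUpperSet hb hdx
    · by_contra hbx
      exact (hd.2 ⟨hy.isUpperSet hb.le hdy, hbx⟩ hb.le).not_gt hb
  refine ⟨d, hd.1, hstart, (Set.ssubset_iff_of_subset ?_).2
    ⟨d, hd.1, fun h => h.2 (mem_endpoint_self d)⟩⟩
  rintro b ⟨hby, hbd⟩
  refine ⟨hby, fun hbx => ?_⟩
  obtain rfl := eq_of_mem_endpoint_of_notMem_endpoint_neg (hstart ▸ hbx) (by rwa [neg_neg])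
  exact (hy.neg_mem_iff d).1 hby hdy

lemma IsOrientation.path_induction (hx : IsOrientation x) (hy : IsOrientation y)
    (hfin : (y \ x).Finite) (p : Set E → Prop) (base : p x)
    (step : ∀ d ∈ y, d ∉ x → p (endpoint (-d)) → p (endpoint d)) : p y := by
  suffices H : ∀ n, ∀ z, IsOrientation z → (y \ z).Finite → y \ z ⊆ y \ x →
      (y \ z).ncard ≤ n → p z → p y from H _ x hx hfin le_rfl le_rfl base
  intro n
  induction n with
  | zero =>
    intro z hz hzfin _ hn hp
    rw [Nat.le_zero, Set.ncard_eq_zero hzfin, Set.sdiff_eq_empty] at hn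
    rwa [hy.eq_of_subset hz hn]
  | succ n ih =>
    intro z hz hzfin hzx hn hp
    obtain rfl | hzy := eq_or_ne z y
    · exact hp
    obtain ⟨d, hd, rfl, hlt⟩ := hz.exists_first_edge hy hzfin hzy
    have hcard := Set.ncard_lt_ncard hlt hzfin
    exact ih (endpoint d) (isOrientation_endpoint d) (hzfin.subset hlt.le) (hlt.le.trans hzx)
      (by lia) (step d hd.1 (hzx hd).2 hp)

lemma IsVertex.of_finite_sdiff (hx : IsVertex x) (hy : IsOrientation y) (hfin : (y \ x).Finite) :
    IsVertex y :=
  hx.isOrientation.path_induction hy hfin IsVertex hx fun d _ _ _ => isVertex_endpoint d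

lemma neg_lt_of_endpoint_eq (h : endpoint a = endpoint b) (hne : a ≠ b) : -a < b := by
  have ha : a ∈ endpoint b := h ▸ mem_endpoint_self a
  have hb : b ∈ endpoint a := h ▸ mem_endpoint_self b
  rcases ha with ha | ha
  · exact hb.elim (fun hb => absurd (le_antisymm hb ha) hne) neg_lt_comm.1
  · exact ha

lemma endpoint_neg_eq_of_covBy (h : b ⋖ a) : endpoint (-b) = endpoint a := by
  refine (isOrientation_endpoint _).eq_of_subset (isOrientation_endpoint _) fun d hd => ?_
  rw [mem_endpoint, neg_lt_neg_iff] at hd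
  rcases hd with hd | hd
  · exact Or.inr ((neg_le_of_neg_le hd).trans_lt h.lt)
  rcases nested a d with had | had | had | had
  · exact Or.inl had
  · exact Or.inl (had.eq_of_not_lt (h.2 hd)).ge
  · exact (not_le_neg_of_le h.le (hd.le.trans (le_neg_of_le_neg had))).elim
  · refine Or.inr ((neg_le_of_neg_le had).lt_of_ne ?_)
    rintro rfl
    exact not_le_neg_of_le hd.le h.le

end Order

section Action

variable {G E : Type*} [Group G] [PartialOrder E] [InvolutiveNeg E] [MulAction G E]
  [TreeAction G E] {x : Set E} {a b : E} {g : G}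

lemma smul_neg (g : G) (a : E) : g • -a = -(g • a) := TreeAction.smul_neg g a

lemma smul_le_smul_iff : g • a ≤ g • b ↔ a ≤ b :=
  ⟨fun h => by simpa only [inv_smul_smul] using TreeAction.smul_mono g⁻¹ h,
    TreeAction.smul_mono g⟩

lemma smul_lt_smul_iff : g • a < g • b ↔ a < b := by
  simp only [lt_iff_le_not_ge, smul_le_smul_iff]

lemma smul_endpoint (g : G) (a : E) : g • endpoint a = endpoint (g • a) := by
  ext b
  rw [Set.mem_smul_set_iff_inv_smul_mem, mem_endpoint, mem_endpoint, ← smul_neg,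
    ← smul_le_smul_iff (g := g), ← smul_lt_smul_iff (g := g), smul_inv_smul, smul_inv_smul]

lemma IsVertex.smul (hx : IsVertex x) (g : G) : IsVertex (g • x) := by
  obtain ⟨a, rfl⟩ := hx
  exact ⟨g • a, smul_endpoint g a⟩

lemma IsOrientation.smul (hx : IsOrientation x) (g : G) : IsOrientation (g • x) where
  isUpperSet _ _ hab ha := by
    rw [Set.mem_smul_set_iff_inv_smul_mem] at ha ⊢
    exact hx.isUpperSet (TreeAction.smul_mono _ hab) ha
  neg_mem_iff b := by
    rw [Set.mem_smul_set_iff_inv_smul_mem, Set.mem_smul_set_iff_inv_smul_mem, smul_neg,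
      hx.neg_mem_iff]

end Action

/-! ### Twists -/

section PathProduct

variable {E H : Type*} [PartialOrder E] [InvolutiveNeg E] [Group H] {v x y : Set E} {τ : E → H}

/-- `IsPathProd τ v x p` says that `p` is the product of the values of `τ` along an edge path from
the vertex `v` to the vertex `x` all of whose edges point away from `v`. -/
inductive IsPathProd (τ : E → H) (v : Set E) : Set E → H → Prop
  | refl : IsPathProd τ v v 1
  | step (a : E) (p : H) (ha : a ∉ v) (_ : IsPathProd τ v (endpoint (-a)) p) :
      IsPathProd τ v (endpoint a) (p * τ a)

open Classical in
/-- The product of the values of `τ` along the edge path from the vertex `v` to the vertex `x`,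
with junk value `1` when there is no such path. -/
noncomputable def pathProd (τ : E → H) (v x : Set E) : H :=
  if h : ∃ p, IsPathProd τ v x p then h.choose else 1

variable [TreePocset E]

lemma exists_isPathProd (τ : E → H) (hv : IsVertex v) (hx : IsVertex x) :
    ∃ p, IsPathProd τ v x p := by
  refine hv.isOrientation.path_induction hx.isOrientation (hv.finite_sdiff hx)
    (fun x => ∃ p, IsPathProd τ v x p) ⟨1, .refl⟩ ?_
  rintro d _ hd ⟨p, hp⟩
  exact ⟨_, .step d p hd hp⟩

lemma IsPathProd.unique (hv : IsVertex v) {p q : H} (hp : IsPathProd τ v x p)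
    (hq : IsPathProd τ v x q) : p = q := by
  induction hp generalizing q with
  | refl =>
    generalize hy : v = y at hq
    cases hq with
    | refl => rfl
    | step a p ha => exact absurd (mem_endpoint_self a) ha
  | step a p ha _ ih =>
    generalize hy : endpoint a = y at hq
    cases hq with
    | refl => exact absurd (hy ▸ mem_endpoint_self a) ha
    | step b p' hb hp' =>
      obtain rfl | hab := eq_or_ne a b
      · rw [ih hp']
      · exact absurd (hv.isOrientation.isUpperSet (neg_lt_of_endpoint_eq hy hab).le
          ((hv.isOrientation.neg_mem_iff a).2 ha)) hb

lemma IsPathProd.pathProd_eq (hv : IsVertex v) {p : H} (hp : IsPathProd τ v x p) :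
    pathProd τ v x = p := by
  have h : ∃ p, IsPathProd τ v x p := ⟨p, hp⟩
  rw [pathProd, dif_pos h]
  exact h.choose_spec.unique hv hp

lemma pathProd_self (τ : E → H) (hv : IsVertex v) : pathProd τ v v = 1 :=
  IsPathProd.refl.pathProd_eq hv

lemma pathProd_endpoint (hτ : ∀ b, τ (-b) = (τ b)⁻¹) (hv : IsVertex v) (a : E) :
    pathProd τ v (endpoint a) = pathProd τ v (endpoint (-a)) * τ a := by
  have away : ∀ a ∉ v, pathProd τ v (endpoint a) = pathProd τ v (endpoint (-a)) * τ a := by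
    intro a ha
    obtain ⟨p, hp⟩ := exists_isPathProd τ hv (isVertex_endpoint (-a))
    rw [hp.pathProd_eq hv, (hp.step a p ha).pathProd_eq hv]
  by_cases ha : a ∈ v
  · have h := away (-a) (hv.isOrientation.neg_notMem_iff.2 ha)
    rw [neg_neg, hτ] at h
    rw [h, inv_mul_cancel_right]
  · exact away a ha

lemma pathProd_congr (hτ : ∀ b, τ (-b) = (τ b)⁻¹) (hv : IsVertex v) (hx : IsVertex x)
    (hy : IsVertex y) (h : ∀ d ∈ y, d ∉ x → τ d = 1) : pathProd τ v x = pathProd τ v y := by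
  refine hx.isOrientation.path_induction hy.isOrientation (hx.finite_sdiff hy)
    (fun z => pathProd τ v x = pathProd τ v z) rfl fun d hdy hdx ih => ?_
  rw [pathProd_endpoint hτ hv d, h d hdy hdx, mul_one, ih]

end PathProduct

variable {G E : Type*} [Group G] [MulAction G E] {τ : E → G} {v x y u : Set E} {a d : E} {z g : G}

lemma conj_eq_conj_of_smul_eq {h : G}
    (hz : z ∈ Subgroup.centralizer (MulAction.stabilizer G a : Set G)) (hgh : g • a = h • a) :
    g * z * g⁻¹ = h * z * h⁻¹ := by
  have hstab : (h⁻¹ * g) • a = a := by rw [mul_smul, hgh, inv_smul_smul]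
  have hcomm := Subgroup.mem_centralizer_iff.1 hz _ hstab
  calc g * z * g⁻¹ = h * (h⁻¹ * g * z) * g⁻¹ := by group
    _ = h * (z * (h⁻¹ * g)) * g⁻¹ := by rw [hcomm]
    _ = h * z * h⁻¹ := by group

variable [InvolutiveNeg E]

/-- A `G`-equivariant `1`-cocycle on the oriented edges of the tree, with values in `G` itself
acted on by conjugation. -/
structure IsCocycle (τ : E → G) : Prop where
  map_neg : ∀ b, τ (-b) = (τ b)⁻¹
  map_smul : ∀ (g : G) (b : E), τ (g • b) = g * τ b * g⁻¹

variable (G) in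
/-- The unoriented orbit of an edge: all translates of the edge and of its reverse. -/
def edgeOrbit (a : E) : Set E :=
  {d | (∃ g : G, g • a = d) ∨ ∃ g : G, g • -a = d}

open Classical in
/-- The cocycle of the twist by `z` along the orbit of the edge `a`. It is independent of the
choices made when `z` centralizes the stabilizer of `a`. -/
noncomputable def twistCocycle (a : E) (z : G) (d : E) : G :=
  if h : ∃ g : G, g • a = d then h.choose * z * h.choose⁻¹
  else if h : ∃ g : G, g • -a = d then h.choose * z⁻¹ * h.choose⁻¹ else 1

lemma twistCocycle_of_notMem (h : d ∉ edgeOrbit G a) (z : G) : twistCocycle a z d = 1 := by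
  rw [twistCocycle, dif_neg (fun h' => h (Or.inl h')), dif_neg (fun h' => h (Or.inr h'))]

lemma mem_edgeOrbit_self (a : E) : a ∈ edgeOrbit G a := Or.inl ⟨1, one_smul G a⟩

lemma twistCocycle_smul (hz : z ∈ Subgroup.centralizer (MulAction.stabilizer G a : Set G))
    (g : G) : twistCocycle a z (g • a) = g * z * g⁻¹ := by
  have h : ∃ k : G, k • a = g • a := ⟨g, rfl⟩
  rw [twistCocycle, dif_pos h]
  exact conj_eq_conj_of_smul_eq hz h.choose_spec

lemma twistCocycle_self (hz : z ∈ Subgroup.centralizer (MulAction.stabilizer G a : Set G)) :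
    twistCocycle a z a = z := by
  simpa using twistCocycle_smul hz 1

lemma smul_mem_edgeOrbit (g : G) (h : d ∈ edgeOrbit G a) : g • d ∈ edgeOrbit G a := by
  rcases h with ⟨k, rfl⟩ | ⟨k, rfl⟩
  · exact Or.inl ⟨g * k, mul_smul g k a⟩
  · exact Or.inr ⟨g * k, mul_smul g k (-a)⟩

variable [PartialOrder E]

/-- The map of trees moving each vertex `x` by the path product from `v` to `x`; it is
equivariant with respect to `IsCocycle.endo`. -/
noncomputable def develop (τ : E → G) (v x : Set E) : Set E := pathProd τ v x • x

variable [TreeAction G E]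

lemma stabilizer_neg (a : E) : MulAction.stabilizer G (-a) = MulAction.stabilizer G a := by
  ext g
  rw [MulAction.mem_stabilizer_iff, MulAction.mem_stabilizer_iff, smul_neg, neg_inj]

lemma neg_mem_edgeOrbit (h : d ∈ edgeOrbit G a) : -d ∈ edgeOrbit G a := by
  rcases h with ⟨g, rfl⟩ | ⟨g, rfl⟩
  · exact Or.inr ⟨g, smul_neg g a⟩
  · exact Or.inl ⟨g, by rw [smul_neg, neg_neg]⟩

lemma twistCocycle_smul_neg (hz : z ∈ Subgroup.centralizer (MulAction.stabilizer G a : Set G))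
    (g : G) : twistCocycle a z (g • -a) = g * z⁻¹ * g⁻¹ := by
  have h : ∃ k : G, k • -a = g • -a := ⟨g, rfl⟩
  have hn : ¬∃ k : G, k • a = g • -a := by
    rintro ⟨k, hk⟩
    exact TreeAction.smul_ne_neg (g⁻¹ * k) a (by rw [mul_smul, hk, inv_smul_smul])
  rw [twistCocycle, dif_neg hn, dif_pos h]
  refine conj_eq_conj_of_smul_eq ?_ h.choose_spec
  rw [stabilizer_neg]
  exact inv_mem hz

lemma isCocycle_twistCocycle
    (hz : z ∈ Subgroup.centralizer (MulAction.stabilizer G a : Set G)) :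
    IsCocycle (twistCocycle a z) where
  map_neg b := by
    by_cases hb : b ∈ edgeOrbit G a
    · rcases hb with ⟨g, rfl⟩ | ⟨g, rfl⟩
      · rw [← smul_neg, twistCocycle_smul hz, twistCocycle_smul_neg hz]
        group
      · rw [← smul_neg, neg_neg, twistCocycle_smul hz, twistCocycle_smul_neg hz]
        group
    · have hb' : -b ∉ edgeOrbit G a := fun h => hb (neg_neg b ▸ neg_mem_edgeOrbit h)
      rw [twistCocycle_of_notMem hb, twistCocycle_of_notMem hb', inv_one]
  map_smul k b := by
    by_cases hb : b ∈ edgeOrbit G a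
    · rcases hb with ⟨g, rfl⟩ | ⟨g, rfl⟩
      · rw [smul_smul, twistCocycle_smul hz, twistCocycle_smul hz]
        group
      · rw [smul_smul, twistCocycle_smul_neg hz, twistCocycle_smul_neg hz]
        group
    · have hb' : k • b ∉ edgeOrbit G a := fun h =>
        hb (inv_smul_smul k b ▸ smul_mem_edgeOrbit k⁻¹ h)
      rw [twistCocycle_of_notMem hb, twistCocycle_of_notMem hb', mul_one, mul_inv_cancel]

variable [TreePocset E]

lemma twistCocycle_smul_le (hz : z ∈ Subgroup.centralizer (MulAction.stabilizer G a : Set G))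
    (hlt : z • a < a) (d : E) : twistCocycle a z d • d ≤ d := by
  by_cases hd : d ∈ edgeOrbit G a
  · rcases hd with ⟨g, rfl⟩ | ⟨g, rfl⟩
    · rw [twistCocycle_smul hz, smul_smul, inv_mul_cancel_right, mul_smul, smul_le_smul_iff]
      exact hlt.le
    · rw [twistCocycle_smul_neg hz, smul_smul, inv_mul_cancel_right, mul_smul, smul_le_smul_iff,
        smul_neg, neg_le_neg_iff, ← smul_le_smul_iff (g := z), smul_inv_smul]
      exact hlt.le
  · rw [twistCocycle_of_notMem hd, one_smul]

namespace IsCocycle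

lemma pathProd_smul (hτ : IsCocycle τ) (hv : IsVertex v) (g : G) (hx : IsVertex x) :
    pathProd τ v (g • x) = pathProd τ v (g • v) * (g * pathProd τ v x * g⁻¹) := by
  refine hv.isOrientation.path_induction hx.isOrientation (hv.finite_sdiff hx)
    (fun x => pathProd τ v (g • x) = pathProd τ v (g • v) * (g * pathProd τ v x * g⁻¹)) ?_ ?_
  · rw [pathProd_self τ hv]
    group
  · intro d _ _ h
    rw [smul_endpoint, pathProd_endpoint hτ.map_neg hv, ← smul_neg, ← smul_endpoint, h,
      hτ.map_smul, pathProd_endpoint hτ.map_neg hv d]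
    group

/-- The twist endomorphism of `G` defined by a cocycle and a base vertex. -/
noncomputable def endo (hτ : IsCocycle τ) (hv : IsVertex v) : G →* G where
  toFun g := pathProd τ v (g • v) * g
  map_one' := by rw [one_smul, pathProd_self τ hv, one_mul]
  map_mul' g h := by
    rw [mul_smul, hτ.pathProd_smul hv g (hv.smul h)]
    group

lemma endo_apply (hτ : IsCocycle τ) (hv : IsVertex v) (g : G) :
    hτ.endo hv g = pathProd τ v (g • v) * g := rfl

lemma endo_eq_self (hτ : IsCocycle τ) (hv : IsVertex v) (hg : g • v = v) :
    hτ.endo hv g = g := by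
  rw [endo_apply, hg, pathProd_self τ hv, one_mul]

lemma endo_eq_conj (hτ : IsCocycle τ) (hv : IsVertex v) (hx : IsVertex x) (hg : g • x = x) :
    hτ.endo hv g = pathProd τ v x * g * (pathProd τ v x)⁻¹ := by
  have h := hτ.pathProd_smul hv g hx
  rw [hg] at h
  rw [endo_apply, eq_mul_inv_of_mul_eq h.symm]
  group

lemma develop_smul (hτ : IsCocycle τ) (hv : IsVertex v) (g : G) (hx : IsVertex x) :
    develop τ v (g • x) = hτ.endo hv g • develop τ v x := by
  rw [develop, develop, hτ.pathProd_smul hv g hx, endo_apply, smul_smul, smul_smul]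
  congr 1
  group

lemma pathProd_smul_mem_develop (hτ : IsCocycle τ) (hle : ∀ d, τ d • d ≤ d) (hv : IsVertex v)
    (hu : IsVertex u) (hd : d ∈ u) : pathProd τ v (endpoint d) • d ∈ develop τ v u := by
  induction hn : (u \ endpoint d).ncard using Nat.strong_induction_on generalizing d with
  | _ n ih =>
    obtain h | h := eq_or_ne (endpoint d) u
    · rw [h]
      exact Set.smul_mem_smul_set hd
    have hfin := (isVertex_endpoint d).finite_sdiff hu
    obtain ⟨d', ⟨hd'u, hd'⟩, hstart, hss⟩ :=
      (isOrientation_endpoint d).exists_first_edge hu.isOrientation hfin h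
    have hlt : d' < d := by
      rw [← (isOrientation_endpoint d).neg_mem_iff, mem_endpoint, neg_neg] at hd'
      exact hd'.resolve_left fun hle' =>
        (hu.isOrientation.neg_mem_iff d').1 (hu.isOrientation.isUpperSet hle' hd) hd'u
    have hmem := ih _ (hn ▸ Set.ncard_lt_ncard hss hfin) hd'u rfl
    rw [pathProd_endpoint hτ.map_neg hv d', hstart, mul_smul] at hmem
    exact (hu.isOrientation.smul _).isUpperSet
      (TreeAction.smul_mono _ ((hle d').trans hlt.le)) hmem

lemma develop_injOn (hτ : IsCocycle τ) (hle : ∀ d, τ d • d ≤ d) (hv : IsVertex v) :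
    Set.InjOn (develop τ v) {x | IsVertex x} := by
  intro x hx y hy hxy
  by_contra hne
  obtain ⟨d, ⟨hdy, hdx⟩, -⟩ :=
    hx.isOrientation.exists_first_edge hy.isOrientation (hx.finite_sdiff hy) hne
  have hpos := hτ.pathProd_smul_mem_develop hle hv hy hdy
  have hneg := hτ.pathProd_smul_mem_develop hle hv hx ((hx.isOrientation.neg_mem_iff d).2 hdx)
  have hor : IsOrientation (develop τ v y) := hy.isOrientation.smul _
  rw [pathProd_endpoint hτ.map_neg hv d, mul_smul] at hpos
  rw [hxy, smul_neg] at hneg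
  exact (hor.neg_mem_iff _).1 hneg (hor.isUpperSet (TreeAction.smul_mono _ (hle d)) hpos)

lemma endo_injective (hτ : IsCocycle τ) (hle : ∀ d, τ d • d ≤ d) (hv : IsVertex v) :
    Function.Injective (hτ.endo hv) := by
  rw [injective_iff_map_eq_one]
  intro g hg
  have hdev := hτ.develop_smul hv g hv
  rw [hg, one_smul] at hdev
  rw [← hτ.endo_eq_self hv (hτ.develop_injOn hle hv (hv.smul g) hv hdev), hg]

end IsCocycle

lemma mem_smul_iff_of_endo_eq (hz : z ∈ Subgroup.centralizer (MulAction.stabilizer G a : Set G))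
    (hlt : z • a < a)
    (hg : (isCocycle_twistCocycle hz).endo (isVertex_endpoint (-a)) g = z) (hu : IsVertex u) :
    a ∈ g • u ↔ a ∈ u := by
  have hτ := isCocycle_twistCocycle hz
  have hv := isVertex_endpoint (-a)
  have hle := twistCocycle_smul_le hz hlt
  have hpath : pathProd (twistCocycle a z) (endpoint (-a)) (endpoint a) = z := by
    rw [pathProd_endpoint hτ.map_neg hv, pathProd_self _ hv, one_mul, twistCocycle_self hz]
  have hmem : ∀ u, IsVertex u → a ∈ u →
      z • a ∈ develop (twistCocycle a z) (endpoint (-a)) u := by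
    intro u hu h
    simpa only [hpath] using hτ.pathProd_smul_mem_develop hle hv hu h
  have hnotMem : ∀ u, IsVertex u → a ∉ u →
      a ∉ develop (twistCocycle a z) (endpoint (-a)) u := by
    intro u hu h
    have h' := hτ.pathProd_smul_mem_develop hle hv hu ((hu.isOrientation.neg_mem_iff a).2 h)
    rw [pathProd_self _ hv, one_smul] at h'
    exact ((hu.isOrientation.smul _).neg_mem_iff a).1 h'
  have hdev := hτ.develop_smul hv g hu
  rw [hg] at hdev
  constructor
  · intro h
    have h' := hmem _ (hu.smul g) h
    rw [hdev, Set.smul_mem_smul_set_iff] at h'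
    exact by_contra fun hn => hnotMem u hu hn h'
  · intro h
    by_contra hn
    apply hnotMem _ (hu.smul g) hn
    rw [hdev, Set.mem_smul_set_iff_inv_smul_mem]
    refine (hu.isOrientation.smul _).isUpperSet (hlt.le.trans ?_) (hmem u hu h)
    rw [← smul_le_smul_iff (g := z), smul_inv_smul]
    exact hlt.le

/-- Otherwise the twist by `z` along `a` would be injective without `z` in its image. -/
theorem not_smul_lt_of_coHopfian (hco : CoHopfian G)
    (hz : z ∈ Subgroup.centralizer (MulAction.stabilizer G a : Set G)) : ¬z • a < a := by
  intro hlt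
  have hτ := isCocycle_twistCocycle hz
  have hv := isVertex_endpoint (-a)
  obtain ⟨g, hg⟩ := hco _ (hτ.endo_injective (twistCocycle_smul_le hz hlt) hv) z
  have hfix : g⁻¹ • a = a := by
    apply eq_of_mem_endpoint_of_notMem_endpoint_neg
    · rw [← Set.mem_smul_set_iff_inv_smul_mem,
        mem_smul_iff_of_endo_eq hz hlt hg (isVertex_endpoint _)]
      exact mem_endpoint_self a
    · rw [← Set.mem_smul_set_iff_inv_smul_mem, mem_smul_iff_of_endo_eq hz hlt hg hv]
      exact notMem_endpoint_neg a
  have hga : g • a = a := by rw [← hfix, smul_inv_smul, hfix]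
  have hgz := hτ.endo_eq_self hv (g := g) (by rw [smul_endpoint, smul_neg, hga])
  exact hlt.ne ((hg.symm.trans hgz) ▸ hga)

/-! ### Translations and their ends -/

section Translation

variable {G E : Type*} [Group G] [PartialOrder E] [MulAction G E]
  {a b d x : E} {g h t : G}

/-- The edges on the axis of `t`: those which some positive power of `t` translates coherently. -/
def axis (t : G) : Set E := {b | ∃ n : ℕ, 1 ≤ n ∧ (t ^ n • b < b ∨ b < t ^ n • b)}

/-- The end of the axis of `h` towards which the edges `h ^ k • b` descend lies in the half-tree
`d`, where `h • b < b`. -/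
def TendsInto (h : G) (b d : E) : Prop := ∃ k : ℕ, h ^ k • b ≤ d

lemma TendsInto.mono (hd : TendsInto h b d) (hdx : d ≤ x) : TendsInto h b x :=
  hd.imp fun _ hk => hk.trans hdx

variable [InvolutiveNeg E]

/-- Both ends of the axis of `h` lie in the half-tree `d`, where `h • b < b`. -/
def EndsInto (h : G) (b d : E) : Prop := TendsInto h b d ∧ TendsInto h⁻¹ (-b) d

lemma EndsInto.mono (hd : EndsInto h b d) (hdx : d ≤ x) : EndsInto h b x :=
  ⟨hd.1.mono hdx, hd.2.mono hdx⟩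

variable [TreeAction G E]

lemma strictAnti_pow_smul (hb : h • b < b) : StrictAnti fun n : ℕ => h ^ n • b := by
  refine strictAnti_nat_of_succ_lt fun n => ?_
  rw [pow_succ, mul_smul, smul_lt_smul_iff]
  exact hb

lemma pow_smul_lt (hb : h • b < b) {n : ℕ} (hn : 1 ≤ n) : h ^ n • b < b := by
  simpa using strictAnti_pow_smul hb (Nat.lt_of_lt_of_le zero_lt_one hn)

lemma pow_smul_le (hb : h • b < b) (n : ℕ) : h ^ n • b ≤ b := by
  simpa using (strictAnti_pow_smul hb).antitone (Nat.zero_le n)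

lemma TendsInto.of_pow_smul_le {k m : ℕ} (hb : h • b < b) (hd : h ^ k • b ≤ d) (hkm : k ≤ m) :
    h ^ m • b ≤ d :=
  ((strictAnti_pow_smul hb).antitone hkm).trans hd

lemma tendsInto_smul_iff (hb : h • b < b) : TendsInto h b (h • d) ↔ TendsInto h b d := by
  constructor
  · rintro ⟨k, hk⟩
    refine ⟨k, ?_⟩
    have := TendsInto.of_pow_smul_le hb hk k.le_succ
    rwa [pow_succ', mul_smul, smul_le_smul_iff] at this
  · rintro ⟨k, hk⟩
    exact ⟨k + 1, by rw [pow_succ', mul_smul]; exact TreeAction.smul_mono h hk⟩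

lemma smul_eq_self_of_isOfFinOrder (hg : IsOfFinOrder g) (h : g • b ≤ b ∨ b ≤ g • b) :
    g • b = b := by
  have of_le : ∀ k : G, IsOfFinOrder k → k • b ≤ b → k • b = b := by
    intro k hk hle
    by_contra hne
    obtain ⟨n, hn, hkn⟩ := isOfFinOrder_iff_pow_eq_one.1 hk
    have hlt := pow_smul_lt (lt_of_le_of_ne hle hne) hn
    rw [hkn, one_smul] at hlt
    exact hlt.false
  rcases h with h | h
  · exact of_le g hg h
  · have hinv := of_le g⁻¹ hg.inv (by rwa [← smul_le_smul_iff (g := g), smul_inv_smul])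
    exact (inv_smul_eq_iff.1 hinv).symm

variable [TreePocset E]

lemma not_forall_le_pow_smul (hb : h • b < b) : ¬∀ n : ℕ, x ≤ h ^ n • b := fun hx =>
  Set.infinite_of_injective_forall_mem (strictAnti_pow_smul hb).injective (s := Set.Icc x b)
    (fun n => ⟨hx n, pow_smul_le hb n⟩) (finite_Icc x b)

lemma inv_smul_neg_lt (hb : h • b < b) : h⁻¹ • -b < -b := by
  rwa [smul_neg, neg_lt_neg_iff, ← smul_lt_smul_iff (g := h), smul_inv_smul]

lemma exists_pow_smul_lt (h : (axis t : Set E).Nonempty) :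
    ∃ b : E, ∃ n : ℕ, 1 ≤ n ∧ t ^ n • b < b := by
  obtain ⟨b, n, hn, hb | hb⟩ := h
  · exact ⟨b, n, hn, hb⟩
  · exact ⟨-b, n, hn, by rwa [smul_neg, neg_lt_neg_iff]⟩

lemma smul_comparable_of_commute (hb : h • b < b) (hg : Commute g h) : g • b ≤ b ∨ b ≤ g • b := by
  have not_neg_smul_le : ∀ {k : G} {c : E}, k • c < c → Commute g k → ¬-(g • c) ≤ c := by
    intro k c hc hgk hle
    have hgc : k • g • c < g • c := by
      rwa [smul_smul, ← hgk.eq, mul_smul, smul_lt_smul_iff]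
    refine not_forall_le_pow_smul hc (x := -(g • c)) fun n => ?_
    refine le_trans ?_ (TreeAction.smul_mono (k ^ n) hle)
    rw [smul_neg, neg_le_neg_iff]
    exact pow_smul_le hgc n
  rcases nested (g • b) b with hle | hle | hle | hle
  · exact Or.inl hle
  · exact Or.inr hle
  · exact absurd (by rwa [smul_neg, neg_neg])
      (not_neg_smul_le (inv_smul_neg_lt hb) hg.inv_right)
  · exact absurd hle (not_neg_smul_le hb hg)

lemma smul_eq_self_of_commute (hb : h • b < b) (hg : Commute g h) (hf : IsOfFinOrder g) :
    g • b = b :=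
  smul_eq_self_of_isOfFinOrder hf (smul_comparable_of_commute hb hg)

lemma exists_pow_smul_le_smul (hb : h • b < b) (hg : Commute g h) (hgb : g • b ≤ b) :
    ∃ n : ℕ, h ^ (n + 1) • b ≤ g • b ∧ g • b ≤ h ^ n • b := by
  classical
  have hex : ∃ n : ℕ, ¬g • b ≤ h ^ n • b := not_forall.1 (not_forall_le_pow_smul hb)
  obtain ⟨m, hm⟩ : ∃ m, Nat.find hex = m + 1 := by
    refine Nat.exists_eq_succ_of_ne_zero fun h0 => ?_
    have := Nat.find_spec hex
    rw [h0, pow_zero, one_smul] at this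
    exact this hgb
  refine ⟨m, ?_, not_not.1 (Nat.find_min hex (hm ▸ Nat.lt_succ_self m))⟩
  have hnot : ¬g • b ≤ h ^ (m + 1) • b := hm ▸ Nat.find_spec hex
  have hcomm : Commute ((h ^ (m + 1))⁻¹ * g) h :=
    ((Commute.refl h).pow_left (m + 1)).inv_left.mul_left hg
  have key := smul_comparable_of_commute hb hcomm
  rw [← smul_le_smul_iff (g := h ^ (m + 1)), ← smul_le_smul_iff (a := b) (g := h ^ (m + 1)),
    mul_smul, smul_inv_smul] at key
  exact key.resolve_left hnot

lemma exists_zpow_smul_mem_Icc (hb : h • b < b) (hg : Commute g h) :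
    ∃ j : ℤ, h ^ j • g • b ∈ Set.Icc (h • b) b := by
  rcases smul_comparable_of_commute hb hg with hgb | hgb
  · obtain ⟨n, hn, hn'⟩ := exists_pow_smul_le_smul hb hg hgb
    refine ⟨-n, ?_, ?_⟩
    · rwa [← smul_le_smul_iff (g := h ^ n), smul_smul, ← pow_succ, zpow_neg, zpow_natCast,
        smul_inv_smul]
    · rwa [← smul_le_smul_iff (g := h ^ n), zpow_neg, zpow_natCast, smul_inv_smul]
  · obtain ⟨n, hn, hn'⟩ := exists_pow_smul_le_smul hb hg.inv_left
      (by rwa [← smul_le_smul_iff (g := g), smul_inv_smul])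
    rw [← smul_le_smul_iff (g := g), smul_inv_smul, smul_smul, (hg.pow_right _).eq, mul_smul] at hn
    rw [← smul_le_smul_iff (g := h * g), mul_smul, smul_inv_smul, smul_smul, hg.eq.symm, mul_assoc,
      ← pow_succ', (hg.pow_right _).eq, mul_smul] at hn'
    exact ⟨(n + 1 : ℕ), by rwa [zpow_natCast], by rwa [zpow_natCast]⟩

lemma exists_pow_eq_zpow_of_commute [Finite (MulAction.stabilizer G b)] (hb : h • b < b)
    (hg : Commute g h) : ∃ n : ℕ, 1 ≤ n ∧ ∃ j : ℤ, g ^ n = h ^ j := by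
  choose j hj using fun i : ℕ => exists_zpow_smul_mem_Icc hb (hg.pow_left i)
  obtain ⟨i, -, i', -, hii, he⟩ := Set.infinite_univ.exists_ne_map_eq_of_mapsTo
    (fun i _ => hj i) (finite_Icc (h • b) b)
  wlog hlt : i < i' generalizing i i'
  · exact this i' i hii.symm he.symm (lt_of_le_of_ne (not_lt.1 hlt) hii.symm)
  have hfix : g ^ (i' - i) * h ^ (j i' - j i) ∈ MulAction.stabilizer G b := by
    have hi' : h ^ j i' * g ^ i' = h ^ j i * g ^ i * (g ^ (i' - i) * h ^ (j i' - j i)) := by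
      rw [mul_assoc, ← mul_assoc (g ^ i), ← pow_add, Nat.add_sub_cancel' hlt.le,
        ((hg.pow_left i').zpow_right _).eq, ← mul_assoc, ← zpow_add, add_sub_cancel]
    simp only [smul_smul] at he
    rw [hi', mul_smul _ (g ^ (i' - i) * h ^ (j i' - j i)), smul_left_cancel_iff] at he
    exact he.symm
  obtain ⟨r, hr, hpow⟩ := isOfFinOrder_iff_pow_eq_one.1
    (isOfFinOrder_of_finite (⟨_, hfix⟩ : MulAction.stabilizer G b))
  have hpow' : (g ^ (i' - i) * h ^ (j i' - j i)) ^ r = 1 := congrArg Subtype.val hpow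
  rw [((hg.pow_left _).zpow_right _).mul_pow, ← pow_mul, ← zpow_natCast (h ^ _), ← zpow_mul]
    at hpow'
  refine ⟨(i' - i) * r, Nat.mul_pos (Nat.sub_pos_of_lt hlt) hr, -((j i' - j i) * r), ?_⟩
  rw [zpow_neg]
  exact eq_inv_of_mul_eq_one_left hpow'

lemma IsVertex.not_smul_lt {u : Set E} (hu : IsVertex u) (hh : h • u = u) : ¬h • b < b := by
  have of_mem : ∀ {k : G} {c : E}, k • u = u → c ∈ u → ¬k • c < c := by
    intro k c hk hc hlt
    refine Set.infinite_of_injective_forall_mem (strictAnti_pow_smul hlt).injective (fun n => ?_)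
      ((isVertex_endpoint (-c)).finite_sdiff hu)
    have hkn : k ^ n • u = u := (MulAction.stabilizer G u).pow_mem hk n
    refine ⟨hkn ▸ Set.smul_mem_smul_set hc, fun hmem => ?_⟩
    rcases mem_endpoint.1 hmem with hle | hle
    · exact not_neg_le c (hle.trans (pow_smul_le hlt n))
    · exact (neg_lt_neg_iff.1 hle).not_ge (pow_smul_le hlt n)
  intro hlt
  by_cases hb : b ∈ u
  · exact of_mem hh hb hlt
  · exact of_mem (inv_smul_eq_iff.2 hh.symm) ((hu.isOrientation.neg_mem_iff b).2 hb)
      (inv_smul_neg_lt hlt)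

lemma TendsInto.not_neg (hb : h • b < b) (hd : TendsInto h b d) : ¬TendsInto h b (-d) := by
  rintro ⟨l, hl⟩
  obtain ⟨k, hk⟩ := hd
  exact not_le_neg_of_le (of_pow_smul_le hb hk (le_max_left k l))
    (of_pow_smul_le hb hl (le_max_right k l))

lemma tendsInto_or_neg (hb : h • b < b) (d : E) : TendsInto h b d ∨ TendsInto h b (-d) := by
  by_contra! hn
  obtain ⟨hpos, hneg⟩ := hn
  have key : ∀ k : ℕ, d ≤ h ^ k • b ∨ -d ≤ h ^ k • b := by
    intro k
    rcases nested d (h ^ k • b) with hle | hle | hle | hle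
    · exact Or.inl hle
    · exact absurd ⟨k, hle⟩ hpos
    · exact absurd ⟨k, le_neg_of_le_neg hle⟩ hneg
    · exact Or.inr hle
  obtain ⟨k, hk⟩ := not_forall.1 (not_forall_le_pow_smul (x := d) hb)
  refine not_forall_le_pow_smul (x := -d) hb fun n => ?_
  have hmax := (key (max n k)).resolve_left fun hle =>
    hk (hle.trans ((strictAnti_pow_smul hb).antitone (le_max_right n k)))
  exact hmax.trans ((strictAnti_pow_smul hb).antitone (le_max_left n k))

lemma exists_pow_smul_lt_of_tendsInto (hb : h • b < b) (hd : TendsInto h b d)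
    (hd' : TendsInto h⁻¹ (-b) (-d)) : ∃ n : ℕ, 1 ≤ n ∧ h ^ n • d < d := by
  obtain ⟨k, hk⟩ := hd
  obtain ⟨l, hl⟩ := hd'
  rw [smul_neg, neg_le_neg_iff] at hl
  refine ⟨k + 1 + l, by omega, ?_⟩
  calc h ^ (k + 1 + l) • d ≤ h ^ (k + 1 + l) • (h⁻¹ ^ l • b) := TreeAction.smul_mono _ hl
    _ = h ^ (k + 1) • b := by rw [smul_smul, pow_add h (k + 1) l, inv_pow, mul_inv_cancel_right]
    _ < h ^ k • b := strictAnti_pow_smul hb k.lt_succ_self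
    _ ≤ d := hk

end Translation

section Stabilizer

variable {G E : Type*} [Group G] [MulAction G E] {a d : E} {g : G}

lemma stabilizer_eq_of_le_stabilizer_smul [Finite (MulAction.stabilizer G a)] {x : G}
    (h : MulAction.stabilizer G a ≤ MulAction.stabilizer G (x • a)) :
    MulAction.stabilizer G a = MulAction.stabilizer G (x • a) := by
  have hmap := MulAction.stabilizer_smul_eq_stabilizer_map_conj x a
  have hcard : Nat.card ((MulAction.stabilizer G a).map (MulAut.conj x).toMonoidHom) =
      Nat.card (MulAction.stabilizer G a) :=
    Subgroup.card_map_of_injective (MulAut.conj x).injective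
  have : Finite (MulAction.stabilizer G (x • a)) := by
    rw [hmap]
    exact Nat.finite_of_card_ne_zero (hcard ▸ Nat.card_pos.ne')
  exact Subgroup.eq_of_le_of_card_ge h (hmap ▸ hcard.le)

lemma exists_pow_mem_centralizer_of_stabilizer_smul [Finite (MulAction.stabilizer G a)] {x : G}
    (h : MulAction.stabilizer G (x • a) = MulAction.stabilizer G a) :
    ∃ n : ℕ, 1 ≤ n ∧ x ^ n ∈ Subgroup.centralizer (MulAction.stabilizer G a : Set G) := by
  set K := MulAction.stabilizer G a
  have hx : x ∈ Subgroup.normalizer (K : Set G) := by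
    rw [MulAction.stabilizer_smul_eq_stabilizer_map_conj] at h
    rw [Subgroup.mem_normalizer_iff]
    intro k
    conv_rhs => rw [← SetLike.mem_coe, ← h]
    simp [K]
  obtain ⟨n, hn, hpow⟩ := isOfFinOrder_iff_pow_eq_one.1
    (isOfFinOrder_of_finite (K.normalizerMonoidHom ⟨x, hx⟩))
  refine ⟨n, hn, ?_⟩
  rw [← map_pow, ← MonoidHom.mem_ker, Subgroup.normalizerMonoidHom_ker] at hpow
  exact hpow

variable [PartialOrder E] [InvolutiveNeg E] [TreeAction G E]

lemma stabilizer_eq_of_mem_edgeOrbit [Finite (MulAction.stabilizer G a)] (hd : d ∈ edgeOrbit G a)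
    (h : MulAction.stabilizer G a ≤ MulAction.stabilizer G d) :
    MulAction.stabilizer G a = MulAction.stabilizer G d := by
  rcases hd with ⟨x, rfl⟩ | ⟨x, rfl⟩
  · exact stabilizer_eq_of_le_stabilizer_smul h
  · rw [smul_neg, stabilizer_neg] at h ⊢
    exact stabilizer_eq_of_le_stabilizer_smul h

end Stabilizer

/-- A proper cocompact action without global fixed points such that every edge orbit contains the
axis of some group element. -/
structure IsProperMinimal (G E : Type*) [Group G] [PartialOrder E] [InvolutiveNeg E]
    [MulAction G E] : Prop where
  finite_stabilizer (a : E) : Finite (MulAction.stabilizer G a)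
  exists_finset_orbit : ∃ S : Finset E, ∀ a, ∃ g : G, ∃ s ∈ S, a = g • s
  axis_nonempty {h : G} (hh : ¬IsOfFinOrder h) : (axis h : Set E).Nonempty
  exists_axis_subset (a : E) : ∃ t : G, (axis t : Set E).Nonempty ∧ axis t ⊆ edgeOrbit G a

section Twist

variable {G E : Type*} [Group G] [PartialOrder E] [InvolutiveNeg E] [MulAction G E]
  [TreePocset E] [TreeAction G E] {a d : E} {x v : Set E}
  {y z : Subgroup.centralizer (MulAction.stabilizer G a : Set G)}

lemma pathProd_twistCocycle_eq_one (z : Subgroup.centralizer (MulAction.stabilizer G a : Set G))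
    (hv : IsVertex v) (hx : IsVertex x) (h : ∀ d ∈ edgeOrbit G a, d ∈ v → d ∈ x) :
    pathProd (twistCocycle a (z : G)) v x = 1 := by
  have hτ := isCocycle_twistCocycle z.2
  rw [← pathProd_congr hτ.map_neg hv hv hx, pathProd_self _ hv]
  intro d hdx hdv
  refine twistCocycle_of_notMem (fun hd => ?_) _
  have hneg := h _ (neg_mem_edgeOrbit hd) ((hv.isOrientation.neg_mem_iff d).2 hdv)
  exact (hx.isOrientation.neg_mem_iff d).1 hneg hdx

/-- The twist by `z` along the orbit of the edge `a`: the endomorphism of `G` fixing the stabilizer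
of `endpoint (-a)` which, in terms of Bass–Serre theory, is a Dehn twist. -/
noncomputable def twist (a : E) (z : Subgroup.centralizer (MulAction.stabilizer G a : Set G)) :
    G →* G :=
  (isCocycle_twistCocycle z.2).endo (isVertex_endpoint (-a))

lemma twist_apply (z : Subgroup.centralizer (MulAction.stabilizer G a : Set G)) (g : G) :
    twist a z g =
      pathProd (twistCocycle a (z : G)) (endpoint (-a)) (g • endpoint (-a)) * g := rfl

lemma twist_one (g : G) : twist a 1 g = g := by
  have hone : ∀ d : E, twistCocycle a (1 : G) d = 1 := by
    intro d
    rw [twistCocycle]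
    split_ifs <;> group
  have hv := isVertex_endpoint (-a)
  rw [twist_apply, OneMemClass.coe_one,
    ← pathProd_congr (fun d => by rw [hone, hone, inv_one]) hv hv (hv.smul g) fun d _ _ => hone d,
    pathProd_self _ hv, one_mul]

lemma twist_twistCocycle (hfix : twist a z y = y) (d : E) :
    twist a z (twistCocycle a (y : G) d) *
        pathProd (twistCocycle a (z : G)) (endpoint (-a)) (endpoint d) =
      pathProd (twistCocycle a (z : G)) (endpoint (-a)) (endpoint (-d)) *
        twistCocycle a ((y * z : Subgroup.centralizer _) : G) d := by
  have hv := isVertex_endpoint (-a)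
  have hy := isCocycle_twistCocycle y.2
  have hz := isCocycle_twistCocycle z.2
  have hyz := isCocycle_twistCocycle (y * z).2
  have of_smul : ∀ g : G, twist a z (twistCocycle a (y : G) (g • a)) *
        pathProd (twistCocycle a (z : G)) (endpoint (-a)) (endpoint (g • a)) =
      pathProd (twistCocycle a (z : G)) (endpoint (-a)) (endpoint (-(g • a))) *
        twistCocycle a ((y * z : Subgroup.centralizer _) : G) (g • a) := by
    intro g
    rw [twistCocycle_smul y.2, twistCocycle_smul (y * z).2, pathProd_endpoint hz.map_neg hv,
      twistCocycle_smul z.2, map_mul, map_mul, map_inv, hfix, twist_apply, smul_endpoint, smul_neg,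
      Subgroup.coe_mul]
    group
  by_cases hd : d ∈ edgeOrbit G a
  · rcases hd with ⟨g, rfl⟩ | ⟨g, rfl⟩
    · exact of_smul g
    · rw [smul_neg, hy.map_neg, hyz.map_neg, neg_neg, map_inv, eq_mul_inv_iff_mul_eq, mul_assoc,
        ← of_smul, inv_mul_cancel_left]
  · rw [pathProd_endpoint hz.map_neg hv d, twistCocycle_of_notMem hd, twistCocycle_of_notMem hd,
      twistCocycle_of_notMem hd, map_one, one_mul]

lemma twist_twist (hfix : twist a z y = y) (g : G) :
    twist a z (twist a y g) = twist a (y * z) g := by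
  have hv := isVertex_endpoint (-a)
  have hy := isCocycle_twistCocycle y.2
  have hyz := isCocycle_twistCocycle (y * z).2
  have hpath : ∀ u, IsVertex u →
      twist a z (pathProd (twistCocycle a (y : G)) (endpoint (-a)) u) *
          pathProd (twistCocycle a (z : G)) (endpoint (-a)) u =
        pathProd (twistCocycle a ((y * z : Subgroup.centralizer _) : G)) (endpoint (-a)) u := by
    intro u hu
    refine hv.isOrientation.path_induction hu.isOrientation (hv.finite_sdiff hu)
      (fun u => twist a z (pathProd (twistCocycle a (y : G)) (endpoint (-a)) u) *
          pathProd (twistCocycle a (z : G)) (endpoint (-a)) u =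
        pathProd (twistCocycle a ((y * z : Subgroup.centralizer _) : G)) (endpoint (-a)) u) ?_ ?_
    · rw [pathProd_self _ hv, pathProd_self _ hv, pathProd_self _ hv, map_one, one_mul]
    · intro d _ _ ih
      rw [pathProd_endpoint hy.map_neg hv d, pathProd_endpoint hyz.map_neg hv d, ← ih, map_mul,
        mul_assoc, twist_twistCocycle hfix, mul_assoc]
  rw [twist_apply y, map_mul, twist_apply (y * z), ← hpath _ (hv.smul g), mul_assoc,
    twist_apply z g]

lemma exists_mulAut_pow_eq_twist (hfix : ∀ j : ℤ, twist a (z ^ j) z = z) :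
    ∃ σ : MulAut G, ∀ (n : ℕ) (g : G), (σ ^ n) g = twist a (z ^ n) g := by
  have hcomp : ∀ (i j : ℤ) (g : G),
      twist a (z ^ j) (twist a (z ^ i) g) = twist a (z ^ (i + j)) g := by
    intro i j g
    rw [twist_twist _ g, zpow_add]
    rw [SubgroupClass.coe_zpow, map_zpow, hfix]
  have hinv : ∀ g, twist a (z ^ (-1 : ℤ)) (twist a (z ^ (1 : ℤ)) g) = g := fun g => by
    rw [hcomp, add_neg_cancel, zpow_zero, twist_one]
  have hinv' : ∀ g, twist a (z ^ (1 : ℤ)) (twist a (z ^ (-1 : ℤ)) g) = g := fun g => by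
    rw [hcomp, neg_add_cancel, zpow_zero, twist_one]
  refine ⟨MonoidHom.toMulEquiv (twist a (z ^ (1 : ℤ))) (twist a (z ^ (-1 : ℤ)))
    (MonoidHom.ext hinv) (MonoidHom.ext hinv'), fun n => ?_⟩
  induction n with
  | zero => intro g; rw [pow_zero, pow_zero, twist_one, MulAut.one_apply]
  | succ n ih =>
    intro g
    rw [pow_succ', MulAut.mul_apply, ih, ← zpow_natCast z, ← zpow_natCast z]
    exact hcomp n 1 g

end Twist

end TreePocset

lemma OutFinite.exists_pow_apply_eq_conj {G : Type*} [Group G] (hout : OutFinite G)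
    (σ : MulAut G) : ∃ k : ℕ, 1 ≤ k ∧ ∃ g : G, ∀ x, (σ ^ k) x = g * x * g⁻¹ := by
  obtain ⟨k, hk, -, g, hg⟩ := Subgroup.exists_pow_mem_of_index_ne_zero hout.index_ne_zero σ
  exact ⟨k, hk, g, fun x => by rw [← hg, MulAut.conj_apply]⟩

namespace TreePocset

open Pointwise

lemma isOfFinOrder_of_smul_eq {G E : Type*} [Group G] [MulAction G E] {a : E} {g : G}
    [Finite (MulAction.stabilizer G a)] (hg : g • a = a) : IsOfFinOrder g :=
  (MulAction.stabilizer G a).subtype.isOfFinOrder (x := ⟨g, hg⟩) (isOfFinOrder_of_finite _)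

section Ends

variable {G E : Type*} [Group G] [PartialOrder E] [InvolutiveNeg E] [MulAction G E]
  [TreeAction G E] {a b d : E} {g h : G}

lemma edgeOrbit_eq (hd : d ∈ edgeOrbit G a) : edgeOrbit G d = edgeOrbit G a := by
  have edgeOrbit_subset : ∀ {c e : E}, c ∈ edgeOrbit G e → edgeOrbit G c ⊆ edgeOrbit G e := by
    rintro c e hc _ (⟨g, rfl⟩ | ⟨g, rfl⟩)
    · exact smul_mem_edgeOrbit g hc
    · exact smul_mem_edgeOrbit g (neg_mem_edgeOrbit hc)
  refine (edgeOrbit_subset hd).antisymm (edgeOrbit_subset ?_)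
  rcases hd with ⟨g, rfl⟩ | ⟨g, rfl⟩
  · exact Or.inl ⟨g⁻¹, inv_smul_smul g a⟩
  · exact Or.inr ⟨g⁻¹, by rw [smul_neg, inv_smul_smul, neg_neg]⟩

lemma TendsInto.smul_of_commute (hd : TendsInto h b d) (hg : Commute g h) (hgb : g • b = b) :
    TendsInto h b (g • d) := by
  obtain ⟨k, hk⟩ := hd
  refine ⟨k, ?_⟩
  have := TreeAction.smul_mono g hk
  rwa [smul_smul, (hg.pow_right k).eq, mul_smul, hgb] at this

variable [TreePocset E]

lemma endsInto_smul_iff (hb : h • b < b) : EndsInto h b (h • d) ↔ EndsInto h b d := by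
  refine and_congr (tendsInto_smul_iff hb) ?_
  rw [← tendsInto_smul_iff (inv_smul_neg_lt hb), inv_smul_smul]

lemma EndsInto.mem_endpoint (hb : h • b < b) (hd : EndsInto h b d) : d ∈ endpoint b := by
  by_contra hmem
  rw [← (isOrientation_endpoint b).neg_mem_iff] at hmem
  rcases hmem with hle | hlt
  · exact hd.1.not_neg hb ⟨0, by rwa [pow_zero, one_smul]⟩
  · rw [neg_neg] at hlt
    exact (hd.2.mono hlt.le).not_neg (inv_smul_neg_lt hb)
      ⟨0, by rw [pow_zero, one_smul]⟩

lemma finite_setOf_le_and_endsInto_neg (hb : h • b < b) (ha : EndsInto h b (-a)) :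
    {d | a ≤ d ∧ EndsInto h b (-d)}.Finite := by
  obtain ⟨k, hk⟩ := ha.1
  refine (finite_Icc a (-(h ^ k • b))).subset fun d hd => ⟨hd.1, ?_⟩
  rcases nested d (-(h ^ k • b)) with hle | hle | hle | hle
  · exact hle
  · refine absurd ?_ (hd.2.2.not_neg (inv_smul_neg_lt hb))
    refine ⟨0, ?_⟩
    rw [pow_zero, one_smul, neg_neg]
    exact (neg_le_neg_iff.2 (pow_smul_le hb k)).trans hle
  · rw [neg_neg] at hle
    exact absurd (le_neg_of_le_neg hk) (not_le_neg_of_le (hd.1.trans hle))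
  · exact absurd (by rw [neg_neg]; exact ⟨k, neg_le_neg_iff.1 hle⟩) (hd.2.1.not_neg hb)

variable [Finite (MulAction.stabilizer G a)]

lemma endsInto_or_endsInto_neg (hco : CoHopfian G)
    (hh : h ∈ Subgroup.centralizer (MulAction.stabilizer G a : Set G)) (hb : h • b < b)
    (hd : d ∈ edgeOrbit G a) : EndsInto h b d ∨ EndsInto h b (-d) := by
  have not_separates : ∀ e ∈ edgeOrbit G a, TendsInto h b e → ¬TendsInto h⁻¹ (-b) (-e) := by
    intro e he hpos hneg
    obtain ⟨n, -, hlt⟩ := exists_pow_smul_lt_of_tendsInto hb hpos hneg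
    have hhn := pow_mem hh n
    have hstab : MulAction.stabilizer G a = MulAction.stabilizer G e :=
      stabilizer_eq_of_mem_edgeOrbit he fun k hk => smul_eq_self_of_commute hlt
        (Subgroup.mem_centralizer_iff.1 hhn k hk) (isOfFinOrder_of_smul_eq hk)
    exact not_smul_lt_of_coHopfian hco (hstab ▸ hhn) hlt
  rcases tendsInto_or_neg hb d with h1 | h1 <;>
    rcases tendsInto_or_neg (inv_smul_neg_lt hb) d with h2 | h2
  · exact Or.inl ⟨h1, h2⟩
  · exact absurd h2 (not_separates d hd h1)
  · exact absurd (by rwa [neg_neg]) (not_separates (-d) (neg_mem_edgeOrbit hd) h1)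
  · exact Or.inr ⟨h1, h2⟩

lemma exists_closest_edge (hco : CoHopfian G)
    (hh : h ∈ Subgroup.centralizer (MulAction.stabilizer G a : Set G)) (hb : h • b < b)
    (ha : EndsInto h b (-a)) :
    ∃ c ∈ edgeOrbit G a, MulAction.stabilizer G a = MulAction.stabilizer G c ∧
      ∀ d ∈ edgeOrbit G a, d ∈ endpoint (-c) ↔ EndsInto h b d := by
  obtain ⟨c, ⟨hc, hac, hend⟩, hmax⟩ := ((finite_setOf_le_and_endsInto_neg hb ha).inter_of_right
    (edgeOrbit G a)).exists_maximal ⟨a, mem_edgeOrbit_self a, le_rfl, ha⟩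
  have hnot : ∀ d ∈ edgeOrbit G a, EndsInto h b (-d) → d ∉ endpoint (-c) := by
    rintro d hd hdend (hle | hlt)
    · exact (hdend.mono (neg_le_of_neg_le hle)).1.not_neg hb hend.1
    · rw [neg_lt_neg_iff] at hlt
      exact hlt.not_ge (hmax ⟨hd, hac.trans hlt.le, hdend⟩ hlt.le)
  refine ⟨c, hc, stabilizer_eq_of_mem_edgeOrbit hc fun g hg => ?_, fun d hd => ⟨fun hdc => ?_,
    fun hdend => ?_⟩⟩
  · have hgf : IsOfFinOrder g := isOfFinOrder_of_smul_eq hg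
    have hgh : Commute g h := Subgroup.mem_centralizer_iff.1 hh g hg
    have hgend : TendsInto h b (-(g • c)) :=
      smul_neg g c ▸ hend.1.smul_of_commute hgh (smul_eq_self_of_commute hb hgh hgf)
    have hagc : a ≤ g • c := by
      simpa only [MulAction.mem_stabilizer_iff.1 hg] using TreeAction.smul_mono g hac
    rcases nested (g • c) c with hle | hle | hle | hle
    · exact smul_eq_self_of_isOfFinOrder hgf (Or.inl hle)
    · exact smul_eq_self_of_isOfFinOrder hgf (Or.inr hle)
    · exact absurd (hagc.trans hle) (not_le_neg_of_le hac)
    · exact absurd hend.1 ((hgend.mono hle).not_neg hb)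
  · exact (endsInto_or_endsInto_neg hco hh hb hd).resolve_right fun h' => hnot d hd h' hdc
  · rw [← (isOrientation_endpoint (-c)).neg_notMem_iff]
    exact hnot _ (neg_mem_edgeOrbit hd) (by rwa [neg_neg])

end Ends

end TreePocset

/-! ### Finiteness of the centralizers of edge stabilizers -/

/-- A group is virtually torsion-free if it has a torsion-free subgroup of finite index. -/
def VirtuallyTorsionFree (G : Type*) [Group G] : Prop :=
  ∃ H : Subgroup G, H.FiniteIndex ∧ ∀ h ∈ H, IsOfFinOrder h → h = 1

lemma VirtuallyTorsionFree.finite_of_forall_isOfFinOrder {G : Type*} [Group G]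
    (htf : VirtuallyTorsionFree G) {K : Subgroup G} (hK : ∀ k ∈ K, IsOfFinOrder k) : Finite K := by
  obtain ⟨H, hH, htriv⟩ := htf
  refine Finite.of_injective (fun k : K => (k : G ⧸ H)) fun x y hxy => Subtype.ext ?_
  have hmem : (x : G)⁻¹ * y ∈ K := K.mul_mem (K.inv_mem x.2) y.2
  exact inv_mul_eq_one.1 (htriv _ (QuotientGroup.eq.1 hxy) (hK _ hmem))

namespace TreePocset

open Pointwise

section TwistAlongAxis

variable {G E : Type*} [Group G] [PartialOrder E] [InvolutiveNeg E] [MulAction G E]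
  [TreePocset E] [TreeAction G E] {a b : E} {h x : G}

lemma twist_eq_conj (z : Subgroup.centralizer (MulAction.stabilizer G a : Set G))
    (hx : x • endpoint a = endpoint a) : twist a z x = z * x * (z : G)⁻¹ := by
  have hτ := isCocycle_twistCocycle z.2
  have hv := isVertex_endpoint (-a)
  rw [twist, hτ.endo_eq_conj hv (isVertex_endpoint a) hx, pathProd_endpoint hτ.map_neg hv,
    pathProd_self _ hv, one_mul, twistCocycle_self z.2]

variable (hb : h • b < b) (ha : ∀ d ∈ edgeOrbit G a, d ∈ endpoint (-a) ↔ EndsInto h b d)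
include hb ha

lemma twist_eq_self_of_endsInto (z : Subgroup.centralizer (MulAction.stabilizer G a : Set G)) :
    twist a z h = h := by
  have hv := isVertex_endpoint (-a)
  rw [twist_apply, pathProd_twistCocycle_eq_one z hv (hv.smul h), one_mul]
  intro d hd hdv
  rw [Set.mem_smul_set_iff_inv_smul_mem, ha _ (smul_mem_edgeOrbit _ hd), ← endsInto_smul_iff hb,
    smul_inv_smul, ← ha d hd]
  exact hdv

lemma twist_eq_self_of_smul_eq (z : Subgroup.centralizer (MulAction.stabilizer G a : Set G))
    (hx : x • b = b) : twist a z x = x := by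
  have hb' := isVertex_endpoint b
  rw [twist, (isCocycle_twistCocycle z.2).endo_eq_conj _ hb' (by rw [smul_endpoint, hx]),
    pathProd_twistCocycle_eq_one z (isVertex_endpoint (-a)) hb'
      fun d hd hdv => ((ha d hd).1 hdv).mem_endpoint hb, one_mul, inv_one, mul_one]

lemma exists_commute_of_outFinite (hout : OutFinite G)
    (hh : h ∈ Subgroup.centralizer (MulAction.stabilizer G a : Set G)) :
    ∃ k : ℕ, 1 ≤ k ∧ ∃ g : G, Commute g h ∧ (∀ x : G, x • b = b → Commute x g) ∧
      ∀ x : G, x • endpoint a = endpoint a → Commute x (g⁻¹ * h ^ k) := by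
  let z : Subgroup.centralizer (MulAction.stabilizer G a : Set G) := ⟨h, hh⟩
  obtain ⟨σ, hσ⟩ := exists_mulAut_pow_eq_twist (z := z)
    fun j => twist_eq_self_of_endsInto hb ha (z ^ j)
  obtain ⟨k, hk, g, hg⟩ := hout.exists_pow_apply_eq_conj σ
  have htwist : ∀ x, twist a (z ^ k) x = g * x * g⁻¹ := fun x => by rw [← hσ, hg]
  have commute_of_fix : ∀ x, twist a (z ^ k) x = x → Commute x g := by
    intro x hx
    rw [htwist, mul_inv_eq_iff_eq_mul] at hx
    exact hx.symm
  refine ⟨k, hk, g, (commute_of_fix h (twist_eq_self_of_endsInto hb ha _)).symm, fun x hx =>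
    commute_of_fix x (twist_eq_self_of_smul_eq hb ha _ hx), fun x hx => ?_⟩
  have hconj := htwist x
  rw [twist_eq_conj _ hx, Subgroup.coe_pow] at hconj
  calc x * (g⁻¹ * h ^ k) = g⁻¹ * (g * x * g⁻¹) * h ^ k := by group
    _ = g⁻¹ * (h ^ k * x * (h ^ k)⁻¹) * h ^ k := by rw [← hconj]
    _ = g⁻¹ * h ^ k * x := by group

end TwistAlongAxis

section VertexStabilizer

variable {G E : Type*} [Group G] [PartialOrder E] [InvolutiveNeg E] [MulAction G E]
  [TreePocset E] [TreeAction G E] {a b : E} {h : G}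

lemma IsProperMinimal.isOfFinOrder_of_smul_eq (hE : IsProperMinimal G E) {u : Set E}
    (hu : IsVertex u) (hh : h • u = u) : IsOfFinOrder h := by
  by_contra hinf
  obtain ⟨b, n, -, hlt⟩ := exists_pow_smul_lt (hE.axis_nonempty hinf)
  exact hu.not_smul_lt ((MulAction.stabilizer G u).pow_mem hh n) hlt

lemma stabilizer_endpoint_le (hE : IsProperMinimal G E) (hb : h • b < b)
    (ha : EndsInto h b (-a)) (hc : ∀ x : G, x • endpoint a = endpoint a → Commute x h) :
    MulAction.stabilizer G (endpoint a) ≤ MulAction.stabilizer G a := by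
  intro x hx
  by_contra hne
  have hxa : -a < x • a :=
    neg_lt_of_endpoint_eq (by rw [← smul_endpoint]; exact hx.symm) (Ne.symm hne)
  have hxb : x • b = b := smul_eq_self_of_commute hb (hc x hx)
    (hE.isOfFinOrder_of_smul_eq (isVertex_endpoint a) hx)
  refine (ha.1.mono hxa.le).not_neg hb ?_
  rw [← smul_neg]
  exact ha.1.smul_of_commute (hc x hx) hxb

lemma IsProperMinimal.exists_smul_lt (hE : IsProperMinimal G E) (a : E) :
    ∃ s : G, s • a < a ∧ ∀ d : E, s • d < d → d ∈ edgeOrbit G a := by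
  obtain ⟨t, hne, hsub⟩ := hE.exists_axis_subset a
  obtain ⟨b, n, hn, hlt⟩ := exists_pow_smul_lt hne
  obtain ⟨u, x, hux, hu⟩ : ∃ u x : G, u • x • a < x • a ∧ ∀ d : E, u • d < d → d ∈ axis t := by
    rcases hsub ⟨n, hn, Or.inl hlt⟩ with ⟨x, rfl⟩ | ⟨x, rfl⟩
    · exact ⟨t ^ n, x, hlt, fun d hd => ⟨n, hn, Or.inl hd⟩⟩
    · refine ⟨(t ^ n)⁻¹, x, ?_, fun d hd => ⟨n, hn, Or.inr ?_⟩⟩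
      · simpa only [smul_neg, neg_neg] using inv_smul_neg_lt hlt
      · rwa [← smul_lt_smul_iff (g := t ^ n), smul_inv_smul] at hd
  have conj_smul_lt : ∀ d : E, (x⁻¹ * u * x) • d < d ↔ u • x • d < x • d := by
    intro d
    rw [← smul_lt_smul_iff (g := x), smul_smul, smul_smul, mul_assoc, mul_inv_cancel_left]
  refine ⟨x⁻¹ * u * x, (conj_smul_lt a).2 hux, fun d hd => ?_⟩
  have := smul_mem_edgeOrbit x⁻¹ (hsub (hu _ ((conj_smul_lt d).1 hd)))
  rwa [inv_smul_smul] at this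

lemma not_stabilizer_endpoint_le (hE : IsProperMinimal G E) (hco : CoHopfian G) (a : E) :
    ¬MulAction.stabilizer G (endpoint a) ≤ MulAction.stabilizer G a := by
  intro hle
  obtain ⟨s, hs, horbit⟩ := hE.exists_smul_lt a
  obtain ⟨c, ⟨hsc, hca⟩, hmax⟩ := ((finite_Icc (s • a) a).subset
    fun d (hd : s • a ≤ d ∧ d < a) => ⟨hd.1, hd.2.le⟩).exists_maximal ⟨s • a, le_rfl, hs⟩
  have hcov : c ⋖ a :=
    ⟨hca, fun d hcd hda => hcd.not_ge (hmax ⟨hsc.trans hcd.le, hda⟩ hcd.le)⟩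
  have hend := endpoint_neg_eq_of_covBy hcov
  rcases horbit c ((smul_lt_smul_iff.2 hca).trans_le hsc) with ⟨y, rfl⟩ | ⟨y, rfl⟩
  · have := hE.finite_stabilizer a
    have := hE.finite_stabilizer (y • a)
    have hstab : MulAction.stabilizer G (y • a) = MulAction.stabilizer G (y⁻¹ • y • a) := by
      refine stabilizer_eq_of_le_stabilizer_smul fun k hk => ?_
      rw [inv_smul_smul]
      refine hle ?_
      rw [← hend, MulAction.mem_stabilizer_iff, smul_endpoint, smul_neg,
        MulAction.mem_stabilizer_iff.1 hk]
    rw [inv_smul_smul] at hstab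
    obtain ⟨n, hn, hcen⟩ := exists_pow_mem_centralizer_of_stabilizer_smul hstab
    exact not_smul_lt_of_coHopfian hco hcen (pow_smul_lt hca hn)
  · have hya : y ∈ MulAction.stabilizer G a := by
      refine hle ?_
      rw [MulAction.mem_stabilizer_iff, smul_endpoint, ← hend, smul_neg, neg_neg]
    rw [smul_neg, MulAction.mem_stabilizer_iff.1 hya] at hca
    exact not_neg_le a hca.le

end VertexStabilizer

section Centralizer

variable {G E : Type*} [Group G] [PartialOrder E] [InvolutiveNeg E] [MulAction G E]
  [TreeAction G E] {a b d : E} {h : G}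

lemma TendsInto.pow {m : ℕ} (hb : h • b < b) (hm : 1 ≤ m) (hd : TendsInto h b d) :
    TendsInto (h ^ m) b d := by
  obtain ⟨k, hk⟩ := hd
  refine ⟨k, ?_⟩
  rw [← pow_mul]
  exact TendsInto.of_pow_smul_le hb hk (Nat.le_mul_of_pos_left k hm)

variable [TreePocset E]

lemma EndsInto.pow {m : ℕ} (hb : h • b < b) (hm : 1 ≤ m) (hd : EndsInto h b d) :
    EndsInto (h ^ m) b d :=
  ⟨hd.1.pow hb hm, inv_pow h m ▸ hd.2.pow (inv_smul_neg_lt hb) hm⟩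

/-- Some power of the twist by `h` is inner, say conjugation by `g`, and `g` commutes with `h`, so
`g ^ N = h ^ j`. If `j ≠ 0`, a power of `h` centralizes the stabilizer of the edge `b` that it
translates. If `j = 0`, a power of `h` centralizes the stabilizer of `endpoint a`. -/
lemma not_endsInto_neg (hE : IsProperMinimal G E) (hco : CoHopfian G) (hout : OutFinite G)
    (hh : h ∈ Subgroup.centralizer (MulAction.stabilizer G a : Set G)) (hb : h • b < b) :
    ¬EndsInto h b (-a) := by
  intro hend
  have hfin := hE.finite_stabilizer
  obtain ⟨c, hca, hstab, hc⟩ := exists_closest_edge hco hh hb hend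
  rw [← edgeOrbit_eq hca] at hc
  rw [hstab] at hh
  have hend' : EndsInto h b (-c) :=
    (hc _ (neg_mem_edgeOrbit (mem_edgeOrbit_self c))).1 (mem_endpoint_self _)
  obtain ⟨k, hk, g, hgh, hgb, hgc⟩ := exists_commute_of_outFinite hb hc hout hh
  obtain ⟨N, hN, j, hNj⟩ := exists_pow_eq_zpow_of_commute hb hgh
  rcases eq_or_ne j 0 with rfl | hj
  · have hkN := Nat.mul_pos hk hN
    have hpow : (g⁻¹ * h ^ k) ^ N = h ^ (k * N) := by
      rw [(hgh.inv_left.pow_right k).mul_pow, inv_pow, hNj, zpow_zero, inv_one, one_mul, pow_mul]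
    exact not_stabilizer_endpoint_le hE hco c (stabilizer_endpoint_le hE (pow_smul_lt hb hkN)
      (hend'.pow hb hkN) fun x hx => hpow ▸ (hgc x hx).pow_right N)
  · have hcomm : ∀ x : G, x • b = b → Commute x (h ^ j.natAbs) := by
      intro x hx
      have hxj : Commute x (h ^ j) := hNj ▸ (hgb x hx).pow_right N
      rcases Int.natAbs_eq j with hj' | hj'
      · rwa [hj', zpow_natCast] at hxj
      · rwa [hj', zpow_neg, zpow_natCast, Commute.inv_right_iff] at hxj
    exact not_smul_lt_of_coHopfian hco (Subgroup.mem_centralizer_iff.2 hcomm)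
      (pow_smul_lt hb (Int.natAbs_pos.2 hj))

theorem finite_centralizer_stabilizer (hE : IsProperMinimal G E) (htf : VirtuallyTorsionFree G)
    (hco : CoHopfian G) (hout : OutFinite G) (a : E) :
    Finite (Subgroup.centralizer (MulAction.stabilizer G a : Set G)) := by
  refine htf.finite_of_forall_isOfFinOrder fun t ht => ?_
  by_contra hinf
  obtain ⟨b, n, -, hb⟩ := exists_pow_smul_lt (hE.axis_nonempty hinf)
  have hh := pow_mem ht n
  have := hE.finite_stabilizer a
  rcases endsInto_or_endsInto_neg hco hh hb (mem_edgeOrbit_self a) with hend | hend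
  · rw [← neg_neg a] at hend
    refine not_endsInto_neg hE hco hout ?_ hb hend
    rwa [stabilizer_neg]
  · exact not_endsInto_neg hE hco hout hh hb hend

end Centralizer

/-! ### Finite subgroups and homomorphisms from finite groups -/

section FixedVertex

variable {G E : Type*} [Group G] [MulAction G E] {K : Subgroup G} {v : Set E} {a b : E} {k : G}

/-- The edges separating two vertices of the orbit of `v` under `K`. -/
def separatingEdges (K : Subgroup G) (v : Set E) : Set E :=
  {b | ∃ k ∈ K, ∃ l ∈ K, b ∈ k • v ∧ b ∉ l • v}

lemma mem_smul_iff_of_notMem_separatingEdges (hb : b ∉ separatingEdges K v) (hk : k ∈ K) :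
    b ∈ k • v ↔ b ∈ v := by
  constructor <;> intro hmem <;> by_contra hnot
  · exact hb ⟨k, hk, 1, K.one_mem, hmem, by rwa [one_smul]⟩
  · exact hb ⟨1, K.one_mem, k, hk, by rwa [one_smul], hnot⟩

lemma smul_mem_separatingEdges_iff (hk : k ∈ K) :
    k • b ∈ separatingEdges K v ↔ b ∈ separatingEdges K v := by
  have smul_mem : ∀ g ∈ K, ∀ d ∈ separatingEdges K v, g • d ∈ separatingEdges K v := by
    rintro g hg d ⟨k, hk, l, hl, hdk, hdl⟩
    refine ⟨g * k, K.mul_mem hg hk, g * l, K.mul_mem hg hl, ?_, ?_⟩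
    · rw [mul_smul]
      exact Set.smul_mem_smul_set hdk
    · rwa [mul_smul, Set.smul_mem_smul_set_iff]
  exact ⟨fun h => inv_smul_smul k b ▸ smul_mem _ (K.inv_mem hk) _ h, smul_mem k hk b⟩

variable [PartialOrder E] [InvolutiveNeg E]

/-- The number of edges below `b` which separate two vertices of the orbit of `v` under `K`. It is
meaningful when there are finitely many separating edges. -/
noncomputable def separationCount (K : Subgroup G) (v : Set E) (b : E) : ℕ :=
  (separatingEdges K v ∩ Set.Iic b).ncard

/-- A separating edge is oriented towards the side containing more separating edges; every other
edge is oriented towards the orbit of `v`. -/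
def majorityOrientation (K : Subgroup G) (v : Set E) : Set E :=
  {b | (b ∈ separatingEdges K v ∧ separationCount K v (-b) < separationCount K v b) ∨
    (b ∉ separatingEdges K v ∧ b ∈ v)}

variable [TreeAction G E]

lemma separationCount_smul (hk : k ∈ K) : separationCount K v (k • b) = separationCount K v b := by
  have himage : separatingEdges K v ∩ Set.Iic (k • b) =
      (k • ·) '' (separatingEdges K v ∩ Set.Iic b) := by
    ext d
    constructor
    · rintro ⟨hd, hdb⟩
      refine ⟨k⁻¹ • d, ⟨(smul_mem_separatingEdges_iff (K.inv_mem hk)).2 hd, ?_⟩, smul_inv_smul k d⟩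
      rwa [Set.mem_Iic, ← smul_le_smul_iff (g := k), smul_inv_smul]
    · rintro ⟨d, ⟨hd, hdb⟩, rfl⟩
      exact ⟨(smul_mem_separatingEdges_iff hk).2 hd, TreeAction.smul_mono k hdb⟩
  rw [separationCount, separationCount, himage,
    Set.ncard_image_of_injective _ (MulAction.injective k)]

lemma smul_majorityOrientation (hk : k ∈ K) :
    k • majorityOrientation K v = majorityOrientation K v := by
  ext b
  have hk' := K.inv_mem hk
  rw [Set.mem_smul_set_iff_inv_smul_mem, majorityOrientation, Set.mem_ofPred_eq, Set.mem_ofPred_eq,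
    smul_mem_separatingEdges_iff hk', ← smul_neg, separationCount_smul hk',
    separationCount_smul hk', ← Set.mem_smul_set_iff_inv_smul_mem]
  exact or_congr_right (and_congr_right fun hb => mem_smul_iff_of_notMem_separatingEdges hb hk)

variable [TreePocset E] (hv : IsVertex v)
include hv

lemma finite_separatingEdges [Finite K] : (separatingEdges K v).Finite := by
  have hK : (K : Set G).Finite := Set.toFinite _
  refine (hK.biUnion fun k _ => hK.biUnion fun l _ =>
    (hv.smul l).finite_sdiff (hv.smul k)).subset ?_
  rintro b ⟨k, hk, l, hl, hbk, hbl⟩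
  exact Set.mem_biUnion hk (Set.mem_biUnion hl ⟨hbk, hbl⟩)

lemma neg_mem_separatingEdges_iff : -b ∈ separatingEdges K v ↔ b ∈ separatingEdges K v := by
  have neg_mem : ∀ d ∈ separatingEdges K v, -d ∈ separatingEdges K v := by
    rintro d ⟨k, hk, l, hl, hdk, hdl⟩
    exact ⟨l, hl, k, hk, ((hv.smul l).isOrientation.neg_mem_iff d).2 hdl,
      (hv.smul k).isOrientation.neg_notMem_iff.2 hdk⟩
  exact ⟨fun h => neg_neg b ▸ neg_mem _ h, neg_mem b⟩

variable [Finite K]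

lemma separationCount_mono (hab : a ≤ b) : separationCount K v a ≤ separationCount K v b :=
  Set.ncard_le_ncard (Set.inter_subset_inter_right _ (Set.Iic_subset_Iic.2 hab))
    ((finite_separatingEdges hv).subset Set.inter_subset_left)

lemma eq_of_le_of_separationCount_eq (hab : a ≤ b) (hb : b ∈ separatingEdges K v)
    (heq : separationCount K v a = separationCount K v b) : a = b := by
  refine hab.antisymm ?_
  have hset := Set.eq_of_subset_of_ncard_le
    (Set.inter_subset_inter_right (separatingEdges K v) (Set.Iic_subset_Iic.2 hab)) heq.ge
    ((finite_separatingEdges hv).subset Set.inter_subset_left)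
  exact (hset.ge ⟨hb, le_rfl⟩).2

lemma smul_eq_self_of_separationCount_neg (hb : b ∈ separatingEdges K v)
    (hbal : separationCount K v (-b) = separationCount K v b) (hk : k ∈ K) : k • b = b := by
  have hkb : k • b ∈ separatingEdges K v := (smul_mem_separatingEdges_iff hk).2 hb
  have hcount : separationCount K v (k • b) = separationCount K v b := separationCount_smul hk
  rcases nested (k • b) b with hle | hle | hle | hle
  · exact eq_of_le_of_separationCount_eq hv hle hb hcount
  · exact (eq_of_le_of_separationCount_eq hv hle hkb hcount.symm).symm
  · exact absurd (eq_of_le_of_separationCount_eq hv hle ((neg_mem_separatingEdges_iff hv).2 hb)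
      (hcount.trans hbal.symm)) (TreeAction.smul_ne_neg k b)
  · have hneg := eq_of_le_of_separationCount_eq hv hle hb
      (by rw [← smul_neg, separationCount_smul hk, hbal])
    exact absurd (neg_eq_iff_eq_neg.1 hneg) (TreeAction.smul_ne_neg k b)

lemma isOrientation_majorityOrientation
    (hunbal : ∀ b ∈ separatingEdges K v, separationCount K v (-b) ≠ separationCount K v b) :
    IsOrientation (majorityOrientation K v) := by
  constructor
  · rintro b d hbd (⟨hb, hcount⟩ | ⟨hb, hbv⟩) <;> by_cases hd : d ∈ separatingEdges K v
    · exact Or.inl ⟨hd, (separationCount_mono hv (neg_anti hbd)).trans_lt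
        (hcount.trans_le (separationCount_mono hv hbd))⟩
    · obtain ⟨k, hk, -, -, hbk, -⟩ := hb
      exact Or.inr ⟨hd, (mem_smul_iff_of_notMem_separatingEdges hd hk).1
        ((hv.smul k).isOrientation.isUpperSet hbd hbk)⟩
    · obtain ⟨-, -, l, hl, -, hdl⟩ := hd
      exact absurd ((hv.smul l).isOrientation.isUpperSet hbd
        ((mem_smul_iff_of_notMem_separatingEdges hb hl).2 hbv)) hdl
    · exact Or.inr ⟨hd, hv.isOrientation.isUpperSet hbd hbv⟩
  · intro b
    simp only [majorityOrientation, Set.mem_ofPred_eq, neg_mem_separatingEdges_iff hv, neg_neg,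
      hv.isOrientation.neg_mem_iff b]
    by_cases hb : b ∈ separatingEdges K v
    · simp only [hb, true_and, not_true, false_and, or_false, not_lt]
      exact (lt_iff_le_and_ne.trans (and_iff_left (hunbal b hb).symm))
    · simp [hb]

end FixedVertex

section FiniteSubgroup

variable {G E : Type*} [Group G] [PartialOrder E] [InvolutiveNeg E] [MulAction G E]
  [TreePocset E] [TreeAction G E]

theorem exists_isVertex_forall_smul_eq [Nonempty E] (K : Subgroup G) [Finite K] :
    ∃ x : Set E, IsVertex x ∧ ∀ k ∈ K, k • x = x := by
  obtain ⟨e⟩ := ‹Nonempty E›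
  have hv := isVertex_endpoint e
  by_cases hbal : ∃ b ∈ separatingEdges K (endpoint e),
      separationCount K (endpoint e) (-b) = separationCount K (endpoint e) b
  · obtain ⟨b, hb, hcount⟩ := hbal
    exact ⟨endpoint b, isVertex_endpoint b, fun k hk => by
      rw [smul_endpoint, smul_eq_self_of_separationCount_neg hv hb hcount hk]⟩
  · push Not at hbal
    refine ⟨majorityOrientation K (endpoint e), hv.of_finite_sdiff
      (isOrientation_majorityOrientation hv hbal) ((finite_separatingEdges (K := K) hv).subset ?_),
      fun k hk => smul_majorityOrientation hk⟩
    rintro b ⟨hb | hb, hbv⟩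
    · exact hb.1
    · exact absurd hb.2 hbv

lemma IsProperMinimal.finite_stabilizer_of_isVertex (hE : IsProperMinimal G E)
    (htf : VirtuallyTorsionFree G) {x : Set E} (hx : IsVertex x) :
    Finite (MulAction.stabilizer G x) :=
  htf.finite_of_forall_isOfFinOrder fun _ hg => hE.isOfFinOrder_of_smul_eq hx hg

theorem IsProperMinimal.exists_finite_forall_hom_conj [Nonempty E] (hE : IsProperMinimal G E)
    (htf : VirtuallyTorsionFree G) (K : Subgroup G) [Finite K] :
    ∃ N : Set (K → G), N.Finite ∧
      ∀ φ : G →* G, ∃ ν ∈ N, ∃ x : G, ∀ k : K, φ k = x * ν k * x⁻¹ := by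
  obtain ⟨S, hS⟩ := hE.exists_finset_orbit
  have hfin : (⋃ s ∈ S, (MulAction.stabilizer G (endpoint s) : Set G)).Finite :=
    S.finite_toSet.biUnion fun s _ =>
      have := hE.finite_stabilizer_of_isVertex htf (isVertex_endpoint s)
      Set.toFinite _
  refine ⟨_, Set.Finite.pi' fun _ => hfin, fun φ => ?_⟩
  have : Finite (K.map φ) := Set.toFinite (φ '' (K : Set G))
  obtain ⟨x, ⟨a, rfl⟩, hx⟩ := exists_isVertex_forall_smul_eq (E := E) (K.map φ)
  obtain ⟨g, s, hs, rfl⟩ := hS a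
  refine ⟨fun k => g⁻¹ * φ k * g, fun k => Set.mem_biUnion hs ?_, g, fun k => by group⟩
  rw [SetLike.mem_coe, MulAction.mem_stabilizer_iff, mul_smul, mul_smul, smul_endpoint,
    hx _ ⟨k, k.2, rfl⟩, ← smul_endpoint, inv_smul_smul]

end FiniteSubgroup

end TreePocset

/-! ### Generic endomorphisms -/

section IdempotentUltrafilter

variable {G : Type*} [Group G]

/-- A set of endomorphisms is discriminating if for every finite set of nontrivial elements of `G`
it contains an endomorphism which kills none of them. -/
def IsDiscriminating (S : Set (G →* G)) : Prop :=
  ∀ F : Finset G, 1 ∉ F → ∃ φ ∈ S, ∀ f ∈ F, φ f ≠ 1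

/-- An ultrafilter of endomorphisms is a discriminating idempotent if almost none of its members
kills a given nontrivial element, and if it is idempotent for the composition of endomorphisms. -/
structure IsDiscriminatingIdempotent (U : Ultrafilter (G →* G)) : Prop where
  eventually_ne_one : ∀ g : G, g ≠ 1 → ∀ᶠ φ : G →* G in U, φ g ≠ 1
  eventually_comp : ∀ q : (G →* G) → Prop,
    (∀ᶠ φ : G →* G in U, q φ) ↔ ∀ᶠ φ : G →* G in U, ∀ᶠ ψ : G →* G in U, q (ψ.comp φ)

lemma IsDiscriminating.exists_ultrafilter {S : Set (G →* G)} (hS : IsDiscriminating S) :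
    ∃ U : Ultrafilter (G →* G), (∀ g : G, g ≠ 1 → ∀ᶠ φ : G →* G in U, φ g ≠ 1) ∧ S ∈ U := by
  classical
  have hS' : ∀ F : Finset G, ∃ φ ∈ S, ∀ f ∈ F, f ≠ 1 → φ f ≠ 1 := fun F => by
    obtain ⟨φ, hφ, h⟩ := hS (F.erase 1) (F.notMem_erase 1)
    exact ⟨φ, hφ, fun f hf hf1 => h f (Finset.mem_erase.2 ⟨hf1, hf⟩)⟩
  choose φ hφS hφ using hS'
  refine ⟨Ultrafilter.of (Filter.map φ Filter.atTop), fun g hg => Ultrafilter.of_le _ ?_,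
    Ultrafilter.of_le _ (Filter.mem_map.2 (Filter.Eventually.of_forall hφS))⟩
  rw [Filter.mem_map]
  filter_upwards [Filter.eventually_ge_atTop ({g} : Finset G)] with F hF
  exact hφ F g (hF (Finset.mem_singleton_self g)) hg

theorem IsDiscriminating.exists_isDiscriminatingIdempotent {S : Set (G →* G)}
    (hS : IsDiscriminating S) (hcomp : ∀ φ ∈ S, ∀ ψ ∈ S, ψ.comp φ ∈ S) :
    ∃ U : Ultrafilter (G →* G), IsDiscriminatingIdempotent U ∧ S ∈ U := by
  let _ : Semigroup (G →* G) := { mul := fun φ ψ => ψ.comp φ, mul_assoc := fun _ _ _ => rfl }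
  let _ : Semigroup (Ultrafilter (G →* G)) := Ultrafilter.semigroup
  let D : Set (Ultrafilter (G →* G)) :=
    (⋂ g : G, ⋂ _ : g ≠ 1, {U | {φ : G →* G | φ g ≠ 1} ∈ U}) ∩ {U | S ∈ U}
  have mem_D : ∀ U, U ∈ D ↔ (∀ g : G, g ≠ 1 → ∀ᶠ φ : G →* G in U, φ g ≠ 1) ∧ S ∈ U :=
    fun U => and_congr_left' Set.mem_iInter₂
  have hclosed : IsClosed D :=
    (isClosed_biInter fun g _ => ultrafilter_isClosed_basic _).inter (ultrafilter_isClosed_basic _)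
  have hne : D.Nonempty := by
    obtain ⟨U, hU⟩ := hS.exists_ultrafilter
    exact ⟨U, (mem_D U).2 hU⟩
  have hmul : ∀ U ∈ D, ∀ V ∈ D, U * V ∈ D := by
    intro U hU V hV
    rw [mem_D] at hU hV ⊢
    refine ⟨fun g hg => (Ultrafilter.eventually_mul U V fun φ : G →* G => φ g ≠ 1).2 ?_,
      (Ultrafilter.eventually_mul U V (· ∈ S)).2 ?_⟩
    · filter_upwards [hU.1 g hg] with φ hφ using hV.1 _ hφ
    · filter_upwards [hU.2] with φ hφ
      filter_upwards [hV.2] with ψ hψ using hcomp φ hφ ψ hψ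
  obtain ⟨U, hU, hUU⟩ := exists_idempotent_in_compact_subsemigroup
    Ultrafilter.continuous_mul_left D hne hclosed.isCompact hmul
  rw [mem_D] at hU
  refine ⟨U, ⟨hU.1, fun q => ?_⟩, hU.2⟩
  have := Ultrafilter.eventually_mul U U q
  rwa [hUU] at this

/-- The subgroup of elements fixed by almost every endomorphism for the ultrafilter `U`. -/
def eventuallyFixed (U : Ultrafilter (G →* G)) : Subgroup G where
  carrier := {g | ∀ᶠ φ : G →* G in U, φ g = g}
  one_mem' := Filter.Eventually.of_forall fun φ => map_one φ
  mul_mem' hg hh := by filter_upwards [hg, hh] with φ hφg hφh using by rw [map_mul, hφg, hφh]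
  inv_mem' hg := by filter_upwards [hg] with φ hφ using by rw [map_inv, hφ]

variable {U : Ultrafilter (G →* G)} {L : Subgroup G} {g : G}

lemma eventually_forall_apply_eq [Finite L] (hL : L ≤ eventuallyFixed U) :
    ∀ᶠ φ : G →* G in U, ∀ k ∈ L, φ k = k :=
  (Filter.eventually_all_finite (Set.toFinite (L : Set G))).2 fun _ hk => hL hk

namespace IsDiscriminatingIdempotent

variable (hU : IsDiscriminatingIdempotent U)
include hU

lemma eventually_forall_ne_one {S : Set G} (hS : S.Finite) (h1 : 1 ∉ S) :
    ∀ᶠ φ : G →* G in U, ∀ f ∈ S, φ f ≠ 1 :=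
  (Filter.eventually_all_finite hS).2 fun f hf =>
    hU.eventually_ne_one f (ne_of_mem_of_not_mem hf h1)

lemma eventually_injOn [Finite L] : ∀ᶠ φ : G →* G in U, Set.InjOn φ L := by
  have hfin : ((L : Set G) \ {1}).Finite := Set.toFinite _
  filter_upwards [hU.eventually_forall_ne_one hfin (by simp)] with φ hφ k hk l hl heq
  by_contra hne
  refine hφ (k * l⁻¹) ⟨L.mul_mem hk (L.inv_mem hl), fun h => hne (mul_inv_eq_one.1 h)⟩ ?_
  rw [map_mul, map_inv, heq, mul_inv_cancel]

lemma eq_of_eventually_apply_eq {r : G} (h : ∀ᶠ φ : G →* G in U, φ g = r) : r = g := by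
  obtain ⟨φ, hφ, hcomp⟩ := (h.and ((hU.eventually_comp _).1 h)).exists
  by_contra hne
  obtain ⟨ψ, hψ, hψφ, hψne⟩ := (h.and (hcomp.and
    (hU.eventually_ne_one (g⁻¹ * r) fun e => hne (inv_mul_eq_one.1 e).symm))).exists
  rw [MonoidHom.comp_apply, hφ] at hψφ
  exact hψne (by rw [map_mul, map_inv, hψ, hψφ, inv_mul_cancel])

lemma mem_eventuallyFixed_of_finite {S : Set G} (hS : S.Finite)
    (h : ∀ᶠ φ : G →* G in U, φ g ∈ S) : g ∈ eventuallyFixed U := by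
  obtain ⟨r, -, hr⟩ := (Ultrafilter.eventually_exists_mem_iff (P := fun r φ => φ g = r) hS).1
    (h.mono fun φ hφ => ⟨φ g, hφ, rfl⟩)
  have hrg := hU.eq_of_eventually_apply_eq hr
  rwa [hrg] at hr

/-- If `φ` fixes `k` and `g * k * g⁻¹` for all `k ∈ L`, then `g⁻¹ * φ g` centralizes `L`. -/
lemma mem_eventuallyFixed_of_finite_centralizer [Finite L] (hL : L ≤ eventuallyFixed U)
    (hconj : ∀ k ∈ L, g * k * g⁻¹ ∈ eventuallyFixed U)
    (hcent : Finite (Subgroup.centralizer (L : Set G))) : g ∈ eventuallyFixed U := by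
  have hfix : ∀ᶠ φ : G →* G in U, ∀ k ∈ L, φ (g * k * g⁻¹) = g * k * g⁻¹ :=
    (Filter.eventually_all_finite (Set.toFinite (L : Set G))).2 hconj
  refine hU.mem_eventuallyFixed_of_finite
    ((Set.toFinite (Subgroup.centralizer (L : Set G) : Set G)).image (g * ·)) ?_
  filter_upwards [hfix, eventually_forall_apply_eq hL] with φ hφconj hφ
  refine ⟨g⁻¹ * φ g, Subgroup.mem_centralizer_iff.2 fun k hk => ?_, mul_inv_cancel_left g _⟩
  have hφgk : φ g * k = g * k * g⁻¹ * φ g := by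
    rw [← hφconj k hk, map_mul, map_mul, map_inv, hφ k hk, inv_mul_cancel_right]
  rw [mul_assoc, hφgk]
  group

end IsDiscriminatingIdempotent

end IdempotentUltrafilter

namespace TreePocset

open Pointwise

section StronglyCoHopfian

variable {G E : Type*} [Group G] [PartialOrder E] [InvolutiveNeg E] [MulAction G E]
  [TreeAction G E]

lemma stabilizer_le_stabilizer_endpoint (d : E) :
    MulAction.stabilizer G d ≤ MulAction.stabilizer G (endpoint d) := fun k hk => by
  rw [MulAction.mem_stabilizer_iff, smul_endpoint, MulAction.mem_stabilizer_iff.1 hk]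

namespace IsProperMinimal

variable (hE : IsProperMinimal G E)
include hE

lemma exists_card_stabilizer_endpoint_le [Nonempty E] :
    ∃ s : E, ∀ a : E, Nat.card (MulAction.stabilizer G (endpoint a)) ≤
      Nat.card (MulAction.stabilizer G (endpoint s)) := by
  obtain ⟨S, hS⟩ := hE.exists_finset_orbit
  obtain ⟨e⟩ := ‹Nonempty E›
  obtain ⟨-, s₀, hs₀, -⟩ := hS e
  obtain ⟨s, -, hmax⟩ :=
    S.exists_max_image (fun s => Nat.card (MulAction.stabilizer G (endpoint s))) ⟨s₀, hs₀⟩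
  refine ⟨s, fun a => ?_⟩
  obtain ⟨g, t, ht, rfl⟩ := hS a
  have horbit : MulAction.orbitRel G (Set E) (g • endpoint t) (endpoint t) :=
    MulAction.orbitRel_apply.2 ⟨g, rfl⟩
  rw [← smul_endpoint,
    Nat.card_congr (MulAction.stabilizerEquivStabilizerOfOrbitRel horbit).toEquiv]
  exact hmax t ht

variable [TreePocset E] (htf : VirtuallyTorsionFree G) {U : Ultrafilter (G →* G)}
include htf

lemma eventually_eventually_conj [Nonempty E] (U : Ultrafilter (G →* G)) (K : Subgroup G)
    [Finite K] : ∀ᶠ φ : G →* G in U, ∀ᶠ ψ : G →* G in U, ∃ z : G, ∀ k ∈ K,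
      ψ k = z * φ k * z⁻¹ := by
  obtain ⟨N, hN, hconj⟩ := hE.exists_finite_forall_hom_conj htf K
  obtain ⟨ν, -, hν⟩ := (Ultrafilter.eventually_exists_mem_iff (f := U) hN
    (P := fun ν φ => ∃ x : G, ∀ k : K, φ k = x * ν k * x⁻¹)).1 (Filter.Eventually.of_forall hconj)
  filter_upwards [hν] with φ ⟨x, hx⟩
  filter_upwards [hν] with ψ ⟨y, hy⟩
  refine ⟨y * x⁻¹, fun k hk => ?_⟩
  rw [hy ⟨k, hk⟩, hx ⟨k, hk⟩]
  group

variable (hU : IsDiscriminatingIdempotent U)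
include hU

/-- A generic `φ` maps a vertex stabilizer `K` of maximal order onto a vertex stabilizer, and by
idempotence a generic `ψ` restricts to a conjugation on `φ K`. -/
lemma exists_eventually_conj_on_stabilizer [Nonempty E] :
    ∃ a : E, ∀ᶠ ψ : G →* G in U, ∃ z : G, ∀ g ∈ MulAction.stabilizer G (endpoint a),
      ψ g = z * g * z⁻¹ := by
  obtain ⟨s, hs⟩ := hE.exists_card_stabilizer_endpoint_le
  set K := MulAction.stabilizer G (endpoint s)
  have : Finite K := hE.finite_stabilizer_of_isVertex htf (isVertex_endpoint s)
  obtain ⟨φ₀, hφ₀⟩ := (hE.eventually_eventually_conj htf U K).exists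
  obtain ⟨φ, ⟨x, hx⟩, hcomp, hinj⟩ :=
    (hφ₀.and (((hU.eventually_comp _).1 hφ₀).and (hU.eventually_injOn (L := K)))).exists
  have : Finite (K.map φ) := Set.toFinite (φ '' (K : Set G))
  obtain ⟨v, ⟨a, rfl⟩, hv⟩ := exists_isVertex_forall_smul_eq (E := E) (K.map φ)
  have : Finite (MulAction.stabilizer G (endpoint a)) :=
    hE.finite_stabilizer_of_isVertex htf (isVertex_endpoint a)
  have hcard : Nat.card (K.map φ) = Nat.card K := Nat.card_image_of_injOn hinj
  have hmap : K.map φ = MulAction.stabilizer G (endpoint a) :=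
    Subgroup.eq_of_le_of_card_ge hv (hcard ▸ hs a)
  refine ⟨a, ?_⟩
  filter_upwards [hcomp] with ψ ⟨y, hy⟩
  refine ⟨y * x⁻¹, fun g hg => ?_⟩
  obtain ⟨k, hk, rfl⟩ := hmap.ge hg
  rw [← MonoidHom.comp_apply, hy k hk, hx k hk]
  group

lemma le_eventuallyFixed_of_finite_centralizer [Nonempty E] {K L : Subgroup G} [Finite K]
    (hLK : L ≤ K) (hL : L ≤ eventuallyFixed U)
    (hcent : Finite (Subgroup.centralizer (L : Set G))) : K ≤ eventuallyFixed U := by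
  intro g hg
  have : Finite L := Set.Finite.subset (Set.toFinite (K : Set G)) hLK
  have hfix := eventually_forall_apply_eq hL
  obtain ⟨φ, hφ, hconj⟩ := (hfix.and (hE.eventually_eventually_conj htf U K)).exists
  refine hU.mem_eventuallyFixed_of_finite
    ((Set.toFinite (Subgroup.centralizer (L : Set G) : Set G)).image fun z => z * φ g * z⁻¹) ?_
  filter_upwards [hfix, hconj] with ψ hψ ⟨z, hz⟩
  refine ⟨z, Subgroup.mem_centralizer_iff.2 fun k hk => ?_, (hz g hg).symm⟩
  have hzk := hz k (hLK hk)
  rw [hψ k hk, hφ k hk] at hzk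
  exact eq_mul_inv_iff_mul_eq.1 hzk

variable (hcent : ∀ a : E, Finite (Subgroup.centralizer (MulAction.stabilizer G a : Set G)))
include hcent

lemma stabilizer_le_eventuallyFixed [Nonempty E] {a : E}
    (ha : MulAction.stabilizer G (endpoint a) ≤ eventuallyFixed U) {x : Set E} (hx : IsVertex x) :
    MulAction.stabilizer G x ≤ eventuallyFixed U := by
  refine (isOrientation_endpoint a).path_induction hx.isOrientation
    ((isVertex_endpoint a).finite_sdiff hx)
    (fun x => MulAction.stabilizer G x ≤ eventuallyFixed U) ha fun d _ _ hd => ?_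
  have := hE.finite_stabilizer_of_isVertex htf (isVertex_endpoint d)
  refine hE.le_eventuallyFixed_of_finite_centralizer htf hU (stabilizer_le_stabilizer_endpoint d)
    (le_trans ?_ hd) (hcent d)
  rw [← stabilizer_neg]
  exact stabilizer_le_stabilizer_endpoint (-d)

lemma eventuallyFixed_eq_top [Nonempty E] {a : E}
    (ha : MulAction.stabilizer G (endpoint a) ≤ eventuallyFixed U) : eventuallyFixed U = ⊤ := by
  refine (Subgroup.eq_top_iff' _).2 fun g => ?_
  have := hE.finite_stabilizer a
  refine hU.mem_eventuallyFixed_of_finite_centralizer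
    ((stabilizer_le_stabilizer_endpoint a).trans ha) (fun k hk => ?_) (hcent a)
  refine hE.stabilizer_le_eventuallyFixed htf hU hcent ha ((isVertex_endpoint a).smul g) ?_
  rw [MulAction.mem_stabilizer_iff, smul_smul, inv_mul_cancel_right, mul_smul,
    stabilizer_le_stabilizer_endpoint a hk]

end IsProperMinimal

variable [TreePocset E]

lemma IsProperMinimal.exists_isDiscriminating_fixing [Nonempty E] (hE : IsProperMinimal G E)
    (htf : VirtuallyTorsionFree G) (hd : IsDiscriminating {φ : G →* G | ¬Function.Injective φ}) :
    ∃ a : E, IsDiscriminating {φ : G →* G | ¬Function.Injective φ ∧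
      ∀ g ∈ MulAction.stabilizer G (endpoint a), φ g = g} := by
  obtain ⟨U, hU, hUinj⟩ := hd.exists_isDiscriminatingIdempotent
    fun φ hφ ψ _ hψφ => hφ (Function.Injective.of_comp (f := ψ) hψφ)
  obtain ⟨a, ha⟩ := hE.exists_eventually_conj_on_stabilizer htf hU
  refine ⟨a, fun F hF => ?_⟩
  obtain ⟨ψ, ⟨z, hz⟩, hψF, hψ⟩ := (ha.and
    ((hU.eventually_forall_ne_one F.finite_toSet hF).and hUinj)).exists
  refine ⟨(MulAut.conj z⁻¹).toMonoidHom.comp ψ, ⟨fun hinj => hψ ?_, fun g hg => ?_⟩,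
    fun f hf => (map_ne_one_iff _ (MulAut.conj z⁻¹).injective).2 (hψF f hf)⟩
  · exact Function.Injective.of_comp (f := MulAut.conj z⁻¹) hinj
  · rw [MonoidHom.comp_apply, hz g hg, MulEquiv.coe_toMonoidHom, MulAut.conj_apply]
    group

theorem IsProperMinimal.not_isDiscriminating [Nonempty E] (hE : IsProperMinimal G E)
    (htf : VirtuallyTorsionFree G) (hfg : Group.FG G)
    (hcent : ∀ a : E, Finite (Subgroup.centralizer (MulAction.stabilizer G a : Set G))) :
    ¬IsDiscriminating {φ : G →* G | ¬Function.Injective φ} := by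
  intro hd
  obtain ⟨a, ha⟩ := hE.exists_isDiscriminating_fixing htf hd
  obtain ⟨U, hU, hUa⟩ := ha.exists_isDiscriminatingIdempotent fun φ hφ ψ hψ =>
    ⟨fun hψφ => hφ.1 (Function.Injective.of_comp (f := ψ) hψφ), fun g hg => by
      rw [MonoidHom.comp_apply, hφ.2 g hg, hψ.2 g hg]⟩
  have htop := hE.eventuallyFixed_eq_top htf hU hcent fun g hg =>
    Filter.mem_of_superset hUa fun φ hφ => hφ.2 g hg
  obtain ⟨S, hS⟩ := hfg.1
  have hfix : ∀ᶠ φ : G →* G in U, ∀ g ∈ (S : Set G), φ g = g :=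
    (Filter.eventually_all_finite S.finite_toSet).2 fun g _ => htop.ge (Subgroup.mem_top g)
  obtain ⟨φ, hφS, hφ, -⟩ := (hfix.and hUa).exists
  have hφid : φ = MonoidHom.id G := MonoidHom.eq_of_eqOn_dense hS hφS
  exact hφ (hφid ▸ Function.injective_id)

theorem IsProperMinimal.stronglyCoHopfian (hE : IsProperMinimal G E)
    (htf : VirtuallyTorsionFree G) (hfg : Group.FG G) (hco : CoHopfian G) (hout : OutFinite G) :
    StronglyCoHopfian G := by
  classical
  obtain ⟨F, hF, hinj⟩ : ∃ F : Finset G, 1 ∉ F ∧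
      ∀ φ : G →* G, (∀ f ∈ F, φ f ≠ 1) → Function.Injective φ := by
    rcases finite_or_infinite G with hfin | hinf
    · have := Fintype.ofFinite G
      refine ⟨Finset.univ.erase 1, Finset.notMem_erase 1 _, fun φ hφ => ?_⟩
      refine (injective_iff_map_eq_one φ).2 fun g hg => by_contra fun hne => ?_
      exact hφ g (Finset.mem_erase.2 ⟨hne, Finset.mem_univ g⟩) hg
    · obtain ⟨h, hh⟩ : ∃ h : G, ¬IsOfFinOrder h := by
        by_contra! hall
        have := htf.finite_of_forall_isOfFinOrder (K := ⊤) fun k _ => hall k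
        exact hinf.not_finite (Finite.of_equiv _ Subgroup.topEquiv.toEquiv)
      obtain ⟨b, -⟩ := hE.axis_nonempty hh
      have : Nonempty E := ⟨b⟩
      have hnot := hE.not_isDiscriminating htf hfg (finite_centralizer_stabilizer hE htf hco hout)
      simp only [IsDiscriminating, Set.mem_ofPred_eq] at hnot
      push Not at hnot
      obtain ⟨F, hF, h⟩ := hnot
      refine ⟨F, hF, fun φ hφ => by_contra fun hn => ?_⟩
      obtain ⟨f, hf, hφf⟩ := h φ hn
      exact hφ f hf hφf
  exact ⟨F, hF, fun φ hφ => ⟨hinj φ hφ, hco φ (hinj φ hφ)⟩⟩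

end StronglyCoHopfian

end TreePocset

namespace GroupCut

open Filter Pointwise

/-! ### Cuts of a group -/

section Cut

variable {G : Type*} [Group G] {C D : Set G} {h : G}

/-- A cut of a group: a subset `C` which is almost invariant, in the sense that `C` and each of its
right translates have finite symmetric difference. -/
def IsCut (C : Set G) : Prop := ∀ y : G, ∀ᶠ g in cofinite, (g ∈ C ↔ g * y ∈ C)

lemma isCut_of_closure_eq_top {S : Set G} (hS : Subgroup.closure S = ⊤)
    (hC : ∀ y ∈ S, ∀ᶠ g in cofinite, (g ∈ C ↔ g * y ∈ C)) : IsCut C := by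
  intro y
  have hy : y ∈ Subgroup.closure S := hS ▸ Subgroup.mem_top y
  induction hy using Subgroup.closure_induction with
  | mem y hy => exact hC y hy
  | one => simp
  | mul a b _ _ ha hb =>
    filter_upwards [ha, (mul_left_injective a).tendsto_cofinite.eventually hb] with g h₁ h₂
    rw [h₁, h₂, mul_assoc]
  | inv a _ ha =>
    filter_upwards [(mul_left_injective a⁻¹).tendsto_cofinite.eventually ha] with g h₁
    rw [h₁, inv_mul_cancel_right]

lemma IsCut.compl (hC : IsCut C) : IsCut Cᶜ := fun y => (hC y).mono fun _ => not_congr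

lemma IsCut.inter (hC : IsCut C) (hD : IsCut D) : IsCut (C ∩ D) := fun y =>
  ((hC y).and (hD y)).mono fun _ hg => and_congr hg.1 hg.2

lemma IsCut.smul (hC : IsCut C) (x : G) : IsCut (x • C) := fun y =>
  ((mul_right_injective x⁻¹).tendsto_cofinite.eventually (hC y)).mono fun g hg => by
    simpa only [Set.mem_smul_set_iff_inv_smul_mem, smul_eq_mul, mul_assoc] using hg

lemma not_isOfFinOrder_pow {k : ℕ} (hk : 1 ≤ k) (hh : ¬IsOfFinOrder h) :
    ¬IsOfFinOrder (h ^ k) := by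
  rw [isOfFinOrder_pow, not_or]
  exact ⟨hh, by omega⟩

lemma not_isOfFinOrder_inv (hh : ¬IsOfFinOrder h) : ¬IsOfFinOrder h⁻¹ := by
  rwa [isOfFinOrder_inv_iff]

lemma isOfFinOrder_conj (g : G) : IsOfFinOrder (g * h * g⁻¹) ↔ IsOfFinOrder h := by
  simpa using (MulAut.conj g).injective.isOfFinOrder_iff
    (f := (MulAut.conj g).toMonoidHom) (x := h)

/-- The end `h ^ ∞` of the group lies in the cut `C`. -/
def EndIn (h : G) (C : Set G) : Prop := ∀ᶠ n : ℕ in atTop, h ^ n ∈ C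

lemma tendsto_pow_cofinite (hh : ¬IsOfFinOrder h) :
    Tendsto (fun n : ℕ => h ^ n) atTop cofinite := by
  rw [← Nat.cofinite_eq_atTop]
  exact (injective_pow_iff_not_isOfFinOrder.2 hh).tendsto_cofinite

lemma EndIn.not_compl (hC : EndIn h C) : ¬EndIn h Cᶜ := fun hC' =>
  let ⟨_, hn, hn'⟩ := (hC.and hC').exists
  hn' hn

lemma endIn_inter : EndIn h (C ∩ D) ↔ EndIn h C ∧ EndIn h D := eventually_and

lemma EndIn.mono (hC : EndIn h C) (hCD : C ⊆ D) : EndIn h D := Eventually.mono hC fun _ hn => hCD hn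

lemma IsCut.endIn_or_endIn_compl (hC : IsCut C) (hh : ¬IsOfFinOrder h) :
    EndIn h C ∨ EndIn h Cᶜ := by
  obtain ⟨N, hN⟩ := eventually_atTop.1 ((tendsto_pow_cofinite hh).eventually (hC h))
  have mem_iff : ∀ n ≥ N, (h ^ N ∈ C ↔ h ^ n ∈ C) := by
    intro n hn
    induction n, hn using Nat.le_induction with
    | base => rfl
    | succ n hn ih => rw [ih, hN n hn, pow_succ]
  by_cases hc : h ^ N ∈ C
  · exact Or.inl (eventually_atTop.2 ⟨N, fun n hn => (mem_iff n hn).1 hc⟩)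
  · exact Or.inr (eventually_atTop.2 ⟨N, fun n hn => (not_congr (mem_iff n hn)).1 hc⟩)

lemma IsCut.endIn_compl (hC : IsCut C) (hh : ¬IsOfFinOrder h) : EndIn h Cᶜ ↔ ¬EndIn h C :=
  ⟨fun h₁ h₂ => h₂.not_compl h₁, (hC.endIn_or_endIn_compl hh).resolve_left⟩

lemma IsCut.eventually_pow_mul_mem (hC : IsCut C) (hh : ¬IsOfFinOrder h) (y : G) :
    (∀ᶠ n : ℕ in atTop, h ^ n * y ∈ C) ↔ EndIn h C :=
  eventually_congr (((tendsto_pow_cofinite hh).eventually (hC y)).mono fun _ => Iff.symm)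

lemma IsCut.endIn_conj_smul (hC : IsCut C) (hh : ¬IsOfFinOrder h) (g : G) :
    EndIn (g * h * g⁻¹) (g • C) ↔ EndIn h C := by
  rw [← hC.eventually_pow_mul_mem hh g⁻¹]
  refine eventually_congr (Eventually.of_forall fun n => ?_)
  rw [conj_pow, Set.mem_smul_set_iff_inv_smul_mem, smul_eq_mul, mul_assoc, inv_mul_cancel_left]

lemma EndIn.pow (hC : EndIn h C) {k : ℕ} (hk : 1 ≤ k) : EndIn (h ^ k) C := by
  simpa only [EndIn, pow_mul, id] using
    (tendsto_id.const_mul_atTop' (show 0 < k by omega)).eventually hC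

lemma IsCut.endIn_pow (hC : IsCut C) (hh : ¬IsOfFinOrder h) {k : ℕ} (hk : 1 ≤ k) :
    EndIn (h ^ k) C ↔ EndIn h C :=
  ⟨fun h₁ => (hC.endIn_or_endIn_compl hh).resolve_right fun h₂ => h₁.not_compl (h₂.pow hk),
    fun h₁ => h₁.pow hk⟩

/-- The cut `C` separates the two ends `h ^ ∞` and `h ^ (-∞)` of the group. -/
def Separates (C : Set G) (h : G) : Prop := ¬(EndIn h C ↔ EndIn h⁻¹ C)

lemma IsCut.separates_conj (hC : IsCut C) (hh : ¬IsOfFinOrder h) (g : G) :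
    Separates (g • C) (g * h * g⁻¹) ↔ Separates C h := by
  rw [Separates, hC.endIn_conj_smul hh, conj_inv, hC.endIn_conj_smul (not_isOfFinOrder_inv hh),
    Separates]

lemma IsCut.separates_pow (hC : IsCut C) (hh : ¬IsOfFinOrder h) {k : ℕ} (hk : 1 ≤ k) :
    Separates C (h ^ k) ↔ Separates C h := by
  rw [Separates, hC.endIn_pow hh hk, ← inv_pow, hC.endIn_pow (not_isOfFinOrder_inv hh) hk,
    Separates]

lemma IsCut.separates_compl (hC : IsCut C) (hh : ¬IsOfFinOrder h) :
    Separates Cᶜ h ↔ Separates C h := by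
  rw [Separates, hC.endIn_compl hh, hC.endIn_compl (not_isOfFinOrder_inv hh), not_iff_not,
    Separates]

lemma separates_inv : Separates C h⁻¹ ↔ Separates C h := by
  rw [Separates, inv_inv, Separates, iff_comm (a := EndIn h C)]

lemma IsCut.endIn_of_smul_subset (hC : IsCut C) (hh : ¬IsOfFinOrder h) (hne : C.Nonempty)
    (hsub : h • C ⊆ C) : EndIn h C := by
  obtain ⟨x, hx⟩ := hne
  rw [← hC.eventually_pow_mul_mem hh x]
  refine Eventually.of_forall fun n => ?_
  induction n with
  | zero => simpa using hx
  | succ n ih =>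
    rw [pow_succ', mul_assoc]
    exact hsub (Set.smul_mem_smul_set ih)

lemma IsCut.separates_of_smul_subset (hC : IsCut C) (hh : ¬IsOfFinOrder h) (hne : C.Nonempty)
    (hne' : Cᶜ.Nonempty) (hsub : h • C ⊆ C) : Separates C h := by
  have hsub' : h⁻¹ • Cᶜ ⊆ Cᶜ := by
    rwa [Set.smul_set_compl, Set.compl_subset_compl, Set.subset_smul_set_iff, inv_inv]
  intro hiff
  exact (hiff.1 (hC.endIn_of_smul_subset hh hne hsub)).not_compl
    (hC.compl.endIn_of_smul_subset (not_isOfFinOrder_inv hh) hne' hsub')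

end Cut

section Weight

variable {G ι : Type*} [Group G] {s : ι → G} {C D L : Set G} {g h x y : G} {M : ℕ}

/-- The edge boundary of a set `C` of vertices of the Cayley graph with respect to the family `s`,
where the pair `(g, i)` encodes the edge from `g` to `g * s i`. -/
def boundary (s : ι → G) (C : Set G) : Set (G × ι) := {e | ¬(e.1 ∈ C ↔ e.1 * s e.2 ∈ C)}

/-- The number of edges of the Cayley graph in the boundary of `C` (`0` if there are infinitely
many, which does not happen for a cut of a group generated by a finite family). -/
noncomputable def weight (s : ι → G) (C : Set G) : ℕ := (boundary s C).ncard

lemma mem_boundary {e : G × ι} : e ∈ boundary s C ↔ ¬(e.1 ∈ C ↔ e.1 * s e.2 ∈ C) := Iff.rfl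

lemma IsCut.finite_boundary [Finite ι] (hC : IsCut C) : (boundary s C).Finite := by
  refine (Set.finite_iUnion fun i => (Filter.eventually_cofinite.1 (hC (s i))).image
    fun g => (g, i)).subset ?_
  rintro ⟨g, i⟩ h
  exact Set.mem_iUnion.2 ⟨i, g, h, rfl⟩

lemma isCut_of_finite_boundary (hs : Subgroup.closure (Set.range s) = ⊤)
    (hC : (boundary s C).Finite) : IsCut C := by
  refine isCut_of_closure_eq_top hs ?_
  rintro _ ⟨i, rfl⟩
  exact hC.preimage (Prod.mk_left_injective i).injOn

lemma boundary_compl (s : ι → G) (C : Set G) : boundary s Cᶜ = boundary s C :=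
  Set.ext fun _ => not_congr not_iff_not

lemma weight_compl (s : ι → G) (C : Set G) : weight s Cᶜ = weight s C := by
  rw [weight, boundary_compl, weight]

lemma boundary_smul (s : ι → G) (g : G) (C : Set G) :
    boundary s (g • C) = Prod.map (g⁻¹ * ·) id ⁻¹' boundary s C := by
  ext ⟨x, i⟩
  simp only [mem_boundary, Set.mem_preimage, Prod.map, Set.mem_smul_set_iff_inv_smul_mem,
    smul_eq_mul, mul_assoc, id]

lemma weight_smul (s : ι → G) (g : G) (C : Set G) : weight s (g • C) = weight s C := by
  rw [weight, boundary_smul, weight]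
  exact Set.ncard_preimage_of_injective_subset_range
    ((mul_right_injective g⁻¹).prodMap Function.injective_id)
    fun e _ => ⟨(g * e.1, e.2), by simp⟩

lemma IsCut.weight_inter_add_weight_inter_compl_le [Finite ι] (hC : IsCut C) (hD : IsCut D) :
    weight s (C ∩ D) + weight s (Cᶜ ∩ Dᶜ) ≤ weight s C + weight s D := by
  have finC := hC.finite_boundary (s := s)
  have finD := hD.finite_boundary (s := s)
  unfold weight
  rw [← Set.ncard_union_add_ncard_inter _ _ finC finD, ← Set.ncard_union_add_ncard_inter _ _
    (hC.inter hD).finite_boundary (hC.compl.inter hD.compl).finite_boundary]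
  refine add_le_add (Set.ncard_le_ncard ?_ (finC.union finD))
    (Set.ncard_le_ncard ?_ (finC.inter_of_left _))
  all_goals
    intro e he
    simp only [Set.mem_union, mem_boundary, Set.mem_inter_iff, Set.mem_compl_iff] at he ⊢
    tauto

lemma eq_empty_or_eq_univ_of_boundary_eq_empty (hs : Subgroup.closure (Set.range s) = ⊤)
    (hC : boundary s C = ∅) : C = ∅ ∨ C = Set.univ := by
  have mem_iff : ∀ y g : G, g ∈ C ↔ g * y ∈ C := by
    intro y
    have hy : y ∈ Subgroup.closure (Set.range s) := hs ▸ Subgroup.mem_top y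
    induction hy using Subgroup.closure_induction with
    | mem y hy =>
      obtain ⟨i, rfl⟩ := hy
      exact fun g => not_not.1 (Set.eq_empty_iff_forall_notMem.1 hC (g, i))
    | one => simp
    | mul a b _ _ ha hb => intro g; rw [ha, hb, mul_assoc]
    | inv a _ ha => intro g; rw [ha (g * a⁻¹), inv_mul_cancel_right]
  refine C.eq_empty_or_nonempty.imp_right fun ⟨x, hx⟩ => Set.eq_univ_of_forall fun y => ?_
  simpa using (mem_iff (x⁻¹ * y) x).1 hx

lemma IsCut.eq_empty_or_eq_univ [Finite ι] (hC : IsCut C)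
    (hs : Subgroup.closure (Set.range s) = ⊤) (hw : weight s C = 0) : C = ∅ ∨ C = Set.univ :=
  eq_empty_or_eq_univ_of_boundary_eq_empty hs ((Set.ncard_eq_zero hC.finite_boundary).1 hw)

/-- The set `C` spans a connected subgraph of the Cayley graph. -/
def IsConn (s : ι → G) (C : Set G) : Prop :=
  ∀ D ⊆ C, D.Nonempty → (∀ g i, g ∈ C → g * s i ∈ C → (g ∈ D ↔ g * s i ∈ D)) → D = C

/-- The cut `C` separates the two ends of the infinite-order element `h`, with the smallest
possible weight. -/
structure IsMinCut (s : ι → G) (h : G) (C : Set G) : Prop where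
  not_isOfFinOrder : ¬IsOfFinOrder h
  isCut : IsCut C
  separates : Separates C h
  weight_le : ∀ D, IsCut D → Separates D h → weight s C ≤ weight s D

lemma IsMinCut.compl (hC : IsMinCut s h C) : IsMinCut s h Cᶜ where
  not_isOfFinOrder := hC.not_isOfFinOrder
  isCut := hC.isCut.compl
  separates := (hC.isCut.separates_compl hC.not_isOfFinOrder).2 hC.separates
  weight_le := by simpa only [weight_compl] using hC.weight_le

lemma IsCut.separates_inv_smul (hD : IsCut D) (hh : ¬IsOfFinOrder h)
    (hDh : Separates D (g * h * g⁻¹)) : Separates (g⁻¹ • D) h := by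
  rw [← (hD.smul g⁻¹).separates_conj hh g, smul_inv_smul]
  exact hDh

lemma IsMinCut.smul (hC : IsMinCut s h C) (g : G) : IsMinCut s (g * h * g⁻¹) (g • C) where
  not_isOfFinOrder := (isOfFinOrder_conj g).not.2 hC.not_isOfFinOrder
  isCut := hC.isCut.smul g
  separates := (hC.isCut.separates_conj hC.not_isOfFinOrder g).2 hC.separates
  weight_le D hD hDh := by
    rw [weight_smul, ← weight_smul s g⁻¹ D]
    exact hC.weight_le _ (hD.smul _) (hD.separates_inv_smul hC.not_isOfFinOrder hDh)

lemma IsCut.endIn_iff_of_subset (hD : IsCut D) (hh : ¬IsOfFinOrder h) (hDC : D ⊆ C) :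
    EndIn h C ↔ EndIn h D ∨ EndIn h (C ∩ Dᶜ) := by
  refine ⟨fun hC => ?_, Or.rec (·.mono hDC) (·.mono Set.inter_subset_left)⟩
  exact (hD.endIn_or_endIn_compl hh).imp_right fun hD' => endIn_inter.2 ⟨hC, hD'⟩

lemma IsCut.separates_or_of_subset (hD : IsCut D) (hh : ¬IsOfFinOrder h) (hDC : D ⊆ C)
    (hC : Separates C h) : Separates D h ∨ Separates (C ∩ Dᶜ) h := by
  rw [Separates, hD.endIn_iff_of_subset hh hDC,
    hD.endIn_iff_of_subset (not_isOfFinOrder_inv hh) hDC] at hC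
  unfold Separates
  tauto

lemma boundary_union_subset_of_separation (hDC : D ⊆ C)
    (hD : ∀ g i, g ∈ C → g * s i ∈ C → (g ∈ D ↔ g * s i ∈ D)) :
    boundary s D ∪ boundary s (C ∩ Dᶜ) ⊆ boundary s C ∧
      Disjoint (boundary s D) (boundary s (C ∩ Dᶜ)) := by
  rw [Set.disjoint_left]
  constructor
  all_goals
    rintro ⟨g, i⟩
    have := hD g i
    have := @hDC g
    have := @hDC (g * s i)
    simp only [Set.mem_union, mem_boundary, Set.mem_inter_iff, Set.mem_compl_iff]
    tauto

lemma IsMinCut.isConn [Finite ι] (hs : Subgroup.closure (Set.range s) = ⊤)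
    (hC : IsMinCut s h C) : IsConn s C := by
  intro D hDC hne hD
  obtain ⟨hsub, hdisj⟩ := boundary_union_subset_of_separation hDC hD
  have finC := hC.isCut.finite_boundary (s := s)
  have finD := finC.subset (Set.subset_union_left.trans hsub)
  have cutD : IsCut D := isCut_of_finite_boundary hs finD
  have cutD' : IsCut (C ∩ Dᶜ) := hC.isCut.inter cutD.compl
  have weight_add_le : weight s D + weight s (C ∩ Dᶜ) ≤ weight s C := by
    unfold weight
    rw [← Set.ncard_union_eq hdisj finD cutD'.finite_boundary]
    exact Set.ncard_le_ncard hsub finC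
  rcases cutD.separates_or_of_subset hC.not_isOfFinOrder hDC hC.separates with hsep | hsep
  · have := hC.weight_le _ cutD hsep
    rcases cutD'.eq_empty_or_eq_univ hs (by omega) with hD' | hD'
    · exact hDC.antisymm (Set.sdiff_eq_empty.1 hD')
    · obtain ⟨d, hd⟩ := hne
      exact absurd hd (hD'.ge (Set.mem_univ d)).2
  · have := hC.weight_le _ cutD' hsep
    rcases cutD.eq_empty_or_eq_univ hs (by omega) with hD' | hD'
    · exact absurd hD' hne.ne_empty
    · exact hDC.antisymm (hD' ▸ Set.subset_univ C)

lemma exists_ultrafilter_limit {α : Type*} {F : Set (Set α)} (hF : F.Infinite) :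
    ∃ (U : Ultrafilter (Set α)) (L : Set α), (∀ᶠ C : Set α in U, C ∈ F) ∧
      (∀ᶠ C : Set α in U, C ≠ L) ∧
      ∀ a, ∀ᶠ C : Set α in U, (a ∈ C ↔ a ∈ L) := by
  have := hF.cofinite_inf_principal_neBot
  let U := Ultrafilter.of (Filter.cofinite ⊓ Filter.principal F)
  refine ⟨U, {a | ∀ᶠ C : Set α in U, a ∈ C},
    Ultrafilter.of_le _ (Filter.mem_inf_of_right (Filter.mem_principal_self F)),
    Ultrafilter.of_le _ (Filter.mem_inf_of_left (Set.finite_singleton _).compl_mem_cofinite),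
    fun a => ?_⟩
  by_cases ha : ∀ᶠ C : Set α in U, a ∈ C
  · exact ha.mono fun C hC => iff_of_true hC ha
  · exact (Ultrafilter.eventually_not.2 ha).mono fun C hC => iff_of_false hC ha

lemma finite_boundary_of_limit {U : Ultrafilter (Set G)}
    (hU : ∀ᶠ C in U, (boundary s C).Finite ∧ weight s C ≤ M)
    (hL : ∀ e ∈ boundary s L, ∀ᶠ C in U, e ∈ boundary s C) : (boundary s L).Finite := by
  by_contra hinf
  obtain ⟨t, ht, hcard⟩ := Set.Infinite.exists_subset_card_eq hinf (M + 1)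
  have sub : ∀ᶠ C in U, ∀ e ∈ (t : Set (G × ι)), e ∈ boundary s C :=
    (Filter.eventually_all_finite t.finite_toSet).2 fun e he => hL e (ht he)
  obtain ⟨C, htC, hfin, hw⟩ := (sub.and hU).exists
  have := Set.ncard_le_ncard (s := (t : Set (G × ι))) htC hfin
  rw [Set.ncard_coe_finset, hcard] at this
  exact absurd (this.trans hw) (by omega)

lemma IsConn.subset_of_boundary_subset (hC : IsConn s C) (hL : boundary s L ⊆ boundary s C)
    (hxC : x ∈ C) (hxL : x ∈ L) : C ⊆ L := by
  refine Set.inter_eq_left.1 (hC (C ∩ L) Set.inter_subset_left ⟨x, hxC, hxL⟩ fun g i hg hgi => ?_)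
  have := @hL (g, i)
  simp only [mem_boundary] at this
  simp only [Set.mem_inter_iff]
  tauto

/-- The compactness argument: an ultralimit of infinitely many such cuts has a finite boundary, so
it is one of them. -/
lemma finite_setOf_isConn_weight_le (s : ι → G) (M : ℕ) (x y : G) :
    {C : Set G | IsConn s C ∧ IsConn s Cᶜ ∧ (boundary s C).Finite ∧ weight s C ≤ M ∧
      x ∈ C ∧ y ∉ C}.Finite := by
  by_contra hinf
  obtain ⟨U, L, hmem, hne, hlim⟩ := exists_ultrafilter_limit hinf
  have boundary_lim : ∀ e ∈ boundary s L, ∀ᶠ C in U, e ∈ boundary s C := fun e he => by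
    filter_upwards [hlim e.1, hlim (e.1 * s e.2)] with C h₁ h₂
    rwa [mem_boundary, h₁, h₂]
  have finL := finite_boundary_of_limit (M := M)
    (hmem.mono fun C hC => ⟨hC.2.2.1, hC.2.2.2.1⟩) boundary_lim
  obtain ⟨C, hsub, ⟨hC, hC', -, -, hx, hy⟩, hCL, hxL, hyL⟩ :=
    (((Filter.eventually_all_finite finL).2 boundary_lim).and
      (hmem.and (hne.and ((hlim x).and (hlim y))))).exists
  refine hCL ((hC.subset_of_boundary_subset hsub hx (hxL.1 hx)).antisymm ?_)
  refine Set.compl_subset_compl.1 (hC'.subset_of_boundary_subset ?_ hy (mt hyL.2 hy))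
  rwa [boundary_compl, boundary_compl]

end Weight

/-! ### Crossing cuts -/

section Crossing

variable {G : Type*} {C D F : Set G}

/-- The sets `C` and `D` cross: none of their four corners is empty. -/
def Cross (C D : Set G) : Prop :=
  (C ∩ D).Nonempty ∧ (C ∩ Dᶜ).Nonempty ∧ (Cᶜ ∩ D).Nonempty ∧ (Cᶜ ∩ Dᶜ).Nonempty

lemma Cross.symm (h : Cross C D) : Cross D C := by
  obtain ⟨h₁, h₂, h₃, h₄⟩ := h
  refine ⟨?_, ?_, ?_, ?_⟩ <;> rw [Set.inter_comm] <;> assumption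

lemma Cross.compl_right (h : Cross C D) : Cross C Dᶜ := by
  obtain ⟨h₁, h₂, h₃, h₄⟩ := h
  exact ⟨h₂, by rwa [_root_.compl_compl], h₄, by rwa [_root_.compl_compl]⟩

lemma cross_compl_left : Cross Cᶜ D ↔ Cross C D :=
  ⟨fun h => by simpa only [_root_.compl_compl] using h.symm.compl_right.symm,
    fun h => h.symm.compl_right.symm⟩

lemma Cross.smul [Group G] (h : Cross C D) (g : G) : Cross (g • C) (g • D) := by
  obtain ⟨h₁, h₂, h₃, h₄⟩ := h
  simp only [Cross, ← Set.smul_set_compl, ← Set.smul_set_inter]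
  exact ⟨h₁.smul_set, h₂.smul_set, h₃.smul_set, h₄.smul_set⟩

lemma not_cross : ¬Cross C D ↔ C ⊆ D ∨ D ⊆ C ∨ C ⊆ Dᶜ ∨ Cᶜ ⊆ D := by
  have corner : (C ∩ D).Nonempty ↔ ¬C ⊆ Dᶜ := by
    rw [← Set.inter_compl_nonempty_iff, _root_.compl_compl]
  rw [Cross, corner, Set.inter_comm Cᶜ D]
  simp only [Set.inter_compl_nonempty_iff]
  tauto

lemma Cross.of_inter (h : Cross (C ∩ D) F) (hne : (Cᶜ ∩ Dᶜ).Nonempty) :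
    Cross C F ∨ Cross D F := by
  obtain ⟨h₁, h₂, ⟨u, hu, huF⟩, v, hv, hvF⟩ := h
  have hC := Set.inter_subset_left (s := C) (t := D)
  have hD := Set.inter_subset_right (s := C) (t := D)
  obtain ⟨z, hzC, hzD⟩ := hne
  rw [Set.compl_inter] at hu hv
  by_cases hzF : z ∈ F
  · exact hv.imp
      (fun hvC => ⟨h₁.mono (by gcongr), h₂.mono (by gcongr), ⟨z, hzC, hzF⟩, v, hvC, hvF⟩)
      fun hvD => ⟨h₁.mono (by gcongr), h₂.mono (by gcongr), ⟨z, hzD, hzF⟩, v, hvD, hvF⟩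
  · exact hu.imp
      (fun huC => ⟨h₁.mono (by gcongr), h₂.mono (by gcongr), ⟨u, huC, huF⟩, z, hzC, hzF⟩)
      fun huD => ⟨h₁.mono (by gcongr), h₂.mono (by gcongr), ⟨u, huD, huF⟩, z, hzD, hzF⟩

lemma Cross.of_inter_of_compl_inter (h : Cross (C ∩ D) F) (h' : Cross (Cᶜ ∩ Dᶜ) F) :
    Cross C F ∧ Cross D F := by
  constructor
  all_goals
    refine ⟨h.1.mono ?_, h.2.1.mono ?_, h'.1.mono ?_, h'.2.1.mono ?_⟩ <;>
      exact Set.inter_subset_inter_left _ (by simp)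

end Crossing

section Optimal

variable {G ι : Type*} [Group G] {s : ι → G} {C D X : Set G} {g h k : G} {M : ℕ}

/-- The minimal cuts, for all elements of infinite order. -/
def minCuts (s : ι → G) : Set (Set G) := {C | ∃ h, IsMinCut s h C}

lemma compl_mem_minCuts (hC : C ∈ minCuts s) : Cᶜ ∈ minCuts s :=
  let ⟨h, hC⟩ := hC
  ⟨h, hC.compl⟩

lemma smul_mem_minCuts (hC : C ∈ minCuts s) (g : G) : g • C ∈ minCuts s :=
  let ⟨_, hC⟩ := hC
  ⟨_, hC.smul g⟩

/-- The family `s` generates the group, and the two ends of every element of infinite order are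
separated by a cut of weight at most `M`. -/
structure HasBoundedCuts (s : ι → G) (M : ℕ) : Prop where
  closure_eq_top : Subgroup.closure (Set.range s) = ⊤
  exists_isCut : ∀ h : G, ¬IsOfFinOrder h → ∃ C, IsCut C ∧ Separates C h ∧ weight s C ≤ M

/-- The minimal cuts crossing `C`. -/
def crossings (s : ι → G) (C : Set G) : Set (Set G) := {D ∈ minCuts s | Cross C D}

lemma crossings_compl (s : ι → G) (C : Set G) : crossings s Cᶜ = crossings s C := by
  simp only [crossings, cross_compl_left]

lemma crossings_smul (s : ι → G) (g : G) (C : Set G) :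
    crossings s (g • C) = g • crossings s C := by
  ext D
  rw [Set.mem_smul_set_iff_inv_smul_mem]
  constructor
  · rintro ⟨hD, hX⟩
    exact ⟨smul_mem_minCuts hD _, by simpa only [inv_smul_smul] using hX.smul g⁻¹⟩
  · rintro ⟨hD, hX⟩
    exact ⟨by simpa only [smul_inv_smul] using smul_mem_minCuts hD g,
      by simpa only [smul_inv_smul] using hX.smul g⟩

/-- The vertices of the Cayley graph incident to an edge of the boundary of `C`. -/
def boundaryVertices (s : ι → G) (C : Set G) : Set G :=
  (fun e : G × ι => e.1) '' boundary s C ∪ (fun e : G × ι => e.1 * s e.2) '' boundary s C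

lemma IsConn.exists_mem_boundaryVertices (hD : IsConn s D) (hne : (C ∩ D).Nonempty)
    (hDC : ¬D ⊆ C) : ∃ p ∈ boundaryVertices s C, p ∈ D := by
  by_contra! hn
  refine hDC (Set.inter_eq_right.1 (hD (C ∩ D) Set.inter_subset_right hne fun g i hg hgi => ?_))
  have : (g, i) ∉ boundary s C := fun hmem => hn g (Or.inl ⟨_, hmem, rfl⟩) hg
  rw [mem_boundary, not_not] at this
  exact and_congr this (iff_of_true hg hgi)

/-- The cost of a cut: its weight and then, lexicographically, its number of crossings. -/
noncomputable def cost (s : ι → G) (C : Set G) : ℕ ×ₗ ℕ := toLex (weight s C, (crossings s C).ncard)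

lemma cost_compl (s : ι → G) (C : Set G) : cost s Cᶜ = cost s C := by
  rw [cost, weight_compl, crossings_compl, cost]

lemma cost_smul (s : ι → G) (g : G) (C : Set G) : cost s (g • C) = cost s C := by
  rw [cost, weight_smul, crossings_smul, Set.ncard_smul_set, cost]

/-- The cut `C` separates the two ends of the infinite-order element `h`, with the smallest
possible cost. -/
structure IsOptimal (s : ι → G) (h : G) (C : Set G) : Prop where
  not_isOfFinOrder : ¬IsOfFinOrder h
  isCut : IsCut C
  separates : Separates C h
  cost_le : ∀ D, IsCut D → Separates D h → cost s C ≤ cost s D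

lemma IsOptimal.isMinCut (hC : IsOptimal s h C) : IsMinCut s h C where
  not_isOfFinOrder := hC.not_isOfFinOrder
  isCut := hC.isCut
  separates := hC.separates
  weight_le D hD hDh := Prod.Lex.monotone_fst _ _ (hC.cost_le D hD hDh)

lemma IsOptimal.compl (hC : IsOptimal s h C) : IsOptimal s h Cᶜ where
  not_isOfFinOrder := hC.not_isOfFinOrder
  isCut := hC.isCut.compl
  separates := hC.isMinCut.compl.separates
  cost_le := by simpa only [cost_compl] using hC.cost_le

lemma IsOptimal.smul (hC : IsOptimal s h C) (g : G) : IsOptimal s (g * h * g⁻¹) (g • C) where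
  not_isOfFinOrder := (hC.isMinCut.smul g).not_isOfFinOrder
  isCut := hC.isCut.smul g
  separates := (hC.isMinCut.smul g).separates
  cost_le D hD hDh := by
    rw [cost_smul, ← cost_smul s g⁻¹ D]
    exact hC.cost_le _ (hD.smul _) (hD.separates_inv_smul hC.not_isOfFinOrder hDh)

lemma IsOptimal.inv (hC : IsOptimal s h C) : IsOptimal s h⁻¹ C where
  not_isOfFinOrder := not_isOfFinOrder_inv hC.not_isOfFinOrder
  isCut := hC.isCut
  separates := separates_inv.2 hC.separates
  cost_le D hD hDh := hC.cost_le D hD (separates_inv.1 hDh)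

namespace HasBoundedCuts

lemma exists_isOptimal (hs : HasBoundedCuts s M) (hh : ¬IsOfFinOrder h) :
    ∃ C, IsOptimal s h C := by
  have hne : {C | IsCut C ∧ Separates C h}.Nonempty :=
    let ⟨C, hC, hCh, _⟩ := hs.exists_isCut h hh
    ⟨C, hC, hCh⟩
  obtain ⟨hC, hCh⟩ := Function.argminOn_mem (cost s) _ hne
  exact ⟨_, hh, hC, hCh, fun D hD hDh => Function.argminOn_le (cost s)
    {C | IsCut C ∧ Separates C h} (a := D) ⟨hD, hDh⟩⟩

variable [Finite ι]

lemma finite_separating (hs : HasBoundedCuts s M) (x y : G) :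
    {C ∈ minCuts s | x ∈ C ∧ y ∉ C}.Finite := by
  refine (finite_setOf_isConn_weight_le s M x y).subset ?_
  rintro C ⟨⟨h, hC⟩, hx, hy⟩
  obtain ⟨D, hD, hDh, hDM⟩ := hs.exists_isCut h hC.not_isOfFinOrder
  exact ⟨hC.isConn hs.closure_eq_top, hC.compl.isConn hs.closure_eq_top, hC.isCut.finite_boundary,
    (hC.weight_le D hD hDh).trans hDM, hx, hy⟩

lemma exists_mem_boundaryVertices (hs : HasBoundedCuts s M) (hD : D ∈ minCuts s)
    (hX : Cross C D) : ∃ p ∈ boundaryVertices s C, p ∈ D := by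
  obtain ⟨h, hD⟩ := hD
  refine (hD.isConn hs.closure_eq_top).exists_mem_boundaryVertices hX.1 fun hDC => ?_
  obtain ⟨x, hxC, hxD⟩ := hX.2.2.1
  exact hxC (hDC hxD)

/-- A minimal cut crossing `C` separates two of the finitely many vertices in the boundary
of `C`. -/
lemma finite_crossings (hs : HasBoundedCuts s M) (hC : IsCut C) : (crossings s C).Finite := by
  have hfin : (boundaryVertices s C).Finite :=
    (hC.finite_boundary.image _).union (hC.finite_boundary.image _)
  refine (hfin.biUnion fun p _ => hfin.biUnion fun q _ => hs.finite_separating p q).subset ?_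
  rintro D ⟨hD, hX⟩
  obtain ⟨p, hp, hpD⟩ := hs.exists_mem_boundaryVertices hD hX
  obtain ⟨q, hq, hqD⟩ := hs.exists_mem_boundaryVertices (compl_mem_minCuts hD) hX.compl_right
  simp only [Set.mem_iUnion]
  exact ⟨p, hp, q, hq, hD, hpD, hqD⟩

lemma ncard_crossings_add_lt (hs : HasBoundedCuts s M) (hC : C ∈ minCuts s) (hD : IsCut D)
    (hX : Cross C D) :
    (crossings s (C ∩ D)).ncard + (crossings s (Cᶜ ∩ Dᶜ)).ncard <
      (crossings s C).ncard + (crossings s D).ncard := by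
  have cutC : IsCut C := hC.choose_spec.isCut
  have finC := hs.finite_crossings cutC
  have finD := hs.finite_crossings hD
  rw [← Set.ncard_union_add_ncard_inter _ _ finC finD, ← Set.ncard_union_add_ncard_inter _ _
    (hs.finite_crossings (cutC.inter hD)) (hs.finite_crossings (cutC.compl.inter hD.compl))]
  refine add_lt_add_of_lt_of_le (Set.ncard_lt_ncard ?_ (finC.union finD))
    (Set.ncard_le_ncard ?_ (finC.inter_of_left _))
  · rw [Set.ssubset_iff_of_subset]
    · refine ⟨C, Or.inr ⟨hC, hX.symm⟩, ?_⟩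
      rintro (⟨_, _, ⟨x, hx⟩, _⟩ | ⟨_, ⟨x, hx⟩, _⟩)
      · exact hx.2 hx.1.1
      · exact hx.1.1 hx.2
    · rintro F (⟨hF, h⟩ | ⟨hF, h⟩)
      · exact (h.of_inter hX.2.2.2).imp (And.intro hF) (And.intro hF)
      · have := h.of_inter (by simpa only [_root_.compl_compl] using hX.1)
        exact this.imp (fun h => ⟨hF, cross_compl_left.1 h⟩) fun h => ⟨hF, cross_compl_left.1 h⟩
  · rintro F ⟨⟨hF, h⟩, -, h'⟩
    exact (h.of_inter_of_compl_inter h').imp (And.intro hF) (And.intro hF)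

lemma cost_add_lt (hs : HasBoundedCuts s M) (hC : C ∈ minCuts s) (hD : IsCut D)
    (hX : Cross C D) : cost s (C ∩ D) + cost s (Cᶜ ∩ Dᶜ) < cost s C + cost s D :=
  Prod.Lex.toLex_lt_toLex'.2 ⟨hC.choose_spec.isCut.weight_inter_add_weight_inter_compl_le hD,
    fun _ => hs.ncard_crossings_add_lt hC hD hX⟩

end HasBoundedCuts

lemma IsOptimal.cost_le_inter (hC : IsOptimal s h C) (hD : IsCut D) (hhC : EndIn h C)
    (hhD : EndIn h D) : cost s C ≤ cost s (C ∩ D) := by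
  refine hC.cost_le _ (hC.isCut.inter hD) fun hiff => hC.separates ?_
  exact iff_of_true hhC (endIn_inter.1 (hiff.1 (endIn_inter.2 ⟨hhC, hhD⟩))).1

lemma IsOptimal.not_endIn_inv (hC : IsOptimal s h C) (hhC : EndIn h C) : ¬EndIn h⁻¹ C :=
  fun h' => hC.separates (iff_of_true hhC h')

lemma IsOptimal.cost_le_compl_inter (hC : IsOptimal s h C) (hD : IsCut D) (hhC : EndIn h C)
    (hhD : EndIn h⁻¹ D) : cost s C ≤ cost s (Cᶜ ∩ D) := by
  rw [← cost_compl s C]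
  refine hC.inv.compl.cost_le_inter hD ?_ hhD
  exact (hC.isCut.endIn_compl (not_isOfFinOrder_inv hC.not_isOfFinOrder)).2 (hC.not_endIn_inv hhC)

lemma IsOptimal.cost_le_corners (hC : IsOptimal s h C) (hD : IsCut D) (hhC : EndIn h C) :
    (cost s C ≤ cost s (C ∩ D) ∨ cost s C ≤ cost s (C ∩ Dᶜ)) ∧
      (cost s C ≤ cost s (Cᶜ ∩ D) ∨ cost s C ≤ cost s (Cᶜ ∩ Dᶜ)) :=
  ⟨(hD.endIn_or_endIn_compl hC.not_isOfFinOrder).imp (hC.cost_le_inter hD hhC)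
      (hC.cost_le_inter hD.compl hhC),
    (hD.endIn_or_endIn_compl (not_isOfFinOrder_inv hC.not_isOfFinOrder)).imp
      (hC.cost_le_compl_inter hD hhC) (hC.cost_le_compl_inter hD.compl hhC)⟩

lemma IsOptimal.not_cross_of_endIn [Finite ι] (hs : HasBoundedCuts s M) (hC : IsOptimal s h C)
    (hD : IsOptimal s k D) (hhC : EndIn h C) (hkD : EndIn k D) : ¬Cross C D := by
  intro hX
  have diag := hs.cost_add_lt ⟨h, hC.isMinCut⟩ hD.isCut hX
  have antidiag := hs.cost_add_lt ⟨h, hC.isMinCut⟩ hD.isCut.compl hX.compl_right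
  have cornersC := hC.cost_le_corners hD.isCut hhC
  have cornersD := hD.cost_le_corners hC.isCut hkD
  rw [_root_.compl_compl, cost_compl] at antidiag
  rw [Set.inter_comm D, Set.inter_comm D, Set.inter_comm Dᶜ, Set.inter_comm Dᶜ] at cornersD
  grind

lemma IsOptimal.endIn_or_endIn_inv (hC : IsOptimal s h C) : EndIn h C ∨ EndIn h⁻¹ C := by
  by_contra! hn
  exact hC.separates (iff_of_false hn.1 hn.2)

theorem IsOptimal.not_cross [Finite ι] (hs : HasBoundedCuts s M) (hC : IsOptimal s h C)
    (hD : IsOptimal s k D) : ¬Cross C D := by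
  rcases hC.endIn_or_endIn_inv with hhC | hhC <;> rcases hD.endIn_or_endIn_inv with hkD | hkD
  · exact hC.not_cross_of_endIn hs hD hhC hkD
  · exact hC.not_cross_of_endIn hs hD.inv hhC hkD
  · exact hC.inv.not_cross_of_endIn hs hD hhC hkD
  · exact hC.inv.not_cross_of_endIn hs hD.inv hhC hkD

end Optimal

/-! ### The tree of optimal cuts -/

section CutTree

variable {G : Type*} [Group G] {A B C D : Set G} {h : G}

/-- A family of pairwise nested cuts of a group which is the set of half-trees of a tree on which
the group acts properly and cocompactly, without global fixed points for elements of infinite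
order. -/
structure CutTree (G : Type*) [Group G] where
  cuts : Set (Set G)
  nonempty : ∀ C ∈ cuts, C.Nonempty
  compl_mem : ∀ C ∈ cuts, Cᶜ ∈ cuts
  smul_mem : ∀ C ∈ cuts, ∀ g : G, g • C ∈ cuts
  isCut : ∀ C ∈ cuts, IsCut C
  not_cross : ∀ C ∈ cuts, ∀ D ∈ cuts, ¬Cross C D
  finite_separating : ∀ x y : G, {C ∈ cuts | x ∈ C ∧ y ∉ C}.Finite
  finite_stabilizer : ∀ C ∈ cuts, {g : G | g • C = C}.Finite
  exists_finset_orbit : ∃ S : Finset (Set G), ∀ C ∈ cuts, ∃ g : G, ∃ D ∈ S, C = g • D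
  exists_separates : ∀ h : G, ¬IsOfFinOrder h → ∃ C ∈ cuts, Separates C h

lemma Separates.nonempty (hC : Separates C h) : C.Nonempty := by
  rw [Set.nonempty_iff_ne_empty]
  rintro rfl
  exact hC (by simp [EndIn])

section HasBoundedCuts

variable {ι : Type*} {s : ι → G} {M : ℕ}

lemma IsOptimal.boundary_nonempty (hs : HasBoundedCuts s M) (hC : IsOptimal s h C) :
    (boundary s C).Nonempty := by
  rw [Set.nonempty_iff_ne_empty]
  intro hb
  rcases eq_empty_or_eq_univ_of_boundary_eq_empty hs.closure_eq_top hb with hC' | hC'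
  · exact hC.separates.nonempty.ne_empty hC'
  · exact hC.compl.separates.nonempty.ne_empty (Set.compl_empty_iff.2 hC')

variable [Finite ι]

lemma IsCut.finite_setOf_smul_eq (hC : IsCut C) (hb : (boundary s C).Nonempty) :
    {g : G | g • C = C}.Finite := by
  obtain ⟨⟨x, i⟩, he⟩ := hb
  refine ((hC.finite_boundary (s := s)).preimage (f := fun g => (g * x, i)) ?_).subset
    fun g (hg : g • C = C) => ?_
  · exact fun a _ b _ hab => mul_left_injective x (congrArg Prod.fst hab)
  · rw [Set.mem_preimage, ← hg, boundary_smul]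
    simpa using he

lemma HasBoundedCuts.exists_finset_orbit (hs : HasBoundedCuts s M) :
    ∃ S : Finset (Set G), ∀ C ∈ {C | ∃ h, IsOptimal s h C}, ∃ g : G, ∃ D ∈ S, C = g • D := by
  have hfin : (⋃ i, {C ∈ minCuts s | 1 ∈ C ∧ s i ∉ C} ∪ {C ∈ minCuts s | s i ∈ C ∧ 1 ∉ C}).Finite :=
    Set.finite_iUnion fun i => (hs.finite_separating _ _).union (hs.finite_separating _ _)
  refine ⟨hfin.toFinset, fun C ⟨h, hC⟩ => ?_⟩
  obtain ⟨⟨x, i⟩, he⟩ := hC.boundary_nonempty hs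
  refine ⟨x, x⁻¹ • C, ?_, (smul_inv_smul x C).symm⟩
  have hmin : x⁻¹ • C ∈ minCuts s := smul_mem_minCuts ⟨h, hC.isMinCut⟩ _
  rw [mem_boundary] at he
  simp only [Set.Finite.mem_toFinset, Set.mem_iUnion, Set.mem_union, Set.mem_sep_iff, hmin,
    true_and, Set.mem_smul_set_iff_inv_smul_mem, inv_inv, smul_eq_mul, mul_one]
  exact ⟨i, by tauto⟩

/-- The tree of optimal cuts. -/
def HasBoundedCuts.cutTree (hs : HasBoundedCuts s M) : CutTree G where
  cuts := {C | ∃ h, IsOptimal s h C}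
  nonempty := fun _ ⟨_, hC⟩ => hC.separates.nonempty
  compl_mem := fun _ ⟨h, hC⟩ => ⟨h, hC.compl⟩
  smul_mem := fun _ ⟨_, hC⟩ g => ⟨_, hC.smul g⟩
  isCut := fun _ ⟨_, hC⟩ => hC.isCut
  not_cross := fun _ ⟨_, hC⟩ _ ⟨_, hD⟩ => hC.not_cross hs hD
  finite_separating x y := (hs.finite_separating x y).subset
    fun _ ⟨⟨h, hC⟩, hxy⟩ => ⟨⟨h, hC.isMinCut⟩, hxy⟩
  finite_stabilizer := fun _ ⟨_, hC⟩ => hC.isCut.finite_setOf_smul_eq (hC.boundary_nonempty hs)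
  exists_finset_orbit := hs.exists_finset_orbit
  exists_separates h hh :=
    let ⟨C, hC⟩ := hs.exists_isOptimal hh
    ⟨C, ⟨h, hC⟩, hC.separates⟩

end HasBoundedCuts

/-- The translates of a set and of its complement. -/
def cutOrbit (D : Set G) : Set (Set G) := {C | ∃ g : G, C = g • D ∨ C = g • Dᶜ}

lemma compl_mem_cutOrbit (hC : C ∈ cutOrbit D) : Cᶜ ∈ cutOrbit D := by
  obtain ⟨g, rfl | rfl⟩ := hC
  · exact ⟨g, Or.inr (Set.smul_set_compl).symm⟩
  · exact ⟨g, Or.inl (by rw [Set.smul_set_compl, _root_.compl_compl])⟩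

lemma smul_mem_cutOrbit (hC : C ∈ cutOrbit D) (g : G) : g • C ∈ cutOrbit D := by
  obtain ⟨k, rfl | rfl⟩ := hC
  · exact ⟨g * k, Or.inl (mul_smul g k D).symm⟩
  · exact ⟨g * k, Or.inr (mul_smul g k Dᶜ).symm⟩

lemma mem_cutOrbit_of_mem_of_mem (hA : A ∈ cutOrbit D) (hB : B ∈ cutOrbit D) :
    B ∈ cutOrbit A := by
  have hD : D ∈ cutOrbit A := by
    obtain ⟨g, rfl | rfl⟩ := hA
    · exact ⟨g⁻¹, Or.inl (inv_smul_smul g D).symm⟩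
    · exact ⟨g⁻¹, Or.inr (by rw [Set.smul_set_compl, inv_smul_smul, _root_.compl_compl])⟩
  obtain ⟨g, rfl | rfl⟩ := hB
  · exact smul_mem_cutOrbit hD g
  · exact smul_mem_cutOrbit (compl_mem_cutOrbit hD) g

namespace CutTree

/-- No orbit of edges can be collapsed: for every cut `A` there is an element of infinite order
whose ends are only separated by translates of `A` and of its complement. -/
def IsMinimal (T : CutTree G) : Prop :=
  ∀ A ∈ T.cuts, ∃ t : G, ¬IsOfFinOrder t ∧ ∀ B ∈ T.cuts, Separates B t → B ∈ cutOrbit A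

/-- The tree obtained by keeping only the orbits of the cuts in `J`. -/
def restrict (T : CutTree G) (J : Finset (Set G))
    (hJ : ∀ h : G, ¬IsOfFinOrder h → ∃ C ∈ T.cuts, (∃ D ∈ J, C ∈ cutOrbit D) ∧ Separates C h) :
    CutTree G where
  cuts := {C ∈ T.cuts | ∃ D ∈ J, C ∈ cutOrbit D}
  nonempty C hC := T.nonempty C hC.1
  compl_mem := fun C ⟨hC, D, hD, hCD⟩ => ⟨T.compl_mem C hC, D, hD, compl_mem_cutOrbit hCD⟩
  smul_mem := fun C ⟨hC, D, hD, hCD⟩ g => ⟨T.smul_mem C hC g, D, hD, smul_mem_cutOrbit hCD g⟩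
  isCut C hC := T.isCut C hC.1
  not_cross C hC D hD := T.not_cross C hC.1 D hD.1
  finite_separating x y := (T.finite_separating x y).subset fun _ hC => ⟨hC.1.1, hC.2⟩
  finite_stabilizer C hC := T.finite_stabilizer C hC.1
  exists_finset_orbit := T.exists_finset_orbit.imp fun _ hS C hC => hS C hC.1
  exists_separates h hh :=
    let ⟨C, hC, hCJ, hCh⟩ := hJ h hh
    ⟨C, ⟨hC, hCJ⟩, hCh⟩

theorem exists_isMinimal (T : CutTree G) : ∃ T' : CutTree G, T'.IsMinimal := by
  classical
  obtain ⟨S, hS⟩ := T.exists_finset_orbit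
  let P : Finset (Set G) → Prop := fun J =>
    ∀ h : G, ¬IsOfFinOrder h → ∃ C ∈ T.cuts, (∃ D ∈ J, C ∈ cutOrbit D) ∧ Separates C h
  have hPS : P S := by
    intro t ht
    obtain ⟨C, hC, hCt⟩ := T.exists_separates t ht
    obtain ⟨g, D, hD, hCD⟩ := hS C hC
    exact ⟨C, hC, ⟨D, hD, g, Or.inl hCD⟩, hCt⟩
  obtain ⟨J, hJ⟩ := exists_minimal_of_wellFoundedLT P ⟨S, hPS⟩
  refine ⟨T.restrict J hJ.prop, fun A ⟨_, D, hD, hAD⟩ => ?_⟩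
  have herase : ¬P (J.erase D) := hJ.not_prop_of_lt (Finset.erase_ssubset hD)
  simp only [P, not_forall] at herase
  obtain ⟨t, ht, hn⟩ := herase
  refine ⟨t, ht, fun B ⟨hB, D', hD', hBD'⟩ hBt => mem_cutOrbit_of_mem_of_mem hAD ?_⟩
  by_contra hBD
  have hne : D' ≠ D := fun hDD => hBD (hDD ▸ hBD')
  exact hn ⟨B, hB, ⟨D', Finset.mem_erase.2 ⟨hne, hD'⟩, hBD'⟩, hBt⟩

lemma compl_nonempty (T : CutTree G) (hC : C ∈ T.cuts) : Cᶜ.Nonempty :=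
  T.nonempty _ (T.compl_mem C hC)

lemma smul_ne_self (T : CutTree G) (hC : C ∈ T.cuts) (hh : ¬IsOfFinOrder h) : h • C ≠ C := by
  intro he
  obtain ⟨n, hn⟩ := ((tendsto_pow_cofinite hh).eventually
    (T.finite_stabilizer C hC).compl_mem_cofinite).exists
  exact hn ((MulAction.stabilizer G C).pow_mem he n)

lemma exists_smul_ssubset (T : CutTree G) (hh : ¬IsOfFinOrder h) : ∃ D ∈ T.cuts, h • D ⊂ D := by
  have hh' := not_isOfFinOrder_inv hh
  obtain ⟨C, hC, hCh⟩ := T.exists_separates h hh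
  wlog pos : EndIn h C generalizing C
  · exact this Cᶜ (T.compl_mem C hC) (((T.isCut C hC).separates_compl hh).2 hCh)
      (((T.isCut C hC).endIn_compl hh).2 pos)
  have cutC := T.isCut C hC
  have neg : ¬EndIn h⁻¹ C := fun hneg => hCh (iff_of_true pos hneg)
  have pos_smul : EndIn h (h • C) := by
    simpa only [mul_inv_cancel_right] using (cutC.endIn_conj_smul hh h).2 pos
  have neg_smul : ¬EndIn h⁻¹ (h • C) := by
    rw [← cutC.endIn_conj_smul hh' h, mul_inv_cancel, one_mul] at neg
    exact neg
  rcases GroupCut.not_cross.1 (T.not_cross _ (T.smul_mem C hC h) C hC) with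
    hsub | hsub | hsub | hsub
  · exact ⟨C, hC, hsub.ssubset_of_ne (T.smul_ne_self hC hh)⟩
  · rw [Set.subset_smul_set_iff] at hsub
    exact absurd (cutC.endIn_of_smul_subset hh' (T.nonempty C hC) hsub) neg
  · exact absurd (pos_smul.mono hsub) pos.not_compl
  · exact absurd (((cutC.endIn_compl hh').2 neg).mono (Set.compl_subset_comm.1 hsub)) neg_smul

end CutTree

end CutTree

section OrientedEdge

variable {G : Type*} [Group G] {C : Set G}

/-- The edge of a cut is inverted if some element of the group exchanges the two sides. -/
def IsInverted (C : Set G) : Prop := ∃ g : G, g • C = Cᶜ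

lemma isInverted_compl : IsInverted Cᶜ ↔ IsInverted C := by
  simp only [IsInverted, Set.smul_set_compl, compl_inj_iff]

lemma isInverted_smul (x : G) : IsInverted (x • C) ↔ IsInverted C := by
  have smul_of {D : Set G} (y : G) (hD : IsInverted D) : IsInverted (y • D) := by
    obtain ⟨g, hg⟩ := hD
    exact ⟨y * g * y⁻¹, by rw [smul_smul, inv_mul_cancel_right, mul_smul, hg, Set.smul_set_compl]⟩
  exact ⟨fun hC => by simpa only [inv_smul_smul] using smul_of x⁻¹ hC, smul_of x⟩

/-- An oriented edge of the tree of cuts in which every inverted edge has been subdivided: such an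
edge has a lower and an upper half, indexed by `false` and `true`. The other edges only carry the
index `false`. -/
@[ext] structure OrientedEdge (T : CutTree G) where
  cut : Set G
  half : Bool
  mem : cut ∈ T.cuts
  isInverted : half = true → IsInverted cut

namespace OrientedEdge

variable {T : CutTree G} {p q : OrientedEdge T}

lemma half_eq_false (hp : ¬IsInverted p.cut) : p.half = false := by
  by_contra hhalf
  exact hp (p.isInverted (by simpa only [Bool.not_eq_false] using hhalf))

instance : PartialOrder (OrientedEdge T) :=
  PartialOrder.lift (fun p => toLex (p.cut, p.half)) fun p q hpq => by
    simpa only [toLex_inj, Prod.mk.injEq, ← OrientedEdge.ext_iff] using hpq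

lemma le_iff : p ≤ q ↔ p.cut ⊂ q.cut ∨ p.cut = q.cut ∧ p.half ≤ q.half :=
  Prod.Lex.toLex_le_toLex

lemma cut_subset_of_le (hpq : p ≤ q) : p.cut ⊆ q.cut := by
  rcases le_iff.1 hpq with hsub | heq
  exacts [hsub.subset, heq.1.subset]

lemma le_or_le_of_cut_subset (hpq : p.cut ⊆ q.cut) : p ≤ q ∨ q ≤ p := by
  rcases hpq.eq_or_ssubset with heq | hsub
  · exact (le_total p.half q.half).imp (fun hle => le_iff.2 (Or.inr ⟨heq, hle⟩))
      fun hle => le_iff.2 (Or.inr ⟨heq.symm, hle⟩)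
  · exact Or.inl (le_iff.2 (Or.inl hsub))

lemma lt_iff_of_half_eq (hpq : p.half = q.half) : p < q ↔ p.cut ⊂ q.cut := by
  simp only [lt_iff_le_and_ne, le_iff, ne_eq, OrientedEdge.ext_iff, hpq, le_refl]
  exact ⟨by tauto, fun hsub => ⟨Or.inl hsub, fun heq => hsub.2 heq.1⟩⟩

lemma finite_setOf_cut_mem {S : Set (Set G)} (hS : S.Finite) :
    {p : OrientedEdge T | p.cut ∈ S}.Finite :=
  ((hS.prod Set.finite_univ).preimage (f := fun p : OrientedEdge T => (p.cut, p.half))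
    fun _ _ _ _ hpq => OrientedEdge.ext (congrArg Prod.fst hpq) (congrArg Prod.snd hpq)).subset
    fun _ hp => ⟨hp, Set.mem_univ _⟩

open Classical in
noncomputable instance : InvolutiveNeg (OrientedEdge T) where
  neg p :=
    { cut := p.cutᶜ
      half := if IsInverted p.cut then !p.half else false
      mem := T.compl_mem _ p.mem
      isInverted := fun hhalf => isInverted_compl.2 (by by_contra hp; simp [hp] at hhalf) }
  neg_neg p := by
    refine OrientedEdge.ext (_root_.compl_compl p.cut) ?_
    by_cases hp : IsInverted p.cut
    · simp only [isInverted_compl, hp, if_true, Bool.not_not]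
    · simp only [isInverted_compl, hp, if_false, half_eq_false hp]

lemma cut_neg (p : OrientedEdge T) : (-p).cut = p.cutᶜ := rfl

lemma half_neg_of_isInverted (hp : IsInverted p.cut) : (-p).half = !p.half := if_pos hp

lemma half_neg_of_not_isInverted (hp : ¬IsInverted p.cut) : (-p).half = false := if_neg hp

lemma neg_le_neg_of_le (hpq : p ≤ q) : -q ≤ -p := by
  rw [le_iff, cut_neg, cut_neg]
  refine (le_iff.1 hpq).imp compl_lt_compl_iff_lt.2 fun ⟨hcut, hhalf⟩ => ⟨by rw [hcut], ?_⟩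
  by_cases hp : IsInverted p.cut
  · rw [half_neg_of_isInverted hp, half_neg_of_isInverted (hcut ▸ hp)]
    exact compl_le_compl hhalf
  · rw [half_neg_of_not_isInverted (hcut ▸ hp)]
    exact Bool.false_le _

instance : TreePocset (OrientedEdge T) where
  neg_anti := neg_le_neg_of_le
  nested p q := by
    have swap {r s : OrientedEdge T} (hrs : r ≤ s ∨ s ≤ r) : r ≤ s ∨ -r ≤ -s :=
      hrs.imp_right neg_le_neg_of_le
    rcases not_cross.1 (T.not_cross _ p.mem _ q.mem) with hsub | hsub | hsub | hsub
    · have := le_or_le_of_cut_subset hsub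
      tauto
    · have := le_or_le_of_cut_subset hsub
      tauto
    · have := swap (le_or_le_of_cut_subset (p := p) (q := -q) hsub)
      rw [neg_neg] at this
      tauto
    · have := swap (le_or_le_of_cut_subset (p := -p) (q := q) hsub)
      rw [neg_neg] at this
      tauto
  not_le_neg p hp := by
    obtain ⟨x, hx⟩ := T.nonempty _ p.mem
    exact cut_subset_of_le hp hx hx
  finite_Icc p q := by
    obtain ⟨x, hx⟩ := T.nonempty _ p.mem
    obtain ⟨y, hy⟩ := T.compl_nonempty q.mem
    refine (finite_setOf_cut_mem (T.finite_separating x y)).subset fun r ⟨hpr, hrq⟩ => ?_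
    exact ⟨r.mem, cut_subset_of_le hpr hx, fun hyr => hy (cut_subset_of_le hrq hyr)⟩

instance : MulAction G (OrientedEdge T) where
  smul g p := ⟨g • p.cut, p.half, T.smul_mem _ p.mem g, fun hp =>
    (isInverted_smul g).2 (p.isInverted hp)⟩
  one_smul p := OrientedEdge.ext (one_smul G p.cut) rfl
  mul_smul a b p := OrientedEdge.ext (mul_smul a b p.cut) rfl

lemma cut_smul (g : G) (p : OrientedEdge T) : (g • p).cut = g • p.cut := rfl

lemma half_smul (g : G) (p : OrientedEdge T) : (g • p).half = p.half := rfl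

instance : TreeAction G (OrientedEdge T) where
  smul_mono g p q hpq := by
    rw [le_iff, cut_smul, cut_smul]
    exact (le_iff.1 hpq).imp
      (fun hsub => ⟨Set.smul_set_mono hsub.1, mt Set.smul_set_subset_smul_set_iff.1 hsub.2⟩)
      fun ⟨hcut, hhalf⟩ => ⟨by rw [hcut], hhalf⟩
  smul_neg g p := by
    refine OrientedEdge.ext Set.smul_set_compl ?_
    have hiff := isInverted_smul (C := p.cut) g
    by_cases hp : IsInverted p.cut
    · rw [half_smul, half_neg_of_isInverted hp, half_neg_of_isInverted (hiff.2 hp), half_smul]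
    · rw [half_smul, half_neg_of_not_isInverted hp, half_neg_of_not_isInverted (mt hiff.1 hp)]
  smul_ne_neg g p hp := by
    have hinv : IsInverted p.cut := ⟨g, congrArg OrientedEdge.cut hp⟩
    have hhalf := congrArg OrientedEdge.half hp
    rw [half_smul, half_neg_of_isInverted hinv] at hhalf
    exact Bool.self_ne_not _ hhalf

lemma mem_edgeOrbit_of_cut_eq_smul {g : G} (hq : q.cut = g • p.cut) :
    q ∈ TreePocset.edgeOrbit G p := by
  by_cases hhalf : p.half = q.half
  · exact Or.inl ⟨g, OrientedEdge.ext hq.symm hhalf⟩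
  have hp : IsInverted p.cut := by
    by_contra hp
    have hq' : ¬IsInverted q.cut := by rwa [hq, isInverted_smul]
    exact hhalf (by rw [half_eq_false hp, half_eq_false hq'])
  obtain ⟨k, hk⟩ := hp
  refine Or.inr ⟨g * k⁻¹, OrientedEdge.ext ?_ ?_⟩
  · rw [cut_smul, cut_neg, mul_smul, ← hk, inv_smul_smul, hq]
  · rw [half_smul, half_neg_of_isInverted ⟨k, hk⟩]
    exact Bool.eq_not.2 (Ne.symm hhalf) |>.symm

lemma mem_edgeOrbit_of_cut_mem_cutOrbit (hq : q.cut ∈ cutOrbit p.cut) :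
    q ∈ TreePocset.edgeOrbit G p := by
  obtain ⟨g, hg | hg⟩ := hq
  · exact mem_edgeOrbit_of_cut_eq_smul hg
  · rw [← neg_neg q]
    exact TreePocset.neg_mem_edgeOrbit (mem_edgeOrbit_of_cut_eq_smul (g := g)
      (by rw [cut_neg, hg, Set.smul_set_compl, _root_.compl_compl]))

lemma axis_nonempty {h : G} (hh : ¬IsOfFinOrder h) :
    (TreePocset.axis h : Set (OrientedEdge T)).Nonempty := by
  obtain ⟨D, hD, hsub⟩ := T.exists_smul_ssubset hh
  refine ⟨⟨D, false, hD, nofun⟩, 1, le_rfl, Or.inl ?_⟩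
  rw [pow_one, lt_iff_of_half_eq (half_smul _ _)]
  exact hsub

lemma separates_of_mem_axis {h : G} (hh : ¬IsOfFinOrder h) (hp : p ∈ TreePocset.axis h) :
    Separates p.cut h := by
  obtain ⟨n, hn, hlt⟩ := hp
  have hcut := T.isCut _ p.mem
  have hne := T.nonempty _ p.mem
  have hne' := T.compl_nonempty p.mem
  have hh' := not_isOfFinOrder_pow hn hh
  rw [lt_iff_of_half_eq (half_smul _ _), lt_iff_of_half_eq (half_smul _ _).symm] at hlt
  rw [← hcut.separates_pow hh hn]
  rcases hlt with hsub | hsub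
  · exact hcut.separates_of_smul_subset hh' hne hne' hsub.subset
  · rw [← separates_inv]
    exact hcut.separates_of_smul_subset (not_isOfFinOrder_inv hh') hne hne'
      (Set.subset_smul_set_iff.1 hsub.subset)

end OrientedEdge

open OrientedEdge in
theorem CutTree.IsMinimal.isProperMinimal {T : CutTree G} (hT : T.IsMinimal) :
    TreePocset.IsProperMinimal G (OrientedEdge T) where
  finite_stabilizer p := (T.finite_stabilizer _ p.mem).subset
    fun _ hg => congrArg OrientedEdge.cut (MulAction.mem_stabilizer_iff.1 hg)
  exists_finset_orbit := by
    obtain ⟨S, hS⟩ := T.exists_finset_orbit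
    refine ⟨(finite_setOf_cut_mem S.finite_toSet).toFinset, fun p => ?_⟩
    obtain ⟨g, D, hD, hp⟩ := hS _ p.mem
    refine ⟨g, g⁻¹ • p, ?_, (smul_inv_smul g p).symm⟩
    rw [Set.Finite.mem_toFinset, Set.mem_ofPred_eq, cut_smul, hp, inv_smul_smul]
    exact hD
  axis_nonempty hh := OrientedEdge.axis_nonempty hh
  exists_axis_subset p := by
    obtain ⟨t, ht, hsep⟩ := hT _ p.mem
    exact ⟨t, OrientedEdge.axis_nonempty ht, fun q hq =>
      mem_edgeOrbit_of_cut_mem_cutOrbit (hsep _ q.mem (separates_of_mem_axis ht hq))⟩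

end OrientedEdge

/-! ### Groups with separating cuts -/

section SeparatingCuts

variable {F G : Type*} [Group F] [Group G]

/-- Finitely many orbits of cuts separate the two ends of every element of infinite order. -/
def HasSeparatingCuts (G : Type*) [Group G] : Prop :=
  ∃ 𝒟 : Set (Set G), 𝒟.Finite ∧ (∀ D ∈ 𝒟, IsCut D) ∧
    ∀ h : G, ¬IsOfFinOrder h → ∃ u : G, ∃ D ∈ 𝒟, Separates (u • D) h

lemma HasSeparatingCuts.exists_hasBoundedCuts (hG : HasSeparatingCuts G) {ι : Type*} {s : ι → G}
    (hs : Subgroup.closure (Set.range s) = ⊤) : ∃ M, HasBoundedCuts s M := by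
  obtain ⟨𝒟, hfin, hcut, hsep⟩ := hG
  obtain ⟨M, hM⟩ := (hfin.image (weight s)).bddAbove
  refine ⟨M, hs, fun h hh => ?_⟩
  obtain ⟨u, D, hD, huD⟩ := hsep h hh
  exact ⟨u • D, (hcut D hD).smul u, huD, (weight_smul s u D).trans_le (hM ⟨D, hD, rfl⟩)⟩

lemma endIn_map (e : F ≃* G) {C : Set F} {h : F} : EndIn (e h) (e.symm ⁻¹' C) ↔ EndIn h C := by
  simp only [EndIn, ← map_pow, Set.mem_preimage, MulEquiv.symm_apply_apply]

lemma HasSeparatingCuts.of_mulEquiv (hF : HasSeparatingCuts F) (e : F ≃* G) :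
    HasSeparatingCuts G := by
  obtain ⟨𝒟, hfin, hcut, hsep⟩ := hF
  refine ⟨(e.symm ⁻¹' ·) '' 𝒟, hfin.image _, Set.forall_mem_image.2 fun D hD y => ?_,
    fun h hh => ?_⟩
  · refine (e.symm.injective.tendsto_cofinite.eventually (hcut D hD (e.symm y))).mono fun g hg => ?_
    simpa only [Set.mem_preimage, map_mul] using hg
  · have hh' : ¬IsOfFinOrder (e.symm h) :=
      mt (e.symm.injective.isOfFinOrder_iff (f := e.symm.toMonoidHom)).1 hh
    obtain ⟨u, D, hD, huD⟩ := hsep (e.symm h) hh'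
    refine ⟨e u, _, ⟨D, hD, rfl⟩, ?_⟩
    have himage : e u • (e.symm ⁻¹' D) = e.symm ⁻¹' (u • D) := by
      ext g
      simp only [Set.mem_smul_set_iff_inv_smul_mem, Set.mem_preimage, smul_eq_mul, map_mul,
        map_inv, MulEquiv.symm_apply_apply]
    rw [himage, ← e.apply_symm_apply h, Separates, ← map_inv, endIn_map, endIn_map]
    exact huD

section FiniteIndex

variable {H : Subgroup G} {T : Set G}

/-- The set of elements of `G` whose component in `H`, with respect to a transversal `T` of the
cosets `H t`, lies in `C`. -/
noncomputable def transversalCut (hT : Subgroup.IsComplement (H : Set G) T) (C : Set H) : Set G :=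
  {g | (hT.equiv g).1 ∈ C}

variable (hT : Subgroup.IsComplement (H : Set G) T) {C : Set H} {h : H}

lemma equiv_mul_fst (h : H) (g : G) : (hT.equiv (h * g)).1 = h * (hT.equiv g).1 :=
  congrArg Prod.fst (hT.equiv_mul_left h g)

lemma isCut_transversalCut [H.FiniteIndex] (hC : IsCut C) : IsCut (transversalCut hT C) := by
  intro y
  let shift (t : T) : H := (hT.equiv (t * y)).1
  have equiv_mul (g : G) : (hT.equiv (g * y)).1 = (hT.equiv g).1 * shift (hT.equiv g).2 := by
    rw [← equiv_mul_fst, ← mul_assoc, hT.equiv_fst_mul_equiv_snd]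
  have hfin : ∀ᶠ p : H × T in Filter.cofinite, (p.1 ∈ C ↔ p.1 * shift p.2 ∈ C) := by
    have := hT.finite_right.to_subtype
    refine (Set.finite_iUnion fun t : T => (hC (shift t)).image (·, t)).subset fun p hp => ?_
    exact Set.mem_iUnion.2 ⟨p.2, p.1, hp, rfl⟩
  refine (hT.equiv.injective.tendsto_cofinite.eventually hfin).mono fun g hg => ?_
  simpa only [transversalCut, Set.mem_ofPred_eq, equiv_mul] using hg

lemma endIn_transversalCut (hC : IsCut C) (hh : ¬IsOfFinOrder h) :
    EndIn (h : G) (transversalCut hT C) ↔ EndIn h C := by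
  rw [← hC.eventually_pow_mul_mem hh (hT.equiv 1).1]
  refine Filter.eventually_congr (Filter.Eventually.of_forall fun n => ?_)
  rw [transversalCut, Set.mem_ofPred_eq, ← equiv_mul_fst, mul_one, Subgroup.coe_pow]

lemma smul_transversalCut (u : H) :
    (u : G) • transversalCut hT C = transversalCut hT (u • C) := by
  ext g
  rw [Set.mem_smul_set_iff_inv_smul_mem, transversalCut, transversalCut, Set.mem_ofPred_eq,
    Set.mem_ofPred_eq, Set.mem_smul_set_iff_inv_smul_mem, smul_eq_mul, smul_eq_mul,
    ← equiv_mul_fst, Subgroup.coe_inv]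

end FiniteIndex

lemma HasSeparatingCuts.of_finiteIndex {H : Subgroup G} [H.FiniteIndex]
    (hH : HasSeparatingCuts H) : HasSeparatingCuts G := by
  obtain ⟨T, hT, -⟩ := H.exists_isComplement_right 1
  obtain ⟨𝒟, hfin, hcut, hsep⟩ := hH
  refine ⟨transversalCut hT '' 𝒟, hfin.image _,
    Set.forall_mem_image.2 fun D hD => isCut_transversalCut hT (hcut D hD), fun g hg => ?_⟩
  obtain ⟨k, hk, -, hgk⟩ :=
    Subgroup.exists_pow_mem_of_index_ne_zero (Subgroup.FiniteIndex.index_ne_zero (H := H)) g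
  obtain ⟨h, hhk⟩ : (∃ h : H, (h : G) = g ^ k) := ⟨⟨_, hgk⟩, rfl⟩
  have hh : ¬IsOfFinOrder h := by
    rw [← H.subtype_injective.isOfFinOrder_iff, H.subtype_apply, hhk]
    exact not_isOfFinOrder_pow hk hg
  obtain ⟨u, D, hD, huD⟩ := hsep h hh
  have hcut' := (hcut D hD).smul u
  refine ⟨u, _, ⟨D, hD, rfl⟩, ?_⟩
  rw [smul_transversalCut, ← (isCut_transversalCut hT hcut').separates_pow hg hk, Separates,
    ← hhk, endIn_transversalCut hT hcut' hh, ← Subgroup.coe_inv,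
    endIn_transversalCut hT hcut' (not_isOfFinOrder_inv hh)]
  exact huD

end SeparatingCuts

section FreeGroup

open FreeGroup

variable {X : Type*}

lemma exists_isCyclicallyReduced_conj {f : FreeGroup X} (hf : f ≠ 1) :
    ∃ (u : FreeGroup X) (L : List (X × Bool)), IsCyclicallyReduced L ∧ L ≠ [] ∧
      f = u * mk L * u⁻¹ := by
  classical
  have hconj : f = mk (reduceCyclically.conjugator f.toWord) * mk (reduceCyclically f.toWord) *
      (mk (reduceCyclically.conjugator f.toWord))⁻¹ := by
    rw [inv_mk, mul_mk, mul_mk, reduceCyclically.conj_conjugator_reduceCyclically, mk_toWord]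
  refine ⟨_, _, reduceCyclically.isCyclicallyReduced isReduced_toWord, fun hnil => hf ?_, hconj⟩
  rw [hconj, hnil, ← one_eq_mk, mul_one, mul_inv_cancel]

section Cone

variable [DecidableEq X]

/-- The cone of reduced words beginning with the inverse of the letter `l`. It is described by the
last letter of the inverse because `FreeGroup.reduce` recurses on the first letter of a word. -/
def cone (l : X × Bool) : Set (FreeGroup X) := {w | (w⁻¹).toWord.getLast? = some l}

lemma getLast?_reduce_cons (x : X × Bool) {L : List (X × Bool)} (hL : IsReduced L)
    (hlen : 1 < L.length) : (reduce (x :: L)).getLast? = L.getLast? := by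
  rw [reduce.cons, isReduced_iff_reduce_eq.1 hL]
  match L, hlen with
  | a :: b :: M, _ =>
    dsimp only
    split_ifs <;> simp only [List.getLast?_cons_cons]

lemma isCut_cone [Finite X] (l : X × Bool) : IsCut (cone l) := by
  refine isCut_of_closure_eq_top (closure_range_of X) (Set.forall_mem_range.2 fun x => ?_)
  have hinj : Function.Injective fun w : FreeGroup X => (w⁻¹).toWord :=
    toWord_injective.comp inv_injective
  have hlong : ∀ᶠ L : List (X × Bool) in Filter.cofinite, 1 < L.length := by
    simpa only [Filter.eventually_cofinite, not_lt] using List.finite_length_le (X × Bool) 1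
  filter_upwards [hinj.tendsto_cofinite.eventually hlong] with w hw
  have hword : ((w * of x)⁻¹).toWord = reduce ((x, false) :: (w⁻¹).toWord) := by
    rw [mul_inv_rev, toWord_mul, toWord_inv (of x), toWord_of]
    rfl
  rw [cone, Set.mem_ofPred_eq, Set.mem_ofPred_eq, hword,
    getLast?_reduce_cons _ isReduced_toWord hw]

lemma toWord_mk_pow {L : List (X × Bool)} (hL : IsCyclicallyReduced L) (n : ℕ) :
    (mk L ^ n).toWord = (List.replicate n L).flatten := by
  rw [pow_mk, toWord_mk, isReduced_iff_reduce_eq.1 (hL.flatten_replicate n).isReduced]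

/-- The words `L⁻ⁿ` all begin with the inverse of the last letter of `L`, while `Lⁿ` begins with
the first letter of `L`, which is a different letter as `L` is cyclically reduced. -/
lemma separates_cone_getLast {L : List (X × Bool)} (hL : IsCyclicallyReduced L) (hne : L ≠ []) :
    Separates (cone (L.getLast hne)) (mk L) := by
  have hneg : EndIn (mk L)⁻¹ (cone (L.getLast hne)) := by
    filter_upwards [Filter.eventually_ne_atTop 0] with n hn
    rw [cone, Set.mem_ofPred_eq, inv_pow, inv_inv, toWord_mk_pow hL,
      List.getLast?_flatten_replicate hn, List.getLast?_eq_some_getLast hne]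
  have hpos : ¬EndIn (mk L) (cone (L.getLast hne)) := by
    intro hend
    obtain ⟨n, hmem, hn⟩ := (hend.and (Filter.eventually_ne_atTop 0)).exists
    rw [cone, Set.mem_ofPred_eq, toWord_inv, toWord_mk_pow hL, invRev, List.getLast?_reverse,
      List.head?_map, List.head?_flatten_replicate hn, List.head?_eq_some_head hne,
      Option.map_some, Option.some.injEq] at hmem
    have hbool := hL.2 (L.getLast hne) (List.getLast?_eq_some_getLast hne) (L.head hne)
      (List.head?_eq_some_head hne) (congrArg Prod.fst hmem).symm
    exact Bool.not_ne_self _ ((congrArg Prod.snd hmem).trans hbool)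
  exact fun hiff => hpos (hiff.2 hneg)

end Cone

lemma hasSeparatingCuts_freeGroup [Finite X] : HasSeparatingCuts (FreeGroup X) := by
  classical
  refine ⟨Set.range cone, Set.finite_range _, Set.forall_mem_range.2 isCut_cone, fun f hf => ?_⟩
  have hf1 : f ≠ 1 := fun hf1 => hf (hf1 ▸ IsOfFinOrder.one)
  obtain ⟨u, L, hL, hne, rfl⟩ := exists_isCyclicallyReduced_conj hf1
  refine ⟨u, _, ⟨L.getLast hne, rfl⟩, ((isCut_cone _).separates_conj ?_ u).2 ?_⟩
  · exact mt (isOfFinOrder_conj u).2 hf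
  · exact separates_cone_getLast hL hne

end FreeGroup

end GroupCut

lemma finite_of_fg_freeGroup (X : Type*) [Group.FG (FreeGroup X)] : Finite X := by
  have hab : Group.FG (Abelianization (FreeGroup X)) :=
    Group.fg_of_surjective (QuotientGroup.mk'_surjective (commutator (FreeGroup X)))
  have hfree : AddGroup.FG (FreeAbelianGroup X) := inferInstanceAs (AddGroup.FG (Additive _))
  have hfin : Module.Finite ℤ (X →₀ ℤ) := Module.Finite.iff_addGroup_fg.2 <|
    AddGroup.fg_of_surjective (f := (FreeAbelianGroup.equivFinsupp X).toAddMonoidHom)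
      (FreeAbelianGroup.equivFinsupp X).surjective
  exact (Module.finite_finsupp_self_iff.1 hfin).resolve_left (not_subsingleton ℤ)

/-! ### Finite presentations -/

section FinitePresentation

variable {G P : Type*} [Group G] [Group P]

lemma ker_le_of_map_mul {f : P →* G} {S : Set P} (hS : Subgroup.closure S = ⊤) {N : Subgroup P}
    [N.Normal] {w : G → P} (hw : ∀ g, ∀ x ∈ S, (w (g * f x) : P ⧸ N) = w g * x) : f.ker ≤ N := by
  have hmul (p : P) : ∀ g, (w (g * f p) : P ⧸ N) = w g * p := by
    induction hS ▸ Subgroup.mem_top p using Subgroup.closure_induction with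
    | mem x hx => exact fun g => hw g x hx
    | one => simp only [map_one, mul_one, QuotientGroup.mk_one, implies_true]
    | mul x y _ _ hx hy =>
      exact fun g => by rw [map_mul, ← mul_assoc, hy, hx, QuotientGroup.mk_mul, mul_assoc]
    | inv x _ hx =>
      intro g
      rw [QuotientGroup.mk_inv, eq_mul_inv_iff_mul_eq, ← hx, map_inv, inv_mul_cancel_right]
  intro p hp
  rw [← QuotientGroup.eq_one_iff, ← mul_eq_left (a := (w 1 : P ⧸ N)), ← hmul,
    MonoidHom.mem_ker.1 hp, mul_one]

lemma fg_of_isFinitelyPresented [Group.IsFinitelyPresented G] : Group.FG G :=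
  let ⟨_, _, hφ, _⟩ := Group.IsFinitelyPresented.out (G := G)
  Group.fg_of_surjective hφ

theorem isFinitelyPresented_of_finiteIndex (H : Subgroup G) [H.FiniteIndex]
    [Group.IsFinitelyPresented H] : Group.IsFinitelyPresented G := by
  obtain ⟨T, hT, -⟩ := H.exists_isComplement_right 1
  have : Finite T := hT.finite_right.to_subtype
  let f : Monoid.Coprod H (FreeGroup T) →* G :=
    Monoid.Coprod.lift H.subtype (FreeGroup.lift (↑))
  let w (g : G) : Monoid.Coprod H (FreeGroup T) :=
    .inl (hT.equiv g).1 * .inr (.of (hT.equiv g).2)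
  have hfw (g : G) : f (w g) = g := by
    simp only [f, w, map_mul, Monoid.Coprod.lift_apply_inl, Monoid.Coprod.lift_apply_inr,
      FreeGroup.lift_apply_of, H.subtype_apply, hT.equiv_fst_mul_equiv_snd]
  have hw (h : H) (g : G) : w (h * g) = .inl h * w g := by
    simp only [w, hT.equiv_mul_left, map_mul, mul_assoc]
  have : Group.FG (Monoid.Coprod H (FreeGroup T)) := fg_of_isFinitelyPresented
  obtain ⟨S, hS, hSfin⟩ := Group.fg_iff.1 this
  let R := Set.image2 (fun t x => (w (t * f x))⁻¹ * (w t * x)) T S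
  have hR : R.Finite := (T.toFinite).image2 _ hSfin
  refine .of_surjective f (fun g => ⟨w g, hfw g⟩) ⟨R, hR, le_antisymm ?_ ?_⟩
  · refine Subgroup.normalClosure_le_normal (Set.image2_subset_iff.2 fun t _ x _ => ?_)
    simp only [SetLike.mem_coe, MonoidHom.mem_ker, map_mul, map_inv, hfw, inv_mul_cancel]
  · refine ker_le_of_map_mul hS (w := w) fun g x hx => ?_
    have hrel (t : T) : (w (t * f x) : _ ⧸ Subgroup.normalClosure R) = w t * x :=
      QuotientGroup.eq.2 (Subgroup.subset_normalClosure ⟨t, t.2, x, hx, rfl⟩)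
    rw [← hT.equiv_fst_mul_equiv_snd g, mul_assoc, hw, hw (hT.equiv g).1,
      QuotientGroup.mk_mul, hrel]
    exact (mul_assoc _ _ _).symm

end FinitePresentation

/-! ### Virtually free groups and existential formulas -/

section VirtuallyFree

variable {G : Type*} [Group G]

lemma VirtuallyFree.virtuallyTorsionFree (hG : VirtuallyFree G) : VirtuallyTorsionFree G := by
  obtain ⟨H, hH, ⟨hfree⟩⟩ := hG
  have : IsMulTorsionFree H := (IsFreeGroup.mulEquiv H).symm.injective.isMulTorsionFree
    (IsFreeGroup.mulEquiv H).symm.toMonoidHom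
  refine ⟨H, hH, fun h hh hord => ?_⟩
  have hord' : IsOfFinOrder (⟨h, hh⟩ : H) := H.subtype_injective.isOfFinOrder_iff.1 hord
  exact congrArg Subtype.val ((isOfFinOrder_iff_eq_one _).1 hord')

lemma VirtuallyFree.exists_freeGroup_mulEquiv [Group.FG G] (hG : VirtuallyFree G) :
    ∃ (H : Subgroup G) (n : ℕ), H.FiniteIndex ∧ Nonempty (FreeGroup (Fin n) ≃* H) := by
  obtain ⟨H, hH, ⟨hfree⟩⟩ := hG
  let e := IsFreeGroup.mulEquiv H
  have : Group.FG H := Subgroup.fg_of_index_ne_zero H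
  have : Group.FG (FreeGroup (IsFreeGroup.Generators H)) :=
    Group.fg_of_surjective (f := e.symm.toMonoidHom) e.symm.surjective
  have : Finite (IsFreeGroup.Generators H) := finite_of_fg_freeGroup _
  obtain ⟨n, ⟨enum⟩⟩ := Finite.exists_equiv_fin (IsFreeGroup.Generators H)
  exact ⟨H, n, hH, ⟨(FreeGroup.freeGroupCongr enum.symm).trans e⟩⟩

lemma VirtuallyFree.hasSeparatingCuts [Group.FG G] (hG : VirtuallyFree G) :
    GroupCut.HasSeparatingCuts G := by
  obtain ⟨H, n, _, ⟨e⟩⟩ := hG.exists_freeGroup_mulEquiv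
  exact (GroupCut.hasSeparatingCuts_freeGroup.of_mulEquiv e).of_finiteIndex

lemma VirtuallyFree.isFinitelyPresented [Group.FG G] (hG : VirtuallyFree G) :
    Group.IsFinitelyPresented G := by
  obtain ⟨H, n, _, ⟨e⟩⟩ := hG.exists_freeGroup_mulEquiv
  have : Group.IsFinitelyPresented H := .equiv e
  exact isFinitelyPresented_of_finiteIndex H

theorem VirtuallyFree.stronglyCoHopfian [Group.FG G] (hG : VirtuallyFree G) (hco : CoHopfian G)
    (hout : OutFinite G) : StronglyCoHopfian G := by
  obtain ⟨S, hS, hSfin⟩ := Group.fg_iff.1 ‹Group.FG G›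
  have hrange : Subgroup.closure (Set.range ((↑) : S → G)) = ⊤ := by
    rw [Subtype.range_coe]
    exact hS
  have : Finite S := hSfin
  obtain ⟨M, hM⟩ := hG.hasSeparatingCuts.exists_hasBoundedCuts hrange
  obtain ⟨T, hT⟩ := hM.cutTree.exists_isMinimal
  exact hT.isProperMinimal.stronglyCoHopfian hG.virtuallyTorsionFree ‹Group.FG G› hco hout

end VirtuallyFree

section ExistentialFormulas

open FirstOrder.Language

variable {α : Type*} {G : Type*} [Group G] {k : ℕ}

variable (G) in
lemma exists_term_realize_eq_lift (w : FreeGroup α) :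
    ∃ t : groupLang.Term α, ∀ x : α → G, t.realize x = FreeGroup.lift x w := by
  induction w using FreeGroup.induction_on with
  | C1 => exact ⟨.func (l := 0) GroupFunc.one ![], fun x => (map_one _).symm⟩
  | of a => exact ⟨.var a, fun x => FreeGroup.lift_apply_of.symm⟩
  | inv_of a _ =>
    exact ⟨.func (l := 1) GroupFunc.inv ![.var a], fun x => by
      rw [map_inv, FreeGroup.lift_apply_of]; rfl⟩
  | mul a b ha hb =>
    obtain ⟨s, hs⟩ := ha
    obtain ⟨t, ht⟩ := hb
    exact ⟨.func (l := 2) GroupFunc.mul ![s, t], fun x => by rw [map_mul, ← hs, ← ht]; rfl⟩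

variable (G) in
lemma exists_isQF_realize_iff_lift_eq_one (w : FreeGroup (α ⊕ Fin k)) :
    ∃ φ : groupLang.BoundedFormula α k, φ.IsQF ∧ ∀ (x : α → G) (y : Fin k → G),
      φ.Realize x y ↔ FreeGroup.lift (Sum.elim x y) w = 1 := by
  obtain ⟨t, ht⟩ := exists_term_realize_eq_lift G w
  obtain ⟨e, he⟩ := exists_term_realize_eq_lift G (1 : FreeGroup (α ⊕ Fin k))
  refine ⟨t.bdEqual e, (BoundedFormula.IsAtomic.equal t e).isQF, fun x y => ?_⟩
  rw [BoundedFormula.realize_bdEqual, ht, he, map_one]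

lemma isQF_iInf {β : Type*} [Finite β] {φ : β → groupLang.BoundedFormula α k}
    (hφ : ∀ b, (φ b).IsQF) : (BoundedFormula.iInf φ).IsQF := by
  rw [BoundedFormula.iInf]
  generalize Finset.toList _ = l
  induction l with
  | nil => exact BoundedFormula.IsQF.top
  | cons b l ih => exact (hφ b).inf ih

lemma isExistentialQF_exs {φ : groupLang.BoundedFormula α k} (hφ : IsExistentialQF φ) :
    IsExistentialQF φ.exs := by
  induction k with
  | zero => exact hφ
  | succ k ih => exact ih hφ.ex

variable (G) in
lemma exists_isExistentialQF_realize_iff {E I : Set (FreeGroup (α ⊕ Fin k))} (hE : E.Finite)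
    (hI : I.Finite) : ∃ φ : groupLang.Formula α, IsExistentialQF φ ∧ ∀ x : α → G,
      φ.Realize x ↔ ∃ y : Fin k → G, (∀ w ∈ E, FreeGroup.lift (Sum.elim x y) w = 1) ∧
        ∀ w ∈ I, FreeGroup.lift (Sum.elim x y) w ≠ 1 := by
  have : Finite E := hE
  have : Finite I := hI
  choose φ hφ hreal using exists_isQF_realize_iff_lift_eq_one G (α := α) (k := k)
  let ψ := BoundedFormula.iInf (fun w : E => φ w) ⊓ BoundedFormula.iInf fun w : I => (φ w).not
  have hψ : ψ.IsQF :=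
    (isQF_iInf fun w : E => hφ w).inf (isQF_iInf fun w : I => (hφ w).not)
  refine ⟨ψ.exs, isExistentialQF_exs (.of_isQF hψ), fun x => ?_⟩
  simp only [ψ, BoundedFormula.realize_exs, BoundedFormula.realize_inf,
    BoundedFormula.realize_iInf, BoundedFormula.realize_not, hreal, Subtype.forall, ne_eq]

/-- In a finite presentation of `G`, a homomorphism from `G` is a solution of the relators. -/
lemma exists_isExistentialQF_realize_iff_exists_hom (K : Type*) [Group K]
    [Group.IsFinitelyPresented G] [Finite α] (u : α → G) (F : Finset G) :
    ∃ φ : groupLang.Formula α, IsExistentialQF φ ∧ ∀ v : α → K,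
      φ.Realize v ↔ ∃ σ : G →* K, (∀ i, σ (u i) = v i) ∧ ∀ f ∈ F, σ f ≠ 1 := by
  obtain ⟨k, π, hπ, R, hR, hker⟩ := Group.IsFinitelyPresented.out (G := G)
  choose word hword using hπ
  let incl : FreeGroup (Fin k) →* FreeGroup (α ⊕ Fin k) := FreeGroup.map Sum.inr
  have lift_incl (x : α → K) (y : Fin k → K) (w) :
      FreeGroup.lift (Sum.elim x y) (incl w) = FreeGroup.lift y w := by
    have hcomp : (FreeGroup.lift (Sum.elim x y)).comp incl = FreeGroup.lift y :=
      FreeGroup.ext_hom _ _ fun j => by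
        simp only [incl, MonoidHom.comp_apply, FreeGroup.map.of, FreeGroup.lift_apply_of,
          Sum.elim_inr]
    exact DFunLike.congr_fun hcomp w
  let value (i : α) : FreeGroup (α ⊕ Fin k) := incl (word (u i)) * (.of (.inl i))⁻¹
  obtain ⟨φ, hφ, hreal⟩ := exists_isExistentialQF_realize_iff K
    ((hR.image incl).union (Set.finite_range value)) (F.finite_toSet.image (incl ∘ word))
  simp only [value, Set.mem_union, or_imp, forall_and, Set.forall_mem_image, Set.forall_mem_range,
    Function.comp_apply, lift_incl, map_mul, map_inv, FreeGroup.lift_apply_of, Sum.elim_inl,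
    mul_inv_eq_one, SetLike.mem_coe] at hreal
  refine ⟨φ, hφ, fun v => (hreal v).trans ⟨?_, ?_⟩⟩
  · rintro ⟨y, ⟨hyR, hyv⟩, hyF⟩
    have hle : π.ker ≤ (FreeGroup.lift y).ker := hker ▸ Subgroup.normalClosure_le_normal hyR
    let σ := π.liftOfRightInverse word hword ⟨FreeGroup.lift y, hle⟩
    have hσ (g : G) : σ g = FreeGroup.lift y (word g) := by
      conv_lhs => rw [← hword g]
      exact π.liftOfRightInverse_comp_apply word hword ⟨_, hle⟩ (word g)
    simp only [← hσ] at hyv hyF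
    exact ⟨σ, hyv, hyF⟩
  · rintro ⟨σ, hσv, hσF⟩
    have hlift (w) : FreeGroup.lift (fun j => σ (π (.of j))) w = σ (π w) :=
      DFunLike.congr_fun (FreeGroup.lift.apply_symm_apply (σ.comp π)) w
    refine ⟨fun j => σ (π (.of j)), ?_⟩
    simp only [hlift, hword]
    refine ⟨⟨fun r hr => ?_, hσv⟩, hσF⟩
    have hπr : r ∈ π.ker := hker ▸ Subgroup.subset_normalClosure hr
    rw [MonoidHom.mem_ker.1 hπr, map_one]

end ExistentialFormulas

theorem StronglyCoHopfian.exists_mulEquiv_map_eq {G : Type*} [Group G]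
    [Group.IsFinitelyPresented G] (hG : StronglyCoHopfian G) {ι : Type*} [Finite ι] {u v : ι → G}
    (htype : ∀ φ : groupLang.Formula ι, IsExistentialQF φ → φ.Realize u → φ.Realize v) :
    ∃ σ : G ≃* G, ∀ i, σ (u i) = v i := by
  obtain ⟨F, hF1, hF⟩ := hG
  obtain ⟨φ, hφ, hreal⟩ := exists_isExistentialQF_realize_iff_exists_hom G u F
  have hu : φ.Realize u :=
    (hreal u).2 ⟨.id G, fun _ => rfl, fun f hf hf1 => hF1 (hf1 ▸ hf)⟩
  obtain ⟨σ, hσ, hσF⟩ := (hreal v).1 (htype φ hφ hu)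
  exact ⟨.ofBijective σ (hF σ hσF), hσ⟩

theorem coHopfian_outFinite_existHomogeneous_general
    (G : Type*) [Group G] (hfg : Group.FG G) (hvf : VirtuallyFree G)
    (hco : CoHopfian G) (hout : OutFinite G)
    {ι : Type*} [Finite ι] (u v : ι → G)
    (htype : ∀ φ : groupLang.Formula ι, IsExistentialQF φ → φ.Realize u → φ.Realize v) :
    ∃ σ : G ≃* G, ∀ i, σ (u i) = v i := by
  have := hvf.isFinitelyPresented
  exact (hvf.stronglyCoHopfian hco hout).exists_mulEquiv_map_eq htype

/-- A finitely generated co-Hopfian virtually free group with finite outer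
automorphism group is ∃-homogeneous. -/
theorem coHopfian_outFinite_existHomogeneous
    (G : Type*) [Group G] (hfg : Group.FG G) (hvf : VirtuallyFree G)
    (hco : CoHopfian G) (hout : OutFinite G)
    (n : ℕ) (u v : Fin n → G)
    (htype : ∀ φ : groupLang.Formula (Fin n), IsExistentialQF φ →
      (φ.Realize u ↔ φ.Realize v)) :
    ∃ σ : G ≃* G, ∀ i, σ (u i) = v i :=
  coHopfian_outFinite_existHomogeneous_general G hfg hvf hco hout u v fun φ hφ => (htype φ hφ).1
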